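/- arXiv:1505.03957 — 2 statements merged into one kernel-verified Lean document; each statement's English description precedes it below -/
import Mathlib

section
/- Let f₁,…,f_ℓ, φ₁,…,φ_k, g₁,…,g_r, ψ₁,…,ψ_s ∈ ℂ[T] with ℓ, k, r, s ≥ 1 be (jointly) multiplicatively independent polynomials satisfying Z(f₁⋯f_ℓ) ∩ Z(φ₁⋯φ_k) = ∅ and Z(g₁⋯g_r) ∩ Z(ψ₁⋯ψ_s) = ∅, and assume in addition that gcd(f₁⋯f_ℓ − 1, g₁⋯g_r − 1) = 1. Set L = ℓ+k+r+s. Then there exist a finite set S and additive submonoids 𝓛_t ⊆ ℕ^L for t ∈ S such that the complement 𝓝 = ℕ^L \ ⋃_{t∈S} 𝓛_t has positive lower asymptotic density (i.e., liminf_{N→∞} #(𝓝 ∩ {0,…,N}^L)/(N+1)^L > 0), and for every vector (n₁,…,n_ℓ, ν₁,…,ν_k, m₁,…,m_r, μ₁,…,μ_s) ∈ 𝓝 one has gcd(∏_{i=1}^{ℓ} f_i^{n_i} − ∏_{i=1}^{k} φ_i^{ν_i}, ∏_{i=1}^{r} g_i^{m_i} − ∏_{i=1}^{s} ψ_i^{μ_i})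 = 1. -/
open Polynomial

/-!
Restrict the exponents to a cone in which one `n_{i₀}` among the exponents of the first difference
and one `m_{j₀}` among those of the second dominate the others. At a common zero `t` of the two
differences the values of the polynomials satisfy two multiplicative relations, and dominance forces
the heights of the corresponding values `x = u_{i₀}(t)` and `y = w_{j₀}(t)` to be small.

Suppose that `u_{i₀}` and `w_{j₀}` are multiplicatively independent modulo constants, and choose a
nonzero integral `P` with `P(u_{i₀}, w_{j₀}) = 0` and a large prime `p`. Then `P(x ^ p, y ^ p)` is
divisible by `p`, because `P(X ^ p, Y ^ p) ≡ P(X, Y) ^ p` modulo `p`, whereas its height is small.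
By the product formula `P(x ^ p, y ^ p) = 0`, which leaves finitely many `t`. For a fixed `t` the
exponents at which both differences vanish form a submonoid, and a residue class of exponents avoids
it. Coefficients other than algebraic numbers are specialized to a number field; a resultant
transports coprimality back, since by dominance the leading coefficient of the difference survives.

If all pairs `u_i`, `w_j` are multiplicatively dependent modulo constants, two simultaneous
relations at `t` lift to a relation between the polynomials, so there are no common zeros at all.
-/

namespace PowDiff

universe uL

section Heights

open Height AdmissibleAbsValues

lemma hasFiniteMulSupport_max_one {K : Type*} [Field K] [AdmissibleAbsValues K] (x : K) :
    (fun v : nonarchAbsVal (K := K) ↦ max (v.val x) 1).HasFiniteMulSupport := by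
  rcases eq_or_ne x 0 with rfl | hx
  · simp [Function.HasFiniteMulSupport]
  · have := hasFiniteMulSupport hx
    fun_prop

lemma prod_local_le_pow_mul_prod_mulHeight₁ {K : Type*} [Field K] [AdmissibleAbsValues K]
    {ι : Type*} (s : Finset ι) (y : ι → K) {m : ℝ} (hm : 0 ≤ m) (g : AbsoluteValue K ℝ → ℝ)
    (hg : ∀ v, 0 ≤ g v)
    (hfin : (fun v : nonarchAbsVal (K := K) ↦ g v.val).HasFiniteMulSupport)
    (harch : ∀ v ∈ archAbsVal (K := K), g v ≤ m * ∏ i ∈ s, max (v (y i)) 1)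
    (hnonarch : ∀ v ∈ nonarchAbsVal (K := K), g v ≤ ∏ i ∈ s, max (v (y i)) 1) :
    ((archAbsVal (K := K)).map g).prod * ∏ᶠ v : nonarchAbsVal (K := K), g v.val
      ≤ m ^ totalWeight K * ∏ i ∈ s, mulHeight₁ (y i) := by
  have hy : ∀ i, (fun v : nonarchAbsVal (K := K) ↦ max (v.val (y i)) 1).HasFiniteMulSupport :=
    fun i ↦ hasFiniteMulSupport_max_one (y i)
  simp only [mulHeight₁_eq, totalWeight]
  rw [Finset.prod_mul_distrib, ← Multiset.prod_replicate, ← Multiset.map_const,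
    ← finprod_prod_comm _ _ fun i _ ↦ hy i, ← Multiset.prod_map_prod, ← mul_assoc,
    ← Multiset.prod_map_mul]
  simp only [Function.const_apply]
  gcongr
  · exact finprod_nonneg fun _ ↦ hg _
  · exact Multiset.prod_map_nonneg fun _ _ ↦ by positivity
  · exact Multiset.prod_map_le_prod_map₀ _ _ (fun _ _ ↦ hg _) harch
  · exact finprod_le_finprod hfin (fun _ ↦ hg _) (by fun_prop) fun v ↦ hnonarch v v.2

lemma max_one_le_of_pow_le {d : ℕ} (hd : d ≠ 0) {a c : ℝ} (hc : 1 ≤ c)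
    (h : a ^ d ≤ c * max a 1 ^ (d - 1)) : max a 1 ≤ c := by
  refine max_le ?_ hc
  rcases le_total a 1 with ha1 | ha1
  · exact ha1.trans hc
  · rw [max_eq_left ha1, ← mul_pow_sub_one hd] at h
    exact le_of_mul_le_mul_right h (by positivity)

lemma abv_coeff_mul_pow_le {K : Type*} [Field K] (v : AbsoluteValue K ℝ) (P : K[X]) (t : K)
    {i : ℕ} (hi : i ∈ Finset.range P.natDegree) :
    v (P.coeff i * t ^ i) ≤
      (∏ j ∈ Finset.range P.natDegree, max (v (P.coeff j)) 1) *
        max (v t) 1 ^ (P.natDegree - 1) := by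
  rw [map_mul, map_pow]
  gcongr
  · exact Finset.le_prod_max_one hi fun j ↦ v (P.coeff j)
  · calc v t ^ i ≤ max (v t) 1 ^ i := by gcongr; exact le_max_left _ _
      _ ≤ max (v t) 1 ^ (P.natDegree - 1) := by
        gcongr
        · exact le_max_right _ _
        · exact Nat.le_sub_one_of_lt (Finset.mem_range.1 hi)

lemma mulHeight₁_le_of_isRoot {K : Type*} [Field K] [AdmissibleAbsValues K] {P : K[X]}
    (hP : P.Monic) {t : K} (ht : P.IsRoot t) :
    mulHeight₁ t ≤ (P.natDegree : ℝ) ^ totalWeight K *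
      ∏ i ∈ Finset.range P.natDegree, mulHeight₁ (P.coeff i) := by
  have hd : P.natDegree ≠ 0 := fun h ↦ by
    rw [hP.natDegree_eq_zero.1 h, IsRoot.def, eval_one] at ht
    exact one_ne_zero ht
  have hpow : t ^ P.natDegree = -∑ i ∈ Finset.range P.natDegree, P.coeff i * t ^ i := by
    rw [IsRoot.def, eval_eq_sum_range, Finset.sum_range_succ, hP.coeff_natDegree] at ht
    linear_combination ht
  have hone : ∀ v : AbsoluteValue K ℝ, 1 ≤ ∏ j ∈ Finset.range P.natDegree, max (v (P.coeff j)) 1 :=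
    fun v ↦ Finset.one_le_prod fun _ _ ↦ le_max_right _ _
  rw [mulHeight₁_eq]
  refine prod_local_le_pow_mul_prod_mulHeight₁ _ P.coeff (Nat.cast_nonneg _) (fun v ↦ max (v t) 1)
    (fun v ↦ by positivity) (hasFiniteMulSupport_max_one t) (fun v _ ↦ ?_) (fun v hv ↦ ?_)
  · refine max_one_le_of_pow_le hd (one_le_mul_of_one_le_of_one_le
      (by exact_mod_cast Nat.one_le_iff_ne_zero.2 hd) (hone v)) ?_
    rw [← map_pow, hpow, map_neg_eq_map, mul_assoc]
    simpa using (v.sum_le _ _).trans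
      (Finset.sum_le_card_nsmul _ _ _ fun i hi ↦ abv_coeff_mul_pow_le v P t hi)
  · refine max_one_le_of_pow_le hd (hone v) ?_
    rw [← map_pow, hpow, map_neg_eq_map]
    exact ((isNonarchimedean v hv).apply_sum_le_sup (by simpa using hd)).trans
      (Finset.sup'_le _ _ fun i hi ↦ abv_coeff_mul_pow_le v P t hi)

lemma logHeight₁_le_of_isRoot {K : Type*} [Field K] [AdmissibleAbsValues K] {P : K[X]}
    (hP : P.Monic) {t : K} (ht : P.IsRoot t) :
    logHeight₁ t ≤ totalWeight K * Real.log P.natDegree +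
      ∑ i ∈ Finset.range P.natDegree, logHeight₁ (P.coeff i) := by
  rcases eq_or_ne P.natDegree 0 with hd | hd
  · rw [hP.natDegree_eq_zero.1 hd, IsRoot.def, eval_one] at ht
    exact absurd ht one_ne_zero
  have := Real.log_le_log (mulHeight₁_pos _) (mulHeight₁_le_of_isRoot hP ht)
  rwa [Real.log_mul (by positivity) (Finset.prod_ne_zero_iff.2 fun i _ ↦ mulHeight₁_ne_zero _),
    Real.log_pow, Real.log_prod fun i _ ↦ mulHeight₁_ne_zero _] at this

lemma logHeight₁_natCast_le {K : Type*} [Field K] [AdmissibleAbsValues K] (n : ℕ) :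
    logHeight₁ (n : K) ≤ totalWeight K * Real.log n := by
  simpa using logHeight₁_sum_le (Finset.range n) fun _ ↦ (1 : K)

lemma logHeight₁_algebraMap_rat_le {K : Type*} [Field K] [CharZero K] [AdmissibleAbsValues K]
    (q : ℚ) :
    logHeight₁ (algebraMap ℚ K q) ≤ totalWeight K * (Real.log q.num.natAbs + Real.log q.den) := by
  have hnum : logHeight₁ (q.num : K) = logHeight₁ (q.num.natAbs : K) := by
    rw [← Int.cast_natCast (R := K)]
    obtain h | h := Int.natAbs_eq q.num
    · rw [← h]
    · rw [← logHeight₁_neg, ← Int.cast_neg, neg_eq_iff_eq_neg.2 h]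
  calc logHeight₁ (algebraMap ℚ K q)
      = logHeight₁ ((q.num : K) * (q.den : K)⁻¹) := by
        rw [eq_ratCast, Rat.cast_def, div_eq_mul_inv]
    _ ≤ logHeight₁ (q.num.natAbs : K) + logHeight₁ (q.den : K) := by
        rw [← hnum, ← logHeight₁_inv (q.den : K)]
        exact logHeight₁_mul_le _ _
    _ ≤ _ := by
        rw [mul_add]
        exact add_le_add (logHeight₁_natCast_le _) (logHeight₁_natCast_le _)

lemma logHeight₁_add_le_add_totalWeight {K : Type*} [Field K] [AdmissibleAbsValues K] (x y : K) :
    logHeight₁ (x + y) ≤ logHeight₁ x + logHeight₁ y + totalWeight K := by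
  have : totalWeight K * Real.log 2 ≤ totalWeight K * 1 := by
    gcongr
    exact Real.log_two_lt_d9.le.trans (by norm_num)
  linarith [logHeight₁_add_le x y]

lemma exists_logHeight₁_algebraMap_le {K : Type*} [Field K] [NumberField K] (c : K) :
    ∃ A : ℕ, ∀ (L : Type uL) [Field L] [NumberField L] [Algebra K L],
      logHeight₁ (algebraMap K L c) ≤ A * totalWeight L := by
  have hc : IsIntegral ℚ c := Algebra.IsIntegral.isIntegral c
  obtain ⟨A, hA⟩ := exists_nat_ge (Real.log (minpoly ℚ c).natDegree +
    ∑ i ∈ Finset.range (minpoly ℚ c).natDegree, (Real.log ((minpoly ℚ c).coeff i).num.natAbs +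
      Real.log ((minpoly ℚ c).coeff i).den))
  refine ⟨A, fun L _ _ _ ↦ ?_⟩
  have hroot : ((minpoly ℚ c).map (algebraMap ℚ L)).IsRoot (algebraMap K L c) := by
    rw [IsRoot.def, eval_map_algebraMap, aeval_algebraMap_apply, minpoly.aeval, map_zero]
  calc logHeight₁ (algebraMap K L c)
      ≤ totalWeight L * Real.log (minpoly ℚ c).natDegree +
          ∑ i ∈ Finset.range (minpoly ℚ c).natDegree,
            logHeight₁ (algebraMap ℚ L ((minpoly ℚ c).coeff i)) := by
        simpa using logHeight₁_le_of_isRoot ((minpoly.monic hc).map (algebraMap ℚ L)) hroot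
    _ ≤ totalWeight L * A := by
        grw [← hA, mul_add, Finset.mul_sum]
        gcongr
        exact logHeight₁_algebraMap_rat_le _
    _ = A * totalWeight L := mul_comm _ _

lemma exists_logHeight₁_aeval_le {K : Type*} [Field K] [NumberField K] (u : K[X]) :
    ∃ A : ℕ, ∀ (L : Type uL) [Field L] [NumberField L] [Algebra K L] (t : L),
      logHeight₁ (aeval t u) ≤ A * (logHeight₁ t + totalWeight L) := by
  induction u using Polynomial.induction_on' with
  | add p q hp hq =>
    obtain ⟨A, hA⟩ := hp
    obtain ⟨B, hB⟩ := hq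
    refine ⟨A + B + 1, fun L _ _ _ t ↦ ?_⟩
    rw [map_add]
    push_cast
    linarith [logHeight₁_add_le_add_totalWeight (aeval t p) (aeval t q), hA L t, hB L t,
      zero_le_logHeight₁ t]
  | monomial n c =>
    obtain ⟨A, hA⟩ := exists_logHeight₁_algebraMap_le.{uL} c
    refine ⟨A + n, fun L _ _ _ t ↦ ?_⟩
    rw [aeval_monomial]
    calc _ ≤ A * totalWeight L + n * logHeight₁ t := by
          grw [logHeight₁_mul_le, logHeight₁_pow, hA L]
      _ ≤ _ := by
          push_cast
          have := zero_le_logHeight₁ t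
          have hA' : 0 ≤ A * logHeight₁ t := by positivity
          have hn : (0 : ℝ) ≤ n * totalWeight L := by positivity
          linarith

/-- The point `t` is a root of the monic multiple of `u - u(t)`. -/
lemma exists_logHeight₁_le_aeval {K : Type*} [Field K] [NumberField K] {u : K[X]}
    (hu : u.natDegree ≠ 0) :
    ∃ A : ℕ, ∀ (L : Type uL) [Field L] [NumberField L] [Algebra K L] (t : L),
      logHeight₁ t ≤ A * (logHeight₁ (aeval t u) + totalWeight L) := by
  choose A hA using exists_logHeight₁_algebraMap_le.{uL} (K := K)
  refine ⟨u.natDegree + ∑ i ∈ Finset.range u.natDegree, (A u.leadingCoeff + A (u.coeff i) + 1),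
    fun L _ _ _ t ↦ ?_⟩
  set a : L := algebraMap K L u.leadingCoeff
  set x : L := aeval t u
  set P : L[X] := C a⁻¹ * (u.map (algebraMap K L) - C x)
  have ha : a ≠ 0 := by
    simpa [a] using ne_zero_of_natDegree_gt (Nat.pos_of_ne_zero hu)
  have hdeg : (u.map (algebraMap K L) - C x).natDegree = u.natDegree := by
    rw [natDegree_sub_C, natDegree_map]
  have hPdeg : P.natDegree = u.natDegree := by
    rw [natDegree_C_mul (inv_ne_zero ha), hdeg]
  have hmonic : P.Monic := monic_C_mul_of_mul_leadingCoeff_eq_one <| by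
    rw [leadingCoeff, hdeg, coeff_sub, coeff_map, coeff_C_of_ne_zero hu, sub_zero,
      coeff_natDegree, inv_mul_cancel₀ ha]
  have hroot : P.IsRoot t := by
    simp [P, x, aeval_def, eval_map]
  have hx : 0 ≤ logHeight₁ x := zero_le_logHeight₁ x
  have hcoeff : ∀ i, logHeight₁ (P.coeff i) ≤
      (A u.leadingCoeff + A (u.coeff i) + 1) * (logHeight₁ x + totalWeight L) := fun i ↦ by
    have hCx : logHeight₁ ((C (-x)).coeff i) ≤ logHeight₁ x := by
      rw [coeff_C]
      split_ifs <;> simp [hx, logHeight₁_neg]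
    have hPi : P.coeff i = a⁻¹ * (algebraMap K L (u.coeff i) + (C (-x)).coeff i) := by
      rw [coeff_C_mul, coeff_sub, coeff_map, C_neg, coeff_neg, sub_eq_add_neg]
    have : 0 ≤ (A u.leadingCoeff + A (u.coeff i)) * logHeight₁ x := by positivity
    grw [hPi, logHeight₁_mul_le, logHeight₁_inv, logHeight₁_add_le_add_totalWeight, hCx,
      hA u.leadingCoeff L, hA (u.coeff i) L]
    linarith
  have hlog : Real.log u.natDegree ≤ u.natDegree := Real.log_le_self (Nat.cast_nonneg _)
  have hmain := logHeight₁_le_of_isRoot hmonic hroot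
  rw [hPdeg] at hmain
  grw [hmain, hlog, Finset.sum_le_sum fun i _ ↦ hcoeff i, ← Finset.sum_mul]
  push_cast
  have : 0 ≤ u.natDegree * logHeight₁ x := by positivity
  linarith

lemma exists_expand_eq_pow_add {σ : Type*} {p : ℕ} (hp : p.Prime) (P : MvPolynomial σ ℤ) :
    ∃ R : MvPolynomial σ ℤ, MvPolynomial.expand p P = P ^ p + p * R ∧
      R.totalDegree ≤ p * P.totalDegree := by
  have := Fact.mk hp
  obtain ⟨R, hR⟩ : MvPolynomial.C (p : ℤ) ∣ MvPolynomial.expand p P - P ^ p := by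
    rw [MvPolynomial.C_dvd_iff_zmod, map_sub, MvPolynomial.map_expand, map_pow,
      MvPolynomial.expand_zmod, sub_self]
  refine ⟨R, by rw [← sub_eq_iff_eq_add', hR, map_natCast], ?_⟩
  rcases eq_or_ne R 0 with rfl | hR0
  · simp
  have hpC : MvPolynomial.C (σ := σ) (p : ℤ) ≠ 0 := by simpa using hp.ne_zero
  calc R.totalDegree ≤ (MvPolynomial.expand p P - P ^ p).totalDegree :=
        MvPolynomial.totalDegree_le_of_dvd_of_isDomain (Dvd.intro_left _ hR.symm)
          (hR ▸ mul_ne_zero hpC hR0)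
    _ ≤ p * P.totalDegree := (MvPolynomial.totalDegree_sub _ _).trans <| max_le
        (by rw [MvPolynomial.totalDegree_expand, mul_comm]) (MvPolynomial.totalDegree_pow _ _)

lemma abv_monomial_le {σ F : Type*} [Fintype σ] [Field F] (v : AbsoluteValue F ℝ) (x : σ → F)
    {P : MvPolynomial σ ℤ} {m : σ →₀ ℕ} (hm : m ∈ P.support) {n : ℕ} (hn : P.totalDegree ≤ n) :
    v (∏ i, x i ^ m i) ≤ ∏ i, max (v (x i ^ n)) 1 := by
  rw [map_prod]
  refine Finset.prod_le_prod (fun _ _ ↦ v.nonneg _) fun i _ ↦ ?_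
  have hmi : m i ≤ n :=
    ((Finsupp.le_degree i m).trans (MvPolynomial.le_totalDegree hm)).trans hn
  rw [map_pow, map_pow]
  rcases le_total (v (x i)) 1 with h | h
  · exact (pow_le_one₀ (v.nonneg _) h).trans (le_max_right _ _)
  · exact (pow_le_pow_right₀ h hmi).trans (le_max_left _ _)

lemma abv_aeval_le_of_isNonarchimedean {σ F : Type*} [Fintype σ] [Field F] {v : AbsoluteValue F ℝ}
    (hv : IsNonarchimedean v) (x : σ → F) (P : MvPolynomial σ ℤ) {n : ℕ} (hn : P.totalDegree ≤ n) :
    v (MvPolynomial.aeval x P) ≤ ∏ i, max (v (x i ^ n)) 1 := by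
  rw [MvPolynomial.aeval_def, MvPolynomial.eval₂_eq']
  refine hv.apply_sum_le.trans (Real.iSup_le (fun m ↦ ?_) (by positivity))
  rw [map_mul, eq_intCast]
  exact (mul_le_of_le_one_left (v.nonneg _) hv.apply_intCast_le_one).trans
    (abv_monomial_le v x m.2 hn)

lemma apply_intCast_of_mem_archAbsVal {L : Type*} [Field L] [NumberField L]
    {v : AbsoluteValue L ℝ} (hv : v ∈ archAbsVal (K := L)) (n : ℤ) : v (n : L) = |(n : ℝ)| := by
  obtain ⟨w, rfl⟩ := NumberField.mem_multisetInfinitePlace.1 hv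
  change ‖w (n : L)‖ = _
  simp

lemma abv_aeval_le_of_mem_archAbsVal {σ L : Type*} [Fintype σ] [Field L] [NumberField L]
    {v : AbsoluteValue L ℝ} (hv : v ∈ archAbsVal (K := L)) (x : σ → L) (P : MvPolynomial σ ℤ)
    {n : ℕ} (hn : P.totalDegree ≤ n) :
    v (MvPolynomial.aeval x P) ≤
      (∑ m ∈ P.support, |((P.coeff m : ℤ) : ℝ)|) * ∏ i, max (v (x i ^ n)) 1 := by
  rw [MvPolynomial.aeval_def, MvPolynomial.eval₂_eq', Finset.sum_mul]
  refine (v.sum_le _ _).trans (Finset.sum_le_sum fun m hm ↦ ?_)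
  rw [map_mul, eq_intCast, apply_intCast_of_mem_archAbsVal hv]
  exact mul_le_mul_of_nonneg_left (abv_monomial_le v x hm hn) (abs_nonneg _)

lemma aeval_expand_eq_mul {σ F : Type*} [Field F] {p : ℕ} (hp : p ≠ 0) {P R : MvPolynomial σ ℤ}
    (hR : MvPolynomial.expand p P = P ^ p + p * R) {x : σ → F}
    (hx : MvPolynomial.aeval x P = 0) :
    MvPolynomial.aeval (x ^ p) P = p * MvPolynomial.aeval x R := by
  rw [← MvPolynomial.aeval_expand, hR, map_add, map_pow, hx, zero_pow hp, zero_add, map_mul,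
    map_natCast]

lemma sum_abs_coeff_pos {σ : Type*} {P : MvPolynomial σ ℤ} (hP : P ≠ 0) :
    0 < ∑ m ∈ P.support, |((P.coeff m : ℤ) : ℝ)| :=
  Finset.sum_pos (fun m hm ↦ by simpa using hm) (MvPolynomial.support_nonempty.2 hP)

/-- By the Frobenius congruence `P(x ^ p) ≡ P(x) ^ p` modulo `p`, the number `P(x ^ p) / p` is
bounded at every nonarchimedean place as if `P(x ^ p)` were an integral combination of monomials;
at the archimedean places the division by `p` gains `log p`. -/
lemma totalWeight_mul_log_le_of_aeval_eq_zero {σ L : Type*} [Fintype σ] [Field L] [NumberField L]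
    {P : MvPolynomial σ ℤ} {x : σ → L} (hx : MvPolynomial.aeval x P = 0) {p : ℕ} (hp : p.Prime)
    (hxp : MvPolynomial.aeval (x ^ p) P ≠ 0) :
    totalWeight L * Real.log p ≤
      totalWeight L * Real.log (∑ m ∈ P.support, |((P.coeff m : ℤ) : ℝ)|) +
        (p * P.totalDegree : ℕ) * ∑ i, logHeight₁ (x i) := by
  set S := ∑ m ∈ P.support, |((P.coeff m : ℤ) : ℝ)|
  set n := p * P.totalDegree
  have hS : 0 < S := sum_abs_coeff_pos <| by rintro rfl; simp at hxp
  have hp0 : (0 : ℝ) < p := by exact_mod_cast hp.pos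
  obtain ⟨R, hR, hRdeg⟩ := exists_expand_eq_pow_add hp P
  have hpR := aeval_expand_eq_mul hp.ne_zero hR hx
  have he : MvPolynomial.aeval x R ≠ 0 := right_ne_zero_of_mul (hpR ▸ hxp)
  have key := prod_local_le_pow_mul_prod_mulHeight₁ (K := L) Finset.univ (fun i ↦ x i ^ n)
    (m := S / p) (by positivity) (fun v ↦ v (MvPolynomial.aeval x R)) (fun v ↦ v.nonneg _)
    (hasFiniteMulSupport he) (fun v hv ↦ ?_)
    fun v hv ↦ abv_aeval_le_of_isNonarchimedean (isNonarchimedean v hv) x R hRdeg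
  · have hlog := Real.log_le_log one_pos (product_formula he ▸ key)
    rw [Real.log_one, Real.log_mul (by positivity) (by positivity), Real.log_pow,
      Real.log_div hS.ne' hp0.ne', Real.log_prod fun i _ ↦ mulHeight₁_ne_zero _] at hlog
    simp only [← logHeight₁_eq_log_mulHeight₁, logHeight₁_pow, ← Finset.mul_sum] at hlog
    linarith
  · have hvp : v (p : L) = p := by simpa using apply_intCast_of_mem_archAbsVal hv p
    have hle := abv_aeval_le_of_mem_archAbsVal hv (x ^ p) P le_rfl
    simp only [Pi.pow_apply, ← pow_mul] at hle
    rw [hpR, map_mul, hvp] at hle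
    rw [div_mul_eq_mul_div, le_div_iff₀ hp0, mul_comm]
    exact hle

lemma not_algebraicIndependent_int {K : Type*} [Field K] [NumberField K] {σ : Type*}
    [Nontrivial σ] (u : σ → K[X]) : ¬AlgebraicIndependent ℤ u := by
  intro hu
  have : Algebra.IsAlgebraic ℤ K := (IsFractionRing.comap_isAlgebraic_iff (K := ℚ)).2 inferInstance
  have htrdeg : Algebra.trdeg ℤ K[X] = 1 := by
    rw [← trdeg_add_eq ℤ K, trdeg_eq_zero, Polynomial.trdeg_of_isDomain,
      zero_add]
  have hcard := hu.lift_cardinalMk_le_trdeg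
  rw [htrdeg, Cardinal.lift_one, Cardinal.lift_le_one_iff] at hcard
  exact Cardinal.one_lt_iff_nontrivial.2 ‹_› |>.not_ge hcard

lemma mul_logHeight₁_le_sum_of_prod_zpow_eq_one {ι K : Type*} [Fintype ι] [Field K]
    [AdmissibleAbsValues K] (x : ι → K) (e : ι → ℤ) (hrel : ∏ i, x i ^ e i = 1) (i₀ : ι)
    (he : e i₀ ≠ 0) (B : ℕ) (hB : ∀ i ≠ i₀, B * (e i).natAbs ≤ (e i₀).natAbs) :
    B * logHeight₁ (x i₀) ≤ ∑ i, logHeight₁ (x i) := by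
  classical
  have hi₀ : (e i₀).natAbs * logHeight₁ (x i₀) ≤
      ∑ i ∈ Finset.univ.erase i₀, (e i).natAbs * logHeight₁ (x i) := by
    rw [← Finset.mul_prod_erase _ _ (Finset.mem_univ i₀)] at hrel
    rw [← logHeight₁_zpow, eq_inv_of_mul_eq_one_left hrel, logHeight₁_inv]
    simpa only [logHeight₁_zpow] using
      logHeight₁_prod_le (Finset.univ.erase i₀) fun i ↦ x i ^ e i
  refine le_of_mul_le_mul_left (a := ((e i₀).natAbs : ℝ)) ?_ (by simpa using he)
  calc ((e i₀).natAbs : ℝ) * (B * logHeight₁ (x i₀))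
      ≤ B * ∑ i ∈ Finset.univ.erase i₀, (e i).natAbs * logHeight₁ (x i) := by
        rw [mul_left_comm]
        gcongr
    _ = ∑ i ∈ Finset.univ.erase i₀, ((B * (e i).natAbs : ℕ) : ℝ) * logHeight₁ (x i) := by
        simp only [Finset.mul_sum, Nat.cast_mul, mul_assoc]
    _ ≤ ∑ i ∈ Finset.univ.erase i₀, (e i₀).natAbs * logHeight₁ (x i) :=
        Finset.sum_le_sum fun i hi ↦ mul_le_mul_of_nonneg_right
          (by exact_mod_cast hB i (Finset.ne_of_mem_erase hi)) (zero_le_logHeight₁ _)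
    _ ≤ (e i₀).natAbs * ∑ i, logHeight₁ (x i) := by
        rw [← Finset.mul_sum]
        gcongr
        exact Finset.erase_subset _ _

lemma exists_logHeight₁_aeval_le_aeval {K : Type*} [Field K] [NumberField K] (u : K[X]) {h : K[X]}
    (hh : h.natDegree ≠ 0) :
    ∃ A : ℕ, ∀ (L : Type uL) [Field L] [NumberField L] [Algebra K L] (t : L),
      logHeight₁ (aeval t u) ≤ A * (logHeight₁ (aeval t h) + totalWeight L) := by
  obtain ⟨A, hA⟩ := exists_logHeight₁_aeval_le.{uL} u
  obtain ⟨B, hB⟩ := exists_logHeight₁_le_aeval.{uL} hh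
  refine ⟨A * (B + 1), fun L _ _ _ t ↦ ?_⟩
  have : 0 ≤ A * logHeight₁ (aeval t h) := mul_nonneg A.cast_nonneg (zero_le_logHeight₁ _)
  grw [hA L t, hB L t]
  push_cast
  linarith

/-- All heights `h(uᵢ(t))` are at most a constant multiple of `h(u i₀ (t)) + [L : ℚ]`, while the
relation bounds `B * h(u i₀ (t))` by their sum. -/
lemma exists_logHeight₁_aeval_le_of_prod_zpow_eq_one {K : Type*} [Field K] [NumberField K]
    {ι : Type*} [Fintype ι] (u : ι → K[X]) {i₀ : ι} (hu : (u i₀).natDegree ≠ 0) {ε : ℝ}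
    (hε : 0 < ε) :
    ∃ B : ℕ, ∀ (L : Type uL) [Field L] [NumberField L] [Algebra K L] (t : L) (e : ι → ℤ),
      e i₀ ≠ 0 → (∀ i ≠ i₀, B * (e i).natAbs ≤ (e i₀).natAbs) →
      ∏ i, aeval t (u i) ^ e i = 1 → logHeight₁ (aeval t (u i₀)) ≤ ε * totalWeight L := by
  choose A hA using fun i ↦ exists_logHeight₁_aeval_le_aeval.{uL} (u i) hu
  obtain ⟨B, hB⟩ := exists_nat_ge ((∑ i, A i + 1) * (1 + 1 / ε))
  refine ⟨B, fun L _ _ _ t e he hdom hrel ↦ ?_⟩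
  set y := logHeight₁ (aeval t (u i₀))
  have hy : 0 ≤ y := zero_le_logHeight₁ _
  have hsum : B * y ≤ (∑ i, A i : ℕ) * (y + totalWeight L) := by
    push_cast
    rw [Finset.sum_mul]
    exact (mul_logHeight₁_le_sum_of_prod_zpow_eq_one _ e hrel i₀ he B hdom).trans
      (Finset.sum_le_sum fun i _ ↦ hA i L t)
  have hbound : (∑ i, A i + 1) * (y / ε) ≤ (∑ i, A i + 1) * (totalWeight L : ℝ) := by
    have hBy := mul_le_mul_of_nonneg_right hB hy
    have hyA : (∑ i, A i + 1 : ℝ) * (1 + 1 / ε) * y =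
        (∑ i, A i + 1) * y + (∑ i, A i + 1) * (y / ε) := by ring
    push_cast at *
    linarith
  have := le_of_mul_le_mul_left hbound (by positivity)
  rwa [div_le_iff₀' hε] at this

end Heights

section PowDefect

/-- The polynomial that vanishes exactly when `f ^ deg g` and `g ^ deg f` are proportional, i.e.
(for nonzero `f` and `g`) when `f` and `g` are multiplicatively dependent modulo constants. -/
noncomputable def powDefect {R : Type*} [CommRing R] (f g : R[X]) : R[X] :=
  C (g.leadingCoeff ^ f.natDegree) * f ^ g.natDegree -
    C (f.leadingCoeff ^ g.natDegree) * g ^ f.natDegree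

lemma powDefect_comm {R : Type*} [CommRing R] (f g : R[X]) : powDefect f g = -powDefect g f :=
  (neg_sub _ _).symm

lemma natDegree_left_ne_zero_of_powDefect_ne_zero {R : Type*} [CommRing R] {f g : R[X]}
    (h : powDefect f g ≠ 0) : f.natDegree ≠ 0 := by
  intro hf
  obtain ⟨c, rfl⟩ := natDegree_eq_zero.1 hf
  simp [powDefect] at h

lemma natDegree_right_ne_zero_of_powDefect_ne_zero {R : Type*} [CommRing R] {f g : R[X]}
    (h : powDefect f g ≠ 0) : g.natDegree ≠ 0 :=
  natDegree_left_ne_zero_of_powDefect_ne_zero <| by rwa [powDefect_comm, neg_ne_zero] at h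

lemma powDefect_map {R S : Type*} [CommRing R] [CommRing S] (σ : R →+* S) {f g : R[X]}
    (hf : σ f.leadingCoeff ≠ 0) (hg : σ g.leadingCoeff ≠ 0) :
    powDefect (f.map σ) (g.map σ) = (powDefect f g).map σ := by
  simp [powDefect, natDegree_map_of_leadingCoeff_ne_zero σ hf,
    natDegree_map_of_leadingCoeff_ne_zero σ hg, leadingCoeff_map_of_leadingCoeff_ne_zero σ hf,
    leadingCoeff_map_of_leadingCoeff_ne_zero σ hg]

variable {F : Type*} [Field F] {f g : F[X]}

lemma powDefect_eq_zero_of_associated (h : Associated (f ^ g.natDegree) (g ^ f.natDegree)) :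
    powDefect f g = 0 := by
  obtain ⟨u, hu⟩ := h
  obtain ⟨c, -, hc⟩ := isUnit_iff.1 u.isUnit
  rw [← hc] at hu
  have hlead : f.leadingCoeff ^ g.natDegree * c = g.leadingCoeff ^ f.natDegree := by
    simpa using congrArg leadingCoeff hu
  rw [powDefect, ← hlead, ← hu, C_mul]
  ring

lemma associated_of_pow_associated {R : Type*} [CommRing R] [IsDomain R] [IsIntegrallyClosed R]
    {a : ℕ} (ha : a ≠ 0) {x y : R} (h : Associated (x ^ a) (y ^ a)) : Associated x y :=
  associated_of_dvd_dvd ((IsIntegrallyClosed.pow_dvd_pow_iff ha).1 h.dvd)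
    ((IsIntegrallyClosed.pow_dvd_pow_iff ha).1 h.symm.dvd)

lemma powDefect_eq_zero_of_pow_associated_pow {a b : ℕ} (ha : a ≠ 0)
    (h : Associated (f ^ a) (g ^ b)) : powDefect f g = 0 := by
  have hdeg : a * f.natDegree = b * g.natDegree := by
    simpa using natDegree_eq_of_degree_eq (degree_eq_degree_of_associated h)
  refine powDefect_eq_zero_of_associated (associated_of_pow_associated ha ?_)
  rw [← pow_mul, mul_comm, pow_mul, ← pow_mul g, mul_comm _ a, hdeg, pow_mul g]
  exact h.pow_pow

lemma not_associated_pow_mul_pow (h : powDefect f g ≠ 0) {i j i' j' : ℕ}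
    (hne : (i, j) ≠ (i', j')) : ¬Associated (f ^ i * g ^ j) (f ^ i' * g ^ j') := by
  wlog hi : i' ≤ i generalizing i j i' j'
  · exact fun hassoc ↦ this hne.symm (le_of_not_ge hi) hassoc.symm
  intro hassoc
  have hf0 : f.natDegree ≠ 0 := natDegree_left_ne_zero_of_powDefect_ne_zero h
  have hg0 : g.natDegree ≠ 0 := natDegree_right_ne_zero_of_powDefect_ne_zero h
  have hf : f ≠ 0 := ne_zero_of_natDegree_gt (Nat.pos_of_ne_zero hf0)
  have hg : g ≠ 0 := ne_zero_of_natDegree_gt (Nat.pos_of_ne_zero hg0)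
  obtain ⟨a, rfl⟩ := Nat.exists_eq_add_of_le hi
  have hcancel : Associated (f ^ a * g ^ j) (g ^ j') := by
    refine Associated.of_mul_left ?_ (Associated.refl (f ^ i')) (pow_ne_zero _ hf)
    rwa [← mul_assoc, ← pow_add]
  have hdeg : a * f.natDegree + j * g.natDegree = j' * g.natDegree := by
    simpa [natDegree_mul, hf, hg] using
      natDegree_eq_of_degree_eq (degree_eq_degree_of_associated hcancel)
  obtain ⟨b, rfl⟩ : ∃ b, j' = b + j :=
    Nat.exists_eq_add_of_le' (Nat.le_of_mul_le_mul_right (by omega) (Nat.pos_of_ne_zero hg0))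
  rcases eq_or_ne a 0 with rfl | ha
  · have hb : b = 0 := by simpa [add_mul, hg0] using hdeg
    simp [hb] at hne
  · refine h (powDefect_eq_zero_of_pow_associated_pow (b := b) ha ?_)
    refine Associated.of_mul_right ?_ (Associated.refl (g ^ j)) (pow_ne_zero _ hg)
    rwa [← pow_add]

end PowDefect

section PowerSums

open Filter Topology

lemma dense_norm_eval_ne {f g : ℂ[X]} (hg : g ≠ 0) (h : ¬Associated f g) :
    Dense {z : ℂ | ‖f.eval z‖ ≠ ‖g.eval z‖} := by
  refine dense_iff_inter_open.2 fun U hU hne ↦ ?_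
  by_contra! hempty
  have hnorm : ∀ z ∈ U, ‖f.eval z‖ = ‖g.eval z‖ := fun z hz ↦ by
    by_contra hz'
    exact (hempty.le ⟨hz, hz'⟩).elim
  obtain ⟨z₀, hz₀, -, hroot⟩ :=
    (dense_univ.sdiff_finset g.roots.toFinset).inter_open_nonempty U hU hne
  have hgz₀ : g.eval z₀ ≠ 0 := by simpa [hg] using hroot
  have hgz : ∀ᶠ z in 𝓝 z₀, g.eval z ≠ 0 := g.continuous.continuousAt.eventually_ne hgz₀
  have hquot : ∀ z ∈ U, g.eval z ≠ 0 → ‖f.eval z / g.eval z‖ = 1 := fun z hz hgz ↦ by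
    rw [norm_div, hnorm z hz, div_self (norm_ne_zero_iff.2 hgz)]
  have hconst : ∀ᶠ z in 𝓝 z₀, f.eval z / g.eval z = f.eval z₀ / g.eval z₀ := by
    refine Complex.eventually_eq_of_isLocalMax_norm (f := fun z ↦ f.eval z / g.eval z) ?_ ?_
    · filter_upwards [hgz] with z hz
      exact f.differentiableAt.div g.differentiableAt hz
    · filter_upwards [hgz, hU.mem_nhds hz₀] with z hz hzU
      exact (hquot z hzU hz).trans_le (hquot z₀ hz₀ hgz₀).ge
  have heq : f = C (f.eval z₀ / g.eval z₀) * g := by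
    refine eq_of_infinite_eval_eq _ _ (infinite_of_mem_nhds z₀ ?_)
    filter_upwards [hconst, hgz] with z hz hgz
    simp [← hz, hgz]
  have hc : f.eval z₀ / g.eval z₀ ≠ 0 :=
    norm_ne_zero_iff.1 (by rw [hquot z₀ hz₀ hgz₀]; exact one_ne_zero)
  rw [heq] at h
  exact h (associated_unit_mul_left g _ (isUnit_C.2 hc.isUnit))

lemma eventually_sum_mul_pow_ne_zero {κ : Type*} [Fintype κ] {c : κ → ℂ} (hc : c ≠ 0) {a : κ → ℂ}
    (ha : ∀ k, a k ≠ 0) (hinj : Function.Injective fun k ↦ ‖a k‖) :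
    ∀ᶠ p : ℕ in atTop, ∑ k, c k * a k ^ p ≠ 0 := by
  obtain ⟨k₀, hk₀, hmax⟩ := (Set.toFinite {k | c k ≠ 0}).exists_maximalFor (fun k ↦ ‖a k‖) _
    (Function.ne_iff.1 hc)
  have hterm : ∀ k, k ≠ k₀ → Tendsto (fun p : ℕ ↦ c k * (a k / a k₀) ^ p) atTop (𝓝 0) := by
    intro k hk
    rcases eq_or_ne (c k) 0 with hck | hck
    · simp [hck]
    have hlt : ‖a k / a k₀‖ < 1 := by
      rw [norm_div, div_lt_one (norm_pos_iff.2 (ha k₀))]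
      exact (le_of_not_gt fun hgt ↦ (hmax hck hgt.le).not_gt hgt).lt_of_ne (hinj.ne hk)
    simpa using (tendsto_pow_atTop_nhds_zero_of_norm_lt_one hlt).const_mul (c k)
  have hlim : Tendsto (fun p : ℕ ↦ ∑ k, c k * (a k / a k₀) ^ p) atTop (𝓝 (c k₀)) := by
    classical
    have : Tendsto (fun p : ℕ ↦ ∑ k, c k * (a k / a k₀) ^ p) atTop
        (𝓝 (∑ k, if k = k₀ then c k₀ else 0)) := tendsto_finsetSum _ fun k _ ↦ by
      split_ifs with hk
      · simp [hk, div_self (ha k₀)]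
      · exact hterm k hk
    simpa using this
  filter_upwards [hlim.eventually_ne hk₀] with p hp hzero
  apply hp
  simp_rw [div_pow, mul_div_assoc']
  rw [← Finset.sum_div, hzero, zero_div]

lemma eventually_sum_C_mul_pow_ne_zero {κ : Type*} [Fintype κ] {c : κ → ℂ} (hc : c ≠ 0)
    {a : κ → ℂ[X]} (ha : ∀ k, a k ≠ 0) (hassoc : Pairwise fun k l ↦ ¬Associated (a k) (a l)) :
    ∀ᶠ p : ℕ in atTop, ∑ k, C (c k) * a k ^ p ≠ 0 := by
  have hdense : Dense (⋂ q : {q : κ × κ // q.1 ≠ q.2},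
      {z : ℂ | ‖(a q.1.1).eval z‖ ≠ ‖(a q.1.2).eval z‖}) :=
    dense_iInter_of_isOpen
      (fun q ↦ isOpen_ne_fun (a q.1.1).continuous.norm (a q.1.2).continuous.norm)
      fun q ↦ dense_norm_eval_ne (ha _) (hassoc q.2)
  obtain ⟨z, hz, hroot⟩ := (hdense.sdiff_finset (∏ k, a k).roots.toFinset).nonempty
  have hz0 : ∀ k, (a k).eval z ≠ 0 := by
    simpa [Finset.prod_ne_zero_iff.2 fun k _ ↦ ha k, eval_prod, Finset.prod_eq_zero_iff] using hroot
  have hinj : Function.Injective fun k ↦ ‖(a k).eval z‖ := fun k l hkl ↦ by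
    by_contra hne
    exact Set.mem_iInter.1 hz ⟨(k, l), hne⟩ hkl
  filter_upwards [eventually_sum_mul_pow_ne_zero hc hz0 hinj] with p hp hzero
  exact hp (by simpa [eval_finsetSum] using congrArg (eval z) hzero)

lemma eventually_aeval_pow_ne_zero {K : Type*} [Field K] [NumberField K] {f g : K[X]}
    (h : powDefect f g ≠ 0) {P : MvPolynomial (Fin 2) ℤ} (hP : P ≠ 0) :
    ∀ᶠ p : ℕ in atTop, MvPolynomial.aeval (![f, g] ^ p) P ≠ 0 := by
  obtain ⟨σ⟩ : Nonempty (K →+* ℂ) := inferInstance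
  have hf : f ≠ 0 := ne_zero_of_natDegree_gt
    (Nat.pos_of_ne_zero (natDegree_left_ne_zero_of_powDefect_ne_zero h))
  have hg : g ≠ 0 := ne_zero_of_natDegree_gt
    (Nat.pos_of_ne_zero (natDegree_right_ne_zero_of_powDefect_ne_zero h))
  have hσ : powDefect (f.map σ) (g.map σ) ≠ 0 := by
    rw [powDefect_map σ (by simpa) (by simpa)]
    exact (Polynomial.map_ne_zero_iff σ.injective).2 h
  have hc : (fun m : P.support ↦ ((P.coeff m : ℤ) : ℂ)) ≠ 0 := by
    obtain ⟨m, hm⟩ := MvPolynomial.support_nonempty.2 hP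
    exact Function.ne_iff.2 ⟨⟨m, hm⟩, by simpa using hm⟩
  filter_upwards [eventually_sum_C_mul_pow_ne_zero hc
    (a := fun m ↦ f.map σ ^ m.1 0 * g.map σ ^ m.1 1)
    (fun m ↦ by simp [hf, hg])
    (fun m n hmn ↦ not_associated_pow_mul_pow hσ fun heq ↦ hmn <| Subtype.ext <| Finsupp.ext <| by
      simpa [Fin.forall_fin_two] using heq)] with p hp hzero
  apply hp
  rw [MvPolynomial.aeval_def, MvPolynomial.eval₂_eq'] at hzero
  have := congrArg (Polynomial.map σ) hzero
  rw [Polynomial.map_sum, ← Finset.sum_coe_sort] at this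
  simpa [Polynomial.map_sum, Fin.prod_univ_two, mul_pow, ← pow_mul, mul_comm p] using this

end PowerSums

section SmallPoints

open Height AdmissibleAbsValues

/-- The exceptional points are the zeros of `P(f ^ p, g ^ p)`, where `P(f, g) = 0` is an integral
relation and `p` is a large prime. -/
lemma exists_aeval_eq_zero_of_logHeight₁_le {K : Type*} [Field K] [NumberField K] {f g : K[X]}
    (h : powDefect f g ≠ 0) :
    ∃ ε > 0, ∃ Q : K[X], Q ≠ 0 ∧ ∀ (L : Type uL) [Field L] [NumberField L] [Algebra K L] (t : L),
      logHeight₁ (aeval t f) ≤ ε * totalWeight L → logHeight₁ (aeval t g) ≤ ε * totalWeight L →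
        aeval t Q = 0 := by
  obtain ⟨P, hrel, hP⟩ :
      ∃ P : MvPolynomial (Fin 2) ℤ, MvPolynomial.aeval ![f, g] P = 0 ∧ P ≠ 0 := by
    simpa [algebraicIndependent_iff] using not_algebraicIndependent_int ![f, g]
  set S : ℝ := ∑ m ∈ P.support, |((P.coeff m : ℤ) : ℝ)|
  have hS : 0 < S := sum_abs_coeff_pos hP
  obtain ⟨q, hq⟩ := exists_nat_gt S
  obtain ⟨p₀, hp₀⟩ := Filter.eventually_atTop.1 (eventually_aeval_pow_ne_zero h hP)
  obtain ⟨p, hle, hp⟩ := Nat.exists_infinite_primes (max p₀ q)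
  have hSp : S < p := hq.trans_le (by exact_mod_cast (le_max_right _ _).trans hle)
  set d := P.totalDegree
  set ε : ℝ := (Real.log p - Real.log S) / (2 * p * d + 1)
  have hε : 0 < ε := div_pos (sub_pos.2 (Real.log_lt_log hS hSp)) (by positivity)
  refine ⟨ε, hε, MvPolynomial.aeval (![f, g] ^ p) P, hp₀ p ((le_max_left _ _).trans hle),
    fun L _ _ _ t hf hg ↦ ?_⟩
  have haeval : ∀ n, aeval t (MvPolynomial.aeval (![f, g] ^ n) P) =
      MvPolynomial.aeval (![aeval t f, aeval t g] ^ n) P := fun n ↦ by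
    rw [← AlgHom.restrictScalars_apply ℤ, MvPolynomial.comp_aeval_apply]
    congr 2 with i
    fin_cases i <;> simp
  by_contra hQ
  have hD : (0 : ℝ) < totalWeight L := by exact_mod_cast NumberField.totalWeight_pos L
  have hroot := haeval 1
  rw [pow_one, hrel, map_zero, pow_one, eq_comm] at hroot
  have hheight := totalWeight_mul_log_le_of_aeval_eq_zero hroot hp (haeval p ▸ hQ)
  have hsum : (p * d : ℕ) * ∑ i, logHeight₁ (![aeval t f, aeval t g] i) ≤
      (p * d : ℕ) * (2 * (ε * totalWeight L)) := by
    gcongr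
    simpa [two_mul] using add_le_add hf hg
  have hεD : (2 * p * d + 1) * (ε * totalWeight L) =
      totalWeight L * (Real.log p - Real.log S) := by
    simp only [ε]
    field_simp
  push_cast at hheight hsum
  nlinarith [mul_pos hε hD]

end SmallPoints

section Basic

variable {α β : Type*}

/-- The exponents of `∏ fᵢ ^ nᵢ / ∏ φⱼ ^ νⱼ`. -/
def signedExponent (v : α ⊕ β → ℕ) : α ⊕ β → ℤ :=
  Sum.elim (fun i ↦ v (.inl i)) (fun j ↦ -v (.inr j))

lemma natAbs_signedExponent (v : α ⊕ β → ℕ) (i : α ⊕ β) : (signedExponent v i).natAbs = v i := by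
  cases i <;> simp [signedExponent]

lemma signedExponent_ne_zero [Nonempty (α ⊕ β)] {v : α ⊕ β → ℕ} (hv : ∀ i, 0 < v i) :
    signedExponent v ≠ 0 := by
  obtain ⟨i⟩ := ‹Nonempty (α ⊕ β)›
  intro h
  have := natAbs_signedExponent v i
  rw [h] at this
  exact (hv i).ne this

variable [Fintype α] [Fintype β]

/-- The difference `∏ fᵢ ^ nᵢ - ∏ φⱼ ^ νⱼ`; the families `f` and `φ`, and likewise the exponents
`n` and `ν`, are glued into one family on `α ⊕ β`. -/
def powDiff {R : Type*} [CommRing R] (u : α ⊕ β → R) (v : α ⊕ β → ℕ) : R :=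
  ∏ i, u (.inl i) ^ v (.inl i) - ∏ j, u (.inr j) ^ v (.inr j)

lemma map_powDiff {R S G : Type*} [CommRing R] [CommRing S] [FunLike G R S] [RingHomClass G R S]
    (σ : G) (u : α ⊕ β → R) (v : α ⊕ β → ℕ) :
    σ (powDiff u v) = powDiff (fun i ↦ σ (u i)) v := by
  simp [powDiff]

/-- The additive monoid of the exponents at which `powDiff u` vanishes. -/
def zeroExponents {R : Type*} [CommRing R] (u : α ⊕ β → R) : AddSubmonoid (α ⊕ β → ℕ) where
  carrier := {v | powDiff u v = 0}
  zero_mem' := by simp [powDiff]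
  add_mem' {v v'} hv hv' := by
    simp only [powDiff, Set.mem_ofPred_eq, sub_eq_zero] at hv hv' ⊢
    simp only [Pi.add_apply, pow_add, Finset.prod_mul_distrib, hv, hv']

lemma mem_zeroExponents {R : Type*} [CommRing R] {u : α ⊕ β → R} {v : α ⊕ β → ℕ} :
    v ∈ zeroExponents u ↔ powDiff u v = 0 :=
  Iff.rfl

lemma powDiff_eq_zero_iff {F : Type*} [Field F] {x : α ⊕ β → F} (hx : ∀ i, x i ≠ 0)
    {v : α ⊕ β → ℕ} : powDiff x v = 0 ↔ ∏ i, x i ^ signedExponent v i = 1 := by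
  have : ∏ j, x (.inr j) ^ v (.inr j) ≠ 0 :=
    Finset.prod_ne_zero_iff.2 fun j _ ↦ pow_ne_zero _ (hx _)
  simp [powDiff, signedExponent, sub_eq_zero, ← div_eq_mul_inv, div_eq_one_iff_eq this]

lemma ne_zero_of_powDiff_eq_zero {F : Type*} [Field F] {x : α ⊕ β → F}
    (hx : IsCoprime (∏ i, x (.inl i)) (∏ j, x (.inr j))) {v : α ⊕ β → ℕ} (hv : ∀ i, 0 < v i)
    (h : powDiff x v = 0) (i : α ⊕ β) : x i ≠ 0 := by
  have hiff : ∏ i, x (.inl i) = 0 ↔ ∏ j, x (.inr j) = 0 := by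
    simpa [Finset.prod_eq_zero_iff, (hv _).ne'] using congrArg (· = 0) (sub_eq_zero.1 h)
  obtain ⟨hl, hr⟩ : ∏ i, x (.inl i) ≠ 0 ∧ ∏ j, x (.inr j) ≠ 0 := by
    rcases hx.ne_zero_or_ne_zero with hne | hne
    · exact ⟨hne, hiff.not.1 hne⟩
    · exact ⟨hiff.not.2 hne, hne⟩
  cases i with
  | inl i => exact Finset.prod_ne_zero_iff.1 hl i (Finset.mem_univ i)
  | inr j => exact Finset.prod_ne_zero_iff.1 hr j (Finset.mem_univ j)

end Basic

section Residual

/-- Krull's intersection theorem, applied to the powers of a prime dividing the order of `a`. -/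
lemma exists_forall_nsmul_ne {A : Type*} [AddCommGroup A] [Module.Finite ℤ A] {a : A}
    (ha : a ≠ 0) : ∃ M : ℕ, 0 < M ∧ ∀ b : A, M • b ≠ a := by
  -- Here `p = 2` for `a` of infinite order, as then `addOrderOf a = 0`.
  set p := (addOrderOf a).minFac
  have hp : p.Prime := Nat.minFac_prime (AddMonoid.addOrderOf_eq_one_iff.not.2 ha)
  by_contra! hdiv
  have hmem : a ∈ ⨅ i : ℕ, Ideal.span {(p : ℤ)} ^ i • (⊤ : Submodule ℤ A) := by
    refine (Submodule.mem_iInf _).2 fun i ↦ ?_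
    obtain ⟨b, hb⟩ := hdiv (p ^ i) (pow_pos hp.pos i)
    rw [Ideal.span_singleton_pow, Submodule.ideal_span_singleton_smul,
      Submodule.mem_smul_pointwise_iff_exists]
    exact ⟨b, trivial, by rw [← hb, ← Nat.cast_pow, natCast_zsmul]⟩
  obtain ⟨⟨r, hr⟩, hra⟩ := (Ideal.mem_iInf_smul_pow_eq_bot_iff _ _).1 hmem
  have hr1 : (p : ℤ) ∣ r - 1 := by
    refine (Int.natCast_dvd_natCast.2 (Nat.minFac_dvd _)).trans
      (addOrderOf_dvd_iff_zsmul_eq_zero.2 ?_)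
    rw [sub_smul, one_smul, sub_eq_zero]
    exact hra
  have : (p : ℤ) ∣ 1 := by simpa using dvd_sub (Ideal.mem_span_singleton.1 hr) hr1
  exact hp.not_dvd_one (by exact_mod_cast this)

lemma exists_forall_modEq_sum_zsmul_ne_zero {A ι : Type*} [AddCommGroup A] [Fintype ι] {x : ι → A}
    {a : ι → ℤ} (ha : ∑ i, a i • x i ≠ 0) :
    ∃ M : ℕ, 0 < M ∧ ∀ e : ι → ℤ, (∀ i, e i ≡ a i [ZMOD M]) → ∑ i, e i • x i ≠ 0 := by
  set θ := (Fintype.linearCombination ℤ x).rangeRestrict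
  have hθ : ∀ e : ι → ℤ, θ e = 0 ↔ ∑ i, e i • x i = 0 := fun e ↦ by
    simp [θ, Subtype.ext_iff, Fintype.linearCombination_apply]
  obtain ⟨M, hM, hne⟩ := exists_forall_nsmul_ne ((hθ a).not.2 ha)
  refine ⟨M, hM, fun e he hzero ↦ ?_⟩
  choose m hm using fun i ↦ (he i).dvd
  refine hne (θ m) ?_
  have : a - e = (M : ℤ) • m := funext fun i ↦ by simpa using hm i
  rw [← natCast_zsmul, ← map_smul, ← this, map_sub, (hθ e).2 hzero, sub_zero]

lemma exists_forall_modEq_powDiff_ne_zero {α β F : Type*} [Fintype α] [Fintype β] [Field F]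
    {x : α ⊕ β → F} (hx : ∀ i, x i ≠ 0) {a : α ⊕ β → ℕ} (ha : powDiff x a ≠ 0) :
    ∃ M : ℕ, 0 < M ∧ ∀ v : α ⊕ β → ℕ, (∀ i, v i ≡ a i [MOD M]) → powDiff x v ≠ 0 := by
  have hsum : ∀ v, powDiff x v = 0 ↔
      ∑ i, signedExponent v i • Additive.ofMul (Units.mk0 (x i) (hx i)) = 0 := fun v ↦ by
    rw [powDiff_eq_zero_iff hx, ← toMul_eq_one, toMul_sum, Units.ext_iff]
    simp
  obtain ⟨M, hM, hne⟩ := exists_forall_modEq_sum_zsmul_ne_zero ((hsum a).not.1 ha)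
  refine ⟨M, hM, fun v hv ↦ (hsum v).not.2 (hne _ ?_)⟩
  rintro (i | j)
  · exact (Int.natCast_modEq_iff.2 (hv _))
  · exact (Int.natCast_modEq_iff.2 (hv _)).neg

end Residual

/-- All entries of `v` are positive, and the entry at `i₀` exceeds `B` times any other one. -/
structure Dominant {ι : Type*} (B : ℕ) (i₀ : ι) (v : ι → ℕ) : Prop where
  pos : ∀ i, 0 < v i
  mul_lt : ∀ i ≠ i₀, B * v i < v i₀

lemma Dominant.mono {ι : Type*} {B B' : ℕ} (hB : B ≤ B') {i₀ : ι} {v : ι → ℕ}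
    (hv : Dominant B' i₀ v) : Dominant B i₀ v :=
  ⟨hv.pos, fun i hi ↦ (Nat.mul_le_mul_right _ hB).trans_lt (hv.mul_lt i hi)⟩

variable {α β γ δ : Type*} [Fintype α] [Fintype β] [Fintype γ] [Fintype δ]

/-- The conclusion of the main theorem, in coordinates: off finitely many submonoids `s ∈ 𝒮`, the
elements `powDiff u v` and `powDiff w v'` are coprime for all `v` and `v'` in cones around the axes
`i₀` and `j₀`, and in these cones all `s ∈ 𝒮` avoid the residue class of `(a, b)` modulo `M`. -/
def CoprimeOffSubmonoids {R : Type*} [CommRing R] (u : α ⊕ β → R) (w : γ ⊕ δ → R)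
    (a : α ⊕ β → ℕ) (b : γ ⊕ δ → ℕ) (i₀ : α ⊕ β) (j₀ : γ ⊕ δ) : Prop :=
  ∃ (B M : ℕ) (𝒮 : Set (AddSubmonoid ((α ⊕ β → ℕ) × (γ ⊕ δ → ℕ)))), 0 < M ∧ 𝒮.Finite ∧
    (∀ v v', Dominant B i₀ v → Dominant B j₀ v' → (∀ s ∈ 𝒮, (v, v') ∉ s) →
      IsCoprime (powDiff u v) (powDiff w v')) ∧
    ∀ v v', Dominant B i₀ v → Dominant B j₀ v' → (∀ i, v i ≡ a i [MOD M]) →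
      (∀ j, v' j ≡ b j [MOD M]) → ∀ s ∈ 𝒮, (v, v') ∉ s

section NumberField

open Height AdmissibleAbsValues UniqueFactorizationMonoid

lemma exists_logHeight₁_aeval_le_of_powDiff_eq_zero {K : Type*} [Field K] [NumberField K]
    (u : α ⊕ β → K[X]) {i₀ : α ⊕ β} (hu : (u i₀).natDegree ≠ 0) {ε : ℝ} (hε : 0 < ε) :
    ∃ B : ℕ, ∀ (L : Type uL) [Field L] [NumberField L] [Algebra K L] (t : L) (v : α ⊕ β → ℕ),
      Dominant B i₀ v → (∀ i, aeval t (u i) ≠ 0) → powDiff (fun i ↦ aeval t (u i)) v = 0 →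
      logHeight₁ (aeval t (u i₀)) ≤ ε * totalWeight L := by
  obtain ⟨B, hB⟩ := exists_logHeight₁_aeval_le_of_prod_zpow_eq_one.{uL} u hu hε
  refine ⟨B, fun L _ _ _ t v hv ht hzero ↦ hB L t (signedExponent v) ?_ ?_
    ((powDiff_eq_zero_iff ht).1 hzero)⟩
  · simpa only [← Int.natAbs_ne_zero, natAbs_signedExponent] using (hv.pos i₀).ne'
  · simpa only [natAbs_signedExponent] using fun i hi ↦ (hv.mul_lt i hi).le

lemma exists_aeval_eq_zero_of_powDiff_eq_zero {K : Type*} [Field K] [NumberField K]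
    {u : α ⊕ β → K[X]} {w : γ ⊕ δ → K[X]} {i₀ : α ⊕ β} {j₀ : γ ⊕ δ}
    (hdef : powDefect (u i₀) (w j₀) ≠ 0) :
    ∃ (B : ℕ) (Q : K[X]), Q ≠ 0 ∧
      ∀ (L : Type uL) [Field L] [NumberField L] [Algebra K L] (t : L) (v : α ⊕ β → ℕ)
        (v' : γ ⊕ δ → ℕ), Dominant B i₀ v → Dominant B j₀ v' → (∀ i, aeval t (u i) ≠ 0) →
        (∀ j, aeval t (w j) ≠ 0) → powDiff (fun i ↦ aeval t (u i)) v = 0 →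
        powDiff (fun j ↦ aeval t (w j)) v' = 0 → aeval t Q = 0 := by
  obtain ⟨ε, hε, Q, hQ, hsmall⟩ := exists_aeval_eq_zero_of_logHeight₁_le.{uL} hdef
  obtain ⟨B, hB⟩ := exists_logHeight₁_aeval_le_of_powDiff_eq_zero.{uL} u
    (natDegree_left_ne_zero_of_powDefect_ne_zero hdef) hε
  obtain ⟨B', hB'⟩ := exists_logHeight₁_aeval_le_of_powDiff_eq_zero.{uL} w
    (natDegree_right_ne_zero_of_powDefect_ne_zero hdef) hε
  exact ⟨max B B', Q, hQ, fun L _ _ _ t v v' hv hv' hu hw hzero hzero' ↦ hsmall L t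
    (hB L t v (hv.mono (le_max_left ..)) hu hzero)
    (hB' L t v' (hv'.mono (le_max_right ..)) hw hzero')⟩

lemma exists_finset_isCoprime_powDiff {K : Type uL} [Field K] [NumberField K]
    {u : α ⊕ β → K[X]} {w : γ ⊕ δ → K[X]} {i₀ : α ⊕ β} {j₀ : γ ⊕ δ}
    (hdef : powDefect (u i₀) (w j₀) ≠ 0)
    (h₁ : IsCoprime (∏ i, u (.inl i)) (∏ j, u (.inr j)))
    (h₂ : IsCoprime (∏ i, w (.inl i)) (∏ j, w (.inr j))) :
    ∃ (B : ℕ) (𝒬 : Finset K[X]), (∀ π ∈ 𝒬, Irreducible π) ∧ ∀ v v', Dominant B i₀ v →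
      Dominant B j₀ v' → (∀ π ∈ 𝒬, ¬(π ∣ powDiff u v ∧ π ∣ powDiff w v')) →
      IsCoprime (powDiff u v) (powDiff w v') := by
  classical
  obtain ⟨B, Q, hQ, hroot⟩ := exists_aeval_eq_zero_of_powDiff_eq_zero.{uL} hdef
  refine ⟨B, insert X (primeFactors Q), ?_, fun v v' hv hv' hndvd ↦ ?_⟩
  · simpa [irreducible_X, mem_primeFactors] using
      fun π ↦ irreducible_of_normalized_factor (a := Q) π
  simp only [Finset.forall_mem_insert, mem_primeFactors] at hndvd
  refine isCoprime_of_irreducible_dvd (fun ⟨hu, hw⟩ ↦ hndvd.1 (by simp [hu, hw])) ?_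
  intro π hπ hdvd hdvd'
  have := Fact.mk hπ
  have : Module.Finite K (AdjoinRoot π) := (AdjoinRoot.powerBasis hπ.ne_zero).finite
  have : NumberField (AdjoinRoot π) := NumberField.of_module_finite K _
  have hu : powDiff (fun i ↦ AdjoinRoot.mk π (u i)) v = 0 := by
    rw [← map_powDiff, AdjoinRoot.mk_eq_zero.2 hdvd]
  have hw : powDiff (fun j ↦ AdjoinRoot.mk π (w j)) v' = 0 := by
    rw [← map_powDiff, AdjoinRoot.mk_eq_zero.2 hdvd']
  have hQπ : π ∣ Q := AdjoinRoot.mk_eq_zero.1 <| by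
    have := hroot (AdjoinRoot π) (AdjoinRoot.root π) v v' hv hv'
    simp only [AdjoinRoot.aeval_eq] at this
    exact this
      (ne_zero_of_powDiff_eq_zero (by simpa using h₁.map (AdjoinRoot.mk π)) hv.pos hu)
      (ne_zero_of_powDiff_eq_zero (by simpa using h₂.map (AdjoinRoot.mk π)) hv'.pos hw) hu hw
  obtain ⟨q, hq, hassoc⟩ := exists_mem_normalizedFactors_of_dvd hQ hπ hQπ
  exact hndvd.2 q hq ⟨hassoc.dvd_iff_dvd_left.1 hdvd, hassoc.dvd_iff_dvd_left.1 hdvd'⟩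

end NumberField

lemma exists_forall_modEq_not_powDiff_eq_zero {F : Type*} [Field F] {x : α ⊕ β → F}
    {y : γ ⊕ δ → F} {a : α ⊕ β → ℕ} {b : γ ⊕ δ → ℕ}
    (h₁ : IsCoprime (∏ i, x (.inl i)) (∏ j, x (.inr j)))
    (h₂ : IsCoprime (∏ i, y (.inl i)) (∏ j, y (.inr j)))
    (hab : IsCoprime (powDiff x a) (powDiff y b)) :
    ∃ M : ℕ, 0 < M ∧ ∀ v v', (∀ i, 0 < v i) → (∀ j, 0 < v' j) → (∀ i, v i ≡ a i [MOD M]) →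
      (∀ j, v' j ≡ b j [MOD M]) → ¬(powDiff x v = 0 ∧ powDiff y v' = 0) := by
  by_cases hx : ∀ i, x i ≠ 0
  · by_cases hy : ∀ j, y j ≠ 0
    · rcases hab.ne_zero_or_ne_zero with hne | hne
      · obtain ⟨M, hM, h⟩ := exists_forall_modEq_powDiff_ne_zero hx hne
        exact ⟨M, hM, fun v v' _ _ hv _ hzero ↦ h v hv hzero.1⟩
      · obtain ⟨M, hM, h⟩ := exists_forall_modEq_powDiff_ne_zero hy hne
        exact ⟨M, hM, fun v v' _ _ _ hv' hzero ↦ h v' hv' hzero.2⟩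
    · exact ⟨1, one_pos, fun v v' _ hv' _ _ hzero ↦ hy (ne_zero_of_powDiff_eq_zero h₂ hv' hzero.2)⟩
  · exact ⟨1, one_pos, fun v v' hv _ _ _ hzero ↦ hx (ne_zero_of_powDiff_eq_zero h₁ hv hzero.1)⟩

lemma exists_forall_modEq_not_dvd_powDiff {F : Type*} [Field F] {π : F[X]} (hπ : Irreducible π)
    {u : α ⊕ β → F[X]} {w : γ ⊕ δ → F[X]} {a : α ⊕ β → ℕ} {b : γ ⊕ δ → ℕ}
    (h₁ : IsCoprime (∏ i, u (.inl i)) (∏ j, u (.inr j)))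
    (h₂ : IsCoprime (∏ i, w (.inl i)) (∏ j, w (.inr j)))
    (hab : IsCoprime (powDiff u a) (powDiff w b)) :
    ∃ M : ℕ, 0 < M ∧ ∀ v v', (∀ i, 0 < v i) → (∀ j, 0 < v' j) → (∀ i, v i ≡ a i [MOD M]) →
      (∀ j, v' j ≡ b j [MOD M]) → ¬(π ∣ powDiff u v ∧ π ∣ powDiff w v') := by
  have := Fact.mk hπ
  simp only [← AdjoinRoot.mk_eq_zero, map_powDiff]
  exact exists_forall_modEq_not_powDiff_eq_zero (by simpa using h₁.map (AdjoinRoot.mk π))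
    (by simpa using h₂.map (AdjoinRoot.mk π))
    (by simpa only [map_powDiff] using hab.map (AdjoinRoot.mk π))

lemma coprimeOffSubmonoids_of_numberField {K : Type*} [Field K] [NumberField K]
    {u : α ⊕ β → K[X]} {w : γ ⊕ δ → K[X]} {a : α ⊕ β → ℕ} {b : γ ⊕ δ → ℕ} {i₀ : α ⊕ β}
    {j₀ : γ ⊕ δ} (hdef : powDefect (u i₀) (w j₀) ≠ 0)
    (h₁ : IsCoprime (∏ i, u (.inl i)) (∏ j, u (.inr j)))
    (h₂ : IsCoprime (∏ i, w (.inl i)) (∏ j, w (.inr j)))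
    (hab : IsCoprime (powDiff u a) (powDiff w b)) : CoprimeOffSubmonoids u w a b i₀ j₀ := by
  obtain ⟨B, 𝒬, hirr, hcop⟩ := exists_finset_isCoprime_powDiff hdef h₁ h₂
  choose! M hMpos hM using fun π hπ ↦ exists_forall_modEq_not_dvd_powDiff (hirr π hπ) h₁ h₂ hab
  let s (π : K[X]) := (zeroExponents fun i ↦ AdjoinRoot.mk π (u i)).prod
    (zeroExponents fun j ↦ AdjoinRoot.mk π (w j))
  have hs : ∀ π v v', (v, v') ∈ s π ↔ π ∣ powDiff u v ∧ π ∣ powDiff w v' := fun π v v' ↦ by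
    simp only [s, AddSubmonoid.mem_prod, mem_zeroExponents, ← map_powDiff, AdjoinRoot.mk_eq_zero]
  refine ⟨B, ∏ π ∈ 𝒬, M π, s '' 𝒬, Finset.prod_pos hMpos, 𝒬.finite_toSet.image _,
    fun v v' hv hv' hmem ↦ hcop v v' hv hv' ?_, fun v v' hv hv' ha hb ↦ ?_⟩
  · simpa [hs] using hmem
  · simp only [Set.forall_mem_image, hs, SetLike.mem_coe]
    exact fun π hπ ↦ hM π hπ v v' hv.pos hv'.pos
      (fun i ↦ (ha i).of_dvd (Finset.dvd_prod_of_mem M hπ))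
      fun j ↦ (hb j).of_dvd (Finset.dvd_prod_of_mem M hπ)

section Specialization

lemma isCoprime_map_of_isCoprime_map {R F K : Type*} [CommRing R] [Field F] [Field K] {ι : R →+* F}
    (hι : Function.Injective ι) {q : R →+* K} {f g : R[X]} (hf : q f.leadingCoeff ≠ 0)
    (h : IsCoprime (f.map q) (g.map q)) : IsCoprime (f.map ι) (g.map ι) := by
  have hres : q (resultant f g) ≠ 0 := by
    obtain ⟨k, hk⟩ := Nat.exists_eq_add_of_le (natDegree_map_le (f := q) (p := g))
    rw [← resultant_map_map, hk, resultant_add_right_deg _ _ _ _ _ le_rfl, coeff_map,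
      coeff_natDegree, ← natDegree_map_of_leadingCoeff_ne_zero q hf]
    exact mul_ne_zero (pow_ne_zero _ hf) (resultant_ne_zero _ _ h)
  have hres' : resultant (f.map ι) (g.map ι) ≠ 0 := by
    rw [natDegree_map_eq_of_injective hι, natDegree_map_eq_of_injective hι, resultant_map_map,
      map_ne_zero_iff _ hι]
    exact ne_zero_of_map hres
  have hf0 : f.map ι ≠ 0 :=
    (Polynomial.map_ne_zero_iff hι).2 (leadingCoeff_ne_zero.1 (ne_zero_of_map hf))
  by_contra hcop
  exact hres' (resultant_eq_zero_iff.2 ⟨.inl hf0, hcop⟩)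

lemma isCoprime_of_mem_lifts {R F : Type*} [CommRing R] [CommRing F] {ι : R →+* F}
    (hι : Function.Injective ι) {f g : R[X]} {a b : F[X]} (ha : a ∈ lifts ι) (hb : b ∈ lifts ι)
    (h : a * f.map ι + b * g.map ι = 1) : IsCoprime f g := by
  obtain ⟨a, rfl⟩ := (mem_lifts _).1 ha
  obtain ⟨b, rfl⟩ := (mem_lifts _).1 hb
  exact ⟨a, b, map_injective ι hι (by simpa using h)⟩

lemma exists_finiteType_lifts {F : Type*} [Field F] [CharZero F] (T : Finset F[X]) :
    ∃ R : Subalgebra ℚ F, Algebra.FiniteType ℚ R ∧ ∀ p ∈ T, p ∈ lifts (algebraMap R F) := by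
  classical
  refine ⟨Algebra.adjoin ℚ (T.biUnion coeffs),
    (Subalgebra.fg_iff_finiteType _).1 (Subalgebra.fg_adjoin_finset _), fun p hp ↦ ?_⟩
  refine (lifts_iff_coeff_lifts p).2 fun n ↦ ?_
  by_cases hn : p.coeff n = 0
  · exact ⟨0, by simp [hn]⟩
  · exact ⟨⟨p.coeff n, Algebra.subset_adjoin
      (Finset.mem_biUnion.2 ⟨p, hp, coeff_mem_coeffs hn⟩)⟩, rfl⟩

lemma numberField_of_finiteType (K : Type*) [Field K] [Algebra ℚ K] [Algebra.FiniteType ℚ K] :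
    NumberField K := by
  have hfin : Module.Finite ℚ K := finite_of_finite_type_of_isJacobsonRing ℚ K
  exact { to_charZero := algebraRat.charZero K
          to_finiteDimensional := by convert hfin; exact Subsingleton.elim _ _ }

lemma exists_ringHom_numberField_ne_zero {R : Type uL} [CommRing R] [IsDomain R] [Algebra ℚ R]
    [Algebra.FiniteType ℚ R] {r : R} (hr : r ≠ 0) :
    ∃ (K : Type uL) (_ : Field K) (_ : NumberField K) (q : R →+* K), q r ≠ 0 := by
  have hJ : IsJacobsonRing R := isJacobsonRing_of_finiteType (A := ℚ)
  obtain ⟨m, hm, hrm⟩ : ∃ m : Ideal R, m.IsMaximal ∧ r ∉ m := by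
    by_contra! hall
    have hmem : r ∈ (⊥ : Ideal R).jacobson := Submodule.mem_sInf.2 fun m hm ↦ hall m hm.2
    rw [hJ.out Ideal.isPrime_bot.isRadical] at hmem
    exact hr hmem
  let _ : Field (R ⧸ m) := Ideal.Quotient.field m
  have : Algebra.FiniteType ℚ (R ⧸ m) :=
    Algebra.FiniteType.of_surjective (Ideal.Quotient.mkₐ ℚ m) (Ideal.Quotient.mkₐ_surjective ℚ m)
  exact ⟨R ⧸ m, _, numberField_of_finiteType _, Ideal.Quotient.mk m,
    Ideal.Quotient.eq_zero_iff_mem.not.2 hrm⟩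

lemma sum_mul_ne_sum_mul_of_dominant {d v : α ⊕ β → ℕ} {i₀ : α ⊕ β} (hd : d i₀ ≠ 0)
    (hv : Dominant (∑ i, d i + 1) i₀ v) :
    ∑ i, v (.inl i) * d (.inl i) ≠ ∑ j, v (.inr j) * d (.inr j) := by
  classical
  set D := ∑ i, d i
  have hrest : ∑ i ∈ Finset.univ.erase i₀, v i * d i < v i₀ := by
    refine lt_of_mul_lt_mul_left (a := D + 1) ?_ (Nat.zero_le _)
    calc (D + 1) * ∑ i ∈ Finset.univ.erase i₀, v i * d i
        = ∑ i ∈ Finset.univ.erase i₀, (D + 1) * v i * d i := by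
          simp only [Finset.mul_sum, mul_assoc]
      _ ≤ ∑ i ∈ Finset.univ.erase i₀, v i₀ * d i := Finset.sum_le_sum fun i hi ↦
          Nat.mul_le_mul_right _ (hv.mul_lt i (Finset.ne_of_mem_erase hi)).le
      _ ≤ v i₀ * D := by
          rw [← Finset.mul_sum]
          gcongr
          exact Finset.sum_le_sum_of_subset (Finset.erase_subset _ _)
      _ < (D + 1) * v i₀ := by linarith [hv.pos i₀]
  have hsum := Finset.add_sum_erase Finset.univ (fun i ↦ v i * d i) (Finset.mem_univ i₀)
  rw [Fintype.sum_sum_type] at hsum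
  have hle : v i₀ ≤ v i₀ * d i₀ := Nat.le_mul_of_pos_right _ (Nat.pos_of_ne_zero hd)
  cases i₀ with
  | inl i =>
    have := Finset.single_le_sum_of_canonicallyOrdered (f := fun i ↦ v (.inl i) * d (.inl i))
      (Finset.mem_univ i)
    omega
  | inr j =>
    have := Finset.single_le_sum_of_canonicallyOrdered (f := fun j ↦ v (.inr j) * d (.inr j))
      (Finset.mem_univ j)
    omega

lemma leadingCoeff_powDiff {R : Type*} [CommRing R] [IsDomain R] {u : α ⊕ β → R[X]}
    (hu : ∀ i, u i ≠ 0) {i₀ : α ⊕ β} (hdeg : (u i₀).natDegree ≠ 0) {v : α ⊕ β → ℕ}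
    (hv : Dominant (∑ i, (u i).natDegree + 1) i₀ v) :
    (powDiff u v).leadingCoeff = ∏ i, (u (.inl i)).leadingCoeff ^ v (.inl i) ∨
      (powDiff u v).leadingCoeff = -∏ j, (u (.inr j)).leadingCoeff ^ v (.inr j) := by
  have hne : (∏ i, u (.inl i) ^ v (.inl i)).natDegree ≠
      (∏ j, u (.inr j) ^ v (.inr j)).natDegree := by
    rw [natDegree_prod _ _ fun i _ ↦ pow_ne_zero _ (hu _),
      natDegree_prod _ _ fun i _ ↦ pow_ne_zero _ (hu _)]
    simpa only [natDegree_pow] using sum_mul_ne_sum_mul_of_dominant hdeg hv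
  rcases hne.lt_or_gt with hlt | hlt
  · exact .inr <| (leadingCoeff_sub_of_degree_lt' (degree_lt_degree hlt)).trans <| by
      simp [leadingCoeff_prod]
  · exact .inl <| (leadingCoeff_sub_of_degree_lt (degree_lt_degree hlt)).trans <| by
      simp [leadingCoeff_prod]

lemma powDiff_map {R S : Type*} [CommRing R] [CommRing S] (σ : R →+* S) (u : α ⊕ β → R[X])
    (v : α ⊕ β → ℕ) : (powDiff u v).map σ = powDiff (fun i ↦ (u i).map σ) v :=
  map_powDiff (mapRingHom σ) u v

lemma CoprimeOffSubmonoids.map_of_map {R F K : Type*} [CommRing R] [Field F] [Field K]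
    {ι : R →+* F} (hι : Function.Injective ι) {q : R →+* K} {u : α ⊕ β → R[X]} {w : γ ⊕ δ → R[X]}
    {a : α ⊕ β → ℕ} {b : γ ⊕ δ → ℕ} {i₀ : α ⊕ β} {j₀ : γ ⊕ δ}
    (hu : ∀ i, q (u i).leadingCoeff ≠ 0) (hdeg : (u i₀).natDegree ≠ 0)
    (h : CoprimeOffSubmonoids (fun i ↦ (u i).map q) (fun j ↦ (w j).map q) a b i₀ j₀) :
    CoprimeOffSubmonoids (fun i ↦ (u i).map ι) (fun j ↦ (w j).map ι) a b i₀ j₀ := by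
  have := hι.isDomain ι
  obtain ⟨B, M, 𝒮, hM, h𝒮, hcop, hcong⟩ := h
  refine ⟨max B (∑ i, (u i).natDegree + 1), M, 𝒮, hM, h𝒮, fun v v' hv hv' hmem ↦ ?_,
    fun v v' hv hv' ↦ hcong v v' (hv.mono (le_max_left ..)) (hv'.mono (le_max_left ..))⟩
  have hlead : q (powDiff u v).leadingCoeff ≠ 0 := by
    rcases leadingCoeff_powDiff (fun i ↦ leadingCoeff_ne_zero.1 (ne_zero_of_map (hu i))) hdeg
      (hv.mono (le_max_right ..)) with h | h <;>
    simp [h, Finset.prod_ne_zero_iff, hu]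
  rw [← powDiff_map, ← powDiff_map]
  refine isCoprime_map_of_isCoprime_map hι hlead ?_
  rw [powDiff_map, powDiff_map]
  exact hcop v v' (hv.mono (le_max_left ..)) (hv'.mono (le_max_left ..)) hmem

lemma coprimeOffSubmonoids_map_of_finiteType {R F : Type*} [CommRing R] [IsDomain R]
    [Algebra ℚ R] [Algebra.FiniteType ℚ R] [Field F] {ι : R →+* F} (hι : Function.Injective ι)
    {u : α ⊕ β → R[X]} {w : γ ⊕ δ → R[X]} {a : α ⊕ β → ℕ} {b : γ ⊕ δ → ℕ} {i₀ : α ⊕ β}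
    {j₀ : γ ⊕ δ} (hu : ∀ i, u i ≠ 0) (hdef : powDefect (u i₀) (w j₀) ≠ 0)
    (h₁ : IsCoprime (∏ i, u (.inl i)) (∏ j, u (.inr j)))
    (h₂ : IsCoprime (∏ i, w (.inl i)) (∏ j, w (.inr j)))
    (hab : IsCoprime (powDiff u a) (powDiff w b)) :
    CoprimeOffSubmonoids (fun i ↦ (u i).map ι) (fun j ↦ (w j).map ι) a b i₀ j₀ := by
  have hdeg := natDegree_left_ne_zero_of_powDefect_ne_zero hdef
  have hw : w j₀ ≠ 0 :=
    ne_zero_of_natDegree_gt (Nat.pos_of_ne_zero (natDegree_right_ne_zero_of_powDefect_ne_zero hdef))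
  have hr : (∏ i, (u i).leadingCoeff) *
      ((w j₀).leadingCoeff * (powDefect (u i₀) (w j₀)).leadingCoeff) ≠ 0 := by
    simp [Finset.prod_ne_zero_iff, hu, hw, hdef]
  obtain ⟨K, _, _, q, hq⟩ := exists_ringHom_numberField_ne_zero hr
  simp only [map_mul, map_prod, mul_ne_zero_iff, Finset.prod_ne_zero_iff, Finset.mem_univ,
    true_implies] at hq
  obtain ⟨hqu, hqw, hqdef⟩ := hq
  refine .map_of_map hι hqu hdeg (coprimeOffSubmonoids_of_numberField ?_ ?_ ?_ ?_)
  · rw [powDefect_map q (hqu i₀) hqw]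
    exact leadingCoeff_ne_zero.1 (leadingCoeff_map_of_leadingCoeff_ne_zero q hqdef ▸ hqdef)
  · simpa using h₁.map (mapRingHom q)
  · simpa using h₂.map (mapRingHom q)
  · simpa only [map_powDiff, coe_mapRingHom] using hab.map (mapRingHom q)

lemma coprimeOffSubmonoids_of_powDefect_ne_zero {F : Type*} [Field F] [CharZero F]
    {u : α ⊕ β → F[X]} {w : γ ⊕ δ → F[X]} {a : α ⊕ β → ℕ} {b : γ ⊕ δ → ℕ} {i₀ : α ⊕ β}
    {j₀ : γ ⊕ δ} (hu : ∀ i, u i ≠ 0) (hdef : powDefect (u i₀) (w j₀) ≠ 0)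
    (h₁ : IsCoprime (∏ i, u (.inl i)) (∏ j, u (.inr j)))
    (h₂ : IsCoprime (∏ i, w (.inl i)) (∏ j, w (.inr j)))
    (hab : IsCoprime (powDiff u a) (powDiff w b)) : CoprimeOffSubmonoids u w a b i₀ j₀ := by
  classical
  obtain ⟨c₁, d₁, e₁⟩ := h₁
  obtain ⟨c₂, d₂, e₂⟩ := h₂
  obtain ⟨c₃, d₃, e₃⟩ := hab
  obtain ⟨R, hR, hlift⟩ := exists_finiteType_lifts
    (Finset.univ.image u ∪ Finset.univ.image w ∪ {c₁, d₁, c₂, d₂, c₃, d₃})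
  choose u' hu' using fun i ↦ (mem_lifts _).1 (hlift (u i) (by simp))
  choose w' hw' using fun j ↦ (mem_lifts _).1 (hlift (w j) (by simp))
  obtain rfl : (fun i ↦ (u' i).map (algebraMap R F)) = u := funext hu'
  obtain rfl : (fun j ↦ (w' j).map (algebraMap R F)) = w := funext hw'
  beta_reduce at hdef
  have hι : Function.Injective (algebraMap R F) := Subtype.val_injective
  have h₁ : IsCoprime (∏ i, u' (.inl i)) (∏ j, u' (.inr j)) :=
    isCoprime_of_mem_lifts hι (hlift c₁ (by simp)) (hlift d₁ (by simp))
      (by simpa [Polynomial.map_prod] using e₁)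
  have h₂ : IsCoprime (∏ i, w' (.inl i)) (∏ j, w' (.inr j)) :=
    isCoprime_of_mem_lifts hι (hlift c₂ (by simp)) (hlift d₂ (by simp))
      (by simpa [Polynomial.map_prod] using e₂)
  have hab : IsCoprime (powDiff u' a) (powDiff w' b) :=
    isCoprime_of_mem_lifts hι (hlift c₃ (by simp)) (hlift d₃ (by simp))
      (by simpa [powDiff, Polynomial.map_prod] using e₃)
  have hu' (i : α ⊕ β) : u' i ≠ 0 := (Polynomial.map_ne_zero_iff hι).1 (hu i)
  have hw' : w' j₀ ≠ 0 := (Polynomial.map_ne_zero_iff hι).1 <| ne_zero_of_natDegree_gt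
    (Nat.pos_of_ne_zero (natDegree_right_ne_zero_of_powDefect_ne_zero hdef))
  rw [powDefect_map _ (by simpa using hu' i₀) (by simpa using hw')] at hdef
  exact coprimeOffSubmonoids_map_of_finiteType hι hu' ((Polynomial.map_ne_zero_iff hι).1 hdef)
    h₁ h₂ hab

end Specialization

section MulIndependent

/-- Multiplicative independence of a finite family. -/
def MulIndependent {ι G : Type*} [Fintype ι] [DivisionCommMonoid G] (x : ι → G) : Prop :=
  ∀ e : ι → ℤ, ∏ i, x i ^ e i = 1 → e = 0

lemma MulIndependent.comp {ι κ G : Type*} [Fintype ι] [Fintype κ] [DivisionCommMonoid G]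
    {x : ι → G} (hx : MulIndependent x) {σ : κ → ι} (hσ : Function.Injective σ) :
    MulIndependent (x ∘ σ) := by
  intro e he
  have hext := hx (Function.extend σ e 0) <| by
    rwa [← Fintype.prod_of_injective σ hσ (fun k ↦ (x ∘ σ) k ^ e k)]
    · exact fun i hi ↦ by simp [Function.extend_apply' _ _ _ hi]
    · exact fun k ↦ by simp [hσ.extend_apply]
  exact funext fun k ↦ by simpa [hσ.extend_apply] using congrFun hext (σ k)

lemma MulIndependent.powDiff_ne_zero {F : Type*} [Field F] [Nonempty (α ⊕ β)] {x : α ⊕ β → F}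
    (h : MulIndependent x) (hx : ∀ i, x i ≠ 0) {v : α ⊕ β → ℕ} (hv : ∀ i, 0 < v i) :
    powDiff x v ≠ 0 :=
  fun hzero ↦ signedExponent_ne_zero hv (h _ ((powDiff_eq_zero_iff hx).1 hzero))

end MulIndependent

section Units

lemma isUnit_powDiff_of_eq_zero {R : Type*} [CommRing R] {u : α ⊕ β → R}
    (h : IsCoprime (∏ i, u (.inl i)) (∏ j, u (.inr j))) {i : α ⊕ β} (hi : u i = 0)
    {v : α ⊕ β → ℕ} (hv : ∀ i, 0 < v i) : IsUnit (powDiff u v) := by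
  cases i with
  | inl i =>
    rw [Finset.prod_eq_zero (Finset.mem_univ i) hi, isCoprime_zero_left,
      IsUnit.prod_univ_iff] at h
    rw [powDiff, Finset.prod_eq_zero (Finset.mem_univ i) (by rw [hi, zero_pow (hv _).ne']),
      zero_sub, IsUnit.neg_iff]
    exact IsUnit.prod_univ_iff.2 fun j ↦ (h j).pow _
  | inr j =>
    rw [Finset.prod_eq_zero (Finset.mem_univ j) hi, isCoprime_zero_right,
      IsUnit.prod_univ_iff] at h
    rw [powDiff, Finset.prod_eq_zero (i := j) (Finset.mem_univ j) (by rw [hi, zero_pow (hv _).ne']),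
      sub_zero]
    exact IsUnit.prod_univ_iff.2 fun i ↦ (h i).pow _

lemma isUnit_powDiff_of_natDegree_eq_zero {F : Type*} [Field F] {u : α ⊕ β → F[X]}
    (h : ∀ i, (u i).natDegree = 0) {v : α ⊕ β → ℕ} (hne : powDiff u v ≠ 0) :
    IsUnit (powDiff u v) := by
  choose c hc using fun i ↦ natDegree_eq_zero.1 (h i)
  obtain rfl : (fun i ↦ C (c i)) = u := funext hc
  rw [← map_powDiff] at hne ⊢
  exact isUnit_C.2 (isUnit_iff_ne_zero.2 (ne_zero_of_map hne))

lemma isUnit_powDiff_or_exists_natDegree_ne_zero {F : Type*} [Field F] [Nonempty (α ⊕ β)]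
    {u : α ⊕ β → F[X]} (hind : MulIndependent fun i ↦ algebraMap F[X] (RatFunc F) (u i))
    (h : IsCoprime (∏ i, u (.inl i)) (∏ j, u (.inr j))) :
    (∀ v : α ⊕ β → ℕ, (∀ i, 0 < v i) → IsUnit (powDiff u v)) ∨
      (∀ i, u i ≠ 0) ∧ ∃ i, (u i).natDegree ≠ 0 := by
  by_cases hu : ∀ i, u i ≠ 0
  · refine or_iff_not_imp_right.2 fun hdeg v hv ↦ ?_
    refine isUnit_powDiff_of_natDegree_eq_zero (by simpa [hu] using hdeg)
      (ne_zero_of_map (f := algebraMap F[X] (RatFunc F)) ?_)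
    rw [map_powDiff]
    exact hind.powDiff_ne_zero (by simpa using hu) hv
  · push Not at hu
    obtain ⟨i, hi⟩ := hu
    exact .inl fun v hv ↦ isUnit_powDiff_of_eq_zero h hi hv

end Units

section Dependent

lemma associated_of_powDefect_eq_zero {F : Type*} [Field F] {f g : F[X]} (hf : f ≠ 0) (hg : g ≠ 0)
    (h : powDefect f g = 0) : Associated (f ^ g.natDegree) (g ^ f.natDegree) := by
  have hunit {p : F[X]} (hp : p ≠ 0) (n : ℕ) : IsUnit (C (p.leadingCoeff ^ n)) :=
    isUnit_C.2 (pow_ne_zero n (leadingCoeff_ne_zero.2 hp)).isUnit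
  have := associated_unit_mul_left (f ^ g.natDegree) _ (hunit hg f.natDegree)
  rw [sub_eq_zero.1 h] at this
  exact this.symm.trans (associated_unit_mul_left _ _ (hunit hf g.natDegree))

lemma associated_pow_natDegree_trans {F : Type*} [Field F] {f g h : F[X]} (hg : g.natDegree ≠ 0)
    (hfg : Associated (f ^ g.natDegree) (g ^ f.natDegree))
    (hgh : Associated (g ^ h.natDegree) (h ^ g.natDegree)) :
    Associated (f ^ h.natDegree) (h ^ f.natDegree) := by
  refine associated_of_pow_associated hg ?_
  calc Associated ((f ^ h.natDegree) ^ g.natDegree) ((g ^ h.natDegree) ^ f.natDegree) := by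
        simpa only [← pow_mul, mul_comm] using hfg.pow_pow (n := h.natDegree)
    Associated _ ((h ^ f.natDegree) ^ g.natDegree) := by
        simpa only [← pow_mul, mul_comm] using hgh.pow_pow (n := f.natDegree)

lemma prod_zpow_eq_zpow_sum₀ {ι G : Type*} [CommGroupWithZero G] {y : G} (hy : y ≠ 0)
    (s : Finset ι) (a : ι → ℤ) : ∏ i ∈ s, y ^ a i = y ^ ∑ i ∈ s, a i := by
  induction s using Finset.cons_induction with
  | empty => simp
  | cons i s hi ih => simp [zpow_add₀ hy, ih]

lemma prod_zpow_pow_eq_prod_zpow {ι G : Type*} [Fintype ι] [CommGroupWithZero G] {x c : ι → G}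
    {y : G} (hy : y ≠ 0) {N : ℕ} {a e : ι → ℤ} (h : ∀ i, x i ^ N = c i * y ^ a i)
    (he : ∑ i, a i * e i = 0) : (∏ i, x i ^ e i) ^ N = ∏ i, c i ^ e i := by
  have hsum : ∏ i, y ^ (a i * e i) = 1 := by rw [prod_zpow_eq_zpow_sum₀ hy, he, zpow_zero]
  calc (∏ i, x i ^ e i) ^ N = ∏ i, (c i * y ^ a i) ^ e i := by
        simp_rw [← h, ← Finset.prod_pow, ← zpow_natCast, ← zpow_mul, mul_comm]
    _ = ∏ i, c i ^ e i := by
        simp_rw [mul_zpow, ← zpow_mul, Finset.prod_mul_distrib, hsum, mul_one]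

lemma MulIndependent.eq_zero_of_prod_aeval_zpow_eq_one {ι F L : Type*} [Fintype ι] [Field F]
    [Field L] [Algebra F L] {z : ι → F[X]} {h : F[X]}
    (hz : MulIndependent fun i ↦ algebraMap F[X] (RatFunc F) (z i)) (hdeg : h.natDegree ≠ 0)
    (hassoc : ∀ i, Associated (z i ^ h.natDegree) (h ^ (z i).natDegree)) {e : ι → ℤ}
    (he : ∑ i, ((z i).natDegree : ℤ) * e i = 0) {t : L} (ht : aeval t h ≠ 0)
    (hone : ∏ i, aeval t (z i) ^ e i = 1) : e = 0 := by
  have hrel : ∀ i, ∃ c : F, z i ^ h.natDegree = C c * h ^ (z i).natDegree := fun i ↦ by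
    obtain ⟨u, hu⟩ := (hassoc i).symm
    obtain ⟨c, -, hc⟩ := isUnit_iff.1 u.isUnit
    exact ⟨c, by rw [← hu, hc, mul_comm]⟩
  choose c hc using hrel
  have hrelL i : aeval t (z i) ^ h.natDegree =
      algebraMap F L (c i) * aeval t h ^ ((z i).natDegree : ℤ) := by
    simpa using congrArg (aeval t) (hc i)
  have hcL : ∏ i, algebraMap F L (c i) ^ e i = 1 := by
    rw [← prod_zpow_pow_eq_prod_zpow ht hrelL he, hone, one_pow]
  have hcF : ∏ i, c i ^ e i = 1 := (algebraMap F L).injective (by simpa using hcL)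
  have hh : algebraMap F[X] (RatFunc F) h ≠ 0 := by
    simpa using ne_zero_of_natDegree_gt (Nat.pos_of_ne_zero hdeg)
  have hrelF i : algebraMap F[X] (RatFunc F) (z i) ^ h.natDegree =
      RatFunc.C (c i) * algebraMap F[X] (RatFunc F) h ^ ((z i).natDegree : ℤ) := by
    simpa using congrArg (algebraMap F[X] (RatFunc F)) (hc i)
  have hpow : (∏ i, algebraMap F[X] (RatFunc F) (z i) ^ e i) ^ h.natDegree = 1 := by
    rw [prod_zpow_pow_eq_prod_zpow hh hrelF he]
    simpa using congrArg RatFunc.C hcF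
  have hmul : (fun i ↦ e i * (h.natDegree : ℤ)) = 0 := hz _ <| by
    simpa only [zpow_mul, zpow_natCast, Finset.prod_pow] using hpow
  exact funext fun i ↦ by simpa [hdeg] using congrFun hmul i

lemma MulIndependent.not_powDiff_aeval_eq_zero {F L : Type*} [Field F] [Field L] [Algebra F L]
    [Nonempty (α ⊕ β)] [Nonempty (γ ⊕ δ)] {u : α ⊕ β → F[X]} {w : γ ⊕ δ → F[X]} {h : F[X]}
    (hind : MulIndependent fun i ↦ algebraMap F[X] (RatFunc F) (Sum.elim u w i))
    (hdeg : h.natDegree ≠ 0)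
    (hassoc : ∀ i, Associated (Sum.elim u w i ^ h.natDegree) (h ^ (Sum.elim u w i).natDegree))
    {t : L} (ht : aeval t h ≠ 0) (hu : ∀ i, aeval t (u i) ≠ 0) (hw : ∀ j, aeval t (w j) ≠ 0)
    {v : α ⊕ β → ℕ} {v' : γ ⊕ δ → ℕ} (hv : ∀ i, 0 < v i) (hv' : ∀ j, 0 < v' j) :
    ¬(powDiff (fun i ↦ aeval t (u i)) v = 0 ∧ powDiff (fun j ↦ aeval t (w j)) v' = 0) := by
  rintro ⟨hzero, hzero'⟩
  rw [powDiff_eq_zero_iff hu] at hzero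
  rw [powDiff_eq_zero_iff hw] at hzero'
  set e := signedExponent v
  set e' := signedExponent v'
  obtain ⟨x, y, hxy, hne⟩ : ∃ x y : ℤ, x * ∑ i, (u i).natDegree * e i +
      y * ∑ j, (w j).natDegree * e' j = 0 ∧ (x ≠ 0 ∨ y ≠ 0) := by
    by_cases hdu : ∑ i, (u i).natDegree * e i = 0
    · exact ⟨1, 0, by simp [hdu], .inl one_ne_zero⟩
    · exact ⟨∑ j, (w j).natDegree * e' j, -∑ i, (u i).natDegree * e i, by ring,
        .inr (neg_ne_zero.2 hdu)⟩
  have hjoint : Sum.elim (fun i ↦ e i * x) (fun j ↦ e' j * y) = 0 := by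
    refine hind.eq_zero_of_prod_aeval_zpow_eq_one hdeg hassoc ?_ ht ?_
    · simpa only [Fintype.sum_sum_type, Sum.elim_inl, Sum.elim_inr, mul_add, Finset.mul_sum,
        mul_assoc, mul_comm, mul_left_comm] using hxy
    · simp [zpow_mul, Finset.prod_zpow, hzero, hzero']
  have he : e ≠ 0 := signedExponent_ne_zero hv
  have he' : e' ≠ 0 := signedExponent_ne_zero hv'
  obtain ⟨i, hi⟩ := Function.ne_iff.1 he
  obtain ⟨j, hj⟩ := Function.ne_iff.1 he'
  have hx : x = 0 := (mul_eq_zero.1 (congrFun hjoint (.inl i))).resolve_left hi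
  have hy : y = 0 := (mul_eq_zero.1 (congrFun hjoint (.inr j))).resolve_left hj
  exact hne.elim (· hx) (· hy)

lemma MulIndependent.isCoprime_powDiff {F : Type*} [Field F] [Nonempty (α ⊕ β)]
    {u : α ⊕ β → F[X]} {w : γ ⊕ δ → F[X]}
    (hind : MulIndependent fun i ↦ algebraMap F[X] (RatFunc F) (Sum.elim u w i))
    (hu : ∀ i, u i ≠ 0) (hw : ∀ j, w j ≠ 0) {i₀ : α ⊕ β} {j₀ : γ ⊕ δ}
    (hi₀ : (u i₀).natDegree ≠ 0) (hj₀ : (w j₀).natDegree ≠ 0)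
    (hdef : ∀ i j, powDefect (u i) (w j) = 0)
    (h₁ : IsCoprime (∏ i, u (.inl i)) (∏ j, u (.inr j)))
    (h₂ : IsCoprime (∏ i, w (.inl i)) (∏ j, w (.inr j)))
    {v : α ⊕ β → ℕ} {v' : γ ⊕ δ → ℕ} (hv : ∀ i, 0 < v i) (hv' : ∀ j, 0 < v' j) :
    IsCoprime (powDiff u v) (powDiff w v') := by
  have : Nonempty (γ ⊕ δ) := ⟨j₀⟩
  have hassoc_uw i j := associated_of_powDefect_eq_zero (hu i) (hw j) (hdef i j)
  have hassoc : ∀ i, Associated (Sum.elim u w i ^ (u i₀).natDegree)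
      (u i₀ ^ (Sum.elim u w i).natDegree)
    | .inl i => associated_pow_natDegree_trans hj₀ (hassoc_uw i j₀) (hassoc_uw i₀ j₀).symm
    | .inr j => (hassoc_uw i₀ j).symm
  rw [isCoprime_iff_aeval_ne_zero_of_isAlgClosed _ (AlgebraicClosure F)]
  intro t
  rw [map_powDiff, map_powDiff, ← not_and_or]
  intro hzero
  let σ : F[X] →+* AlgebraicClosure F := (aeval t).toRingHom
  have hut := ne_zero_of_powDiff_eq_zero (by simpa [σ] using h₁.map σ) hv hzero.1
  have hwt := ne_zero_of_powDiff_eq_zero (by simpa [σ] using h₂.map σ) hv' hzero.2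
  exact hind.not_powDiff_aeval_eq_zero hi₀ hassoc (hut i₀) hut hwt hv hv' hzero

end Dependent

lemma CoprimeOffSubmonoids.of_forall_isCoprime {R : Type*} [CommRing R] {u : α ⊕ β → R}
    {w : γ ⊕ δ → R} (a : α ⊕ β → ℕ) (b : γ ⊕ δ → ℕ) (i₀ : α ⊕ β) (j₀ : γ ⊕ δ)
    (h : ∀ v v', (∀ i, 0 < v i) → (∀ j, 0 < v' j) → IsCoprime (powDiff u v) (powDiff w v')) :
    CoprimeOffSubmonoids u w a b i₀ j₀ :=
  ⟨0, 1, ∅, one_pos, Set.finite_empty, fun v v' hv hv' _ ↦ h v v' hv.pos hv'.pos, by simp⟩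

theorem exists_coprimeOffSubmonoids {F : Type*} [Field F] [CharZero F] [Nonempty (α ⊕ β)]
    [Nonempty (γ ⊕ δ)] {u : α ⊕ β → F[X]} {w : γ ⊕ δ → F[X]}
    (hind : MulIndependent fun i ↦ algebraMap F[X] (RatFunc F) (Sum.elim u w i))
    (h₁ : IsCoprime (∏ i, u (.inl i)) (∏ j, u (.inr j)))
    (h₂ : IsCoprime (∏ i, w (.inl i)) (∏ j, w (.inr j)))
    {a : α ⊕ β → ℕ} {b : γ ⊕ δ → ℕ} (hab : IsCoprime (powDiff u a) (powDiff w b)) :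
    ∃ i₀ j₀, CoprimeOffSubmonoids u w a b i₀ j₀ := by
  rcases isUnit_powDiff_or_exists_natDegree_ne_zero (hind.comp Sum.inl_injective) h₁ with
    hunit | ⟨hu, i₀, hi₀⟩
  · exact ⟨Classical.arbitrary _, Classical.arbitrary _,
      .of_forall_isCoprime _ _ _ _ fun v v' hv _ ↦
        isCoprime_one_left.of_isCoprime_of_dvd_left (hunit v hv).dvd⟩
  rcases isUnit_powDiff_or_exists_natDegree_ne_zero (hind.comp Sum.inr_injective) h₂ with
    hunit | ⟨hw, j₀, hj₀⟩
  · exact ⟨Classical.arbitrary _, Classical.arbitrary _,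
      .of_forall_isCoprime _ _ _ _ fun v v' _ hv' ↦
        isCoprime_one_right.of_isCoprime_of_dvd_right (hunit v' hv').dvd⟩
  by_cases hdef : ∀ i j, powDefect (u i) (w j) = 0
  · exact ⟨i₀, j₀, .of_forall_isCoprime _ _ _ _ fun v v' hv hv' ↦
      hind.isCoprime_powDiff hu hw hi₀ hj₀ hdef h₁ h₂ hv hv'⟩
  · push Not at hdef
    obtain ⟨i, j, hij⟩ := hdef
    exact ⟨i, j, coprimeOffSubmonoids_of_powDefect_ne_zero hu hij h₁ h₂ hab⟩

section Density

/-- The lower asymptotic density of `A ⊆ V` along the cubes `{0, …, N} ^ ι`, where `x` sends a point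
of `V` to its coordinates. -/
noncomputable def lowerDensity {V ι : Type*} [Fintype ι] (x : V → ι → ℕ) (A : Set V) : ℝ :=
  Filter.atTop.liminf fun N : ℕ ↦
    ({v | v ∈ A ∧ ∀ i, x v i ≤ N}.ncard : ℝ) / ((N : ℝ) + 1) ^ Fintype.card ι

lemma finite_setOf_forall_le {V ι : Type*} [Finite ι] {x : V → ι → ℕ} (hx : Function.Injective x)
    (A : Set V) (N : ℕ) : {v | v ∈ A ∧ ∀ i, x v i ≤ N}.Finite := by
  classical
  have := Fintype.ofFinite ι
  exact ((Set.finite_Iic fun _ ↦ N).preimage hx.injOn).subset fun _ hv ↦ hv.2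

lemma ncard_setOf_forall_le_le {V ι : Type*} [Fintype ι] {x : V → ι → ℕ}
    (hx : Function.Injective x) (A : Set V) (N : ℕ) :
    {v | v ∈ A ∧ ∀ i, x v i ≤ N}.ncard ≤ (N + 1) ^ Fintype.card ι := by
  classical
  calc {v | v ∈ A ∧ ∀ i, x v i ≤ N}.ncard
      ≤ (Set.Iic fun _ : ι ↦ N).ncard :=
        Set.ncard_le_ncard_of_injOn x (fun _ hv ↦ hv.2) hx.injOn (Set.finite_Iic _)
    _ = (N + 1) ^ Fintype.card ι := by
        rw [← Finset.coe_Iic, Set.ncard_coe_finset, Pi.card_Iic]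
        simp

lemma lowerDensity_pos {V ι : Type*} [Fintype ι] {x : V → ι → ℕ} (hx : Function.Injective x)
    {A : Set V} {K : ℕ} (h : ∀ n, ∃ p : (ι → Fin n) → V, Function.Injective p ∧
      ∀ w, p w ∈ A ∧ ∀ i, x (p w) i ≤ K * n) : 0 < lowerDensity x A := by
  classical
  have hpow {n N : ℕ} (hn : K * n ≤ N) :
      n ^ Fintype.card ι ≤ {v | v ∈ A ∧ ∀ i, x v i ≤ N}.ncard := by
    obtain ⟨p, hp, hpA⟩ := h n
    calc n ^ Fintype.card ι = (Set.range p).ncard := by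
          rw [← Set.image_univ, Set.ncard_image_of_injective _ hp, Set.ncard_univ]
          simp
      _ ≤ {v | v ∈ A ∧ ∀ i, x v i ≤ N}.ncard := Set.ncard_le_ncard
          (Set.range_subset_iff.2 fun w ↦ ⟨(hpA w).1, fun i ↦ ((hpA w).2 i).trans hn⟩)
          (finite_setOf_forall_le hx A N)
  refine (show (0 : ℝ) < (1 / (2 * (K + 1))) ^ Fintype.card ι by positivity).trans_le
    (Filter.le_liminf_of_le (Filter.isCoboundedUnder_ge_of_le (x := 1) _ fun N ↦ ?_) ?_)
  · rw [div_le_one (by positivity)]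
    exact_mod_cast ncard_setOf_forall_le_le hx A N
  filter_upwards [Filter.eventually_ge_atTop (K + 1)] with N hN
  set n := N / (K + 1)
  have hn : 0 < n := Nat.div_pos hN K.succ_pos
  have hle : (K + 1) * n ≤ N := Nat.mul_div_le N _
  have hlt : N + 1 ≤ (K + 1) * (n + 1) := Nat.lt_mul_div_succ N K.succ_pos
  have hhalf : 1 / (2 * (K + 1)) * (N + 1 : ℝ) ≤ n := by
    rw [one_div_mul_eq_div, div_le_iff₀ (by positivity)]
    exact_mod_cast (by nlinarith : N + 1 ≤ n * (2 * (K + 1)))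
  rw [le_div_iff₀ (by positivity), ← mul_pow]
  calc (1 / (2 * (K + 1)) * (N + 1 : ℝ)) ^ Fintype.card ι ≤ (n : ℝ) ^ Fintype.card ι := by gcongr
    _ ≤ _ := by exact_mod_cast hpow (by nlinarith)

lemma exists_injective_dominant_modEq {ι : Type*} [Finite ι] (a : ι → ℕ) (B : ℕ) {M : ℕ}
    (hM : 0 < M) (i₀ : ι) : ∃ K, ∀ n, ∃ p : (ι → Fin n) → ι → ℕ, Function.Injective p ∧
      ∀ w, Dominant B i₀ (p w) ∧ (∀ i, p w i ≡ a i [MOD M]) ∧ ∀ i, p w i ≤ K * n := by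
  classical
  have := Fintype.ofFinite ι
  set s := ∑ i, a i
  have ha i : a i ≤ s := Finset.single_le_sum (fun _ _ ↦ Nat.zero_le _) (Finset.mem_univ i)
  refine ⟨s + M * (1 + B * (s + 1)), fun n ↦
    ⟨fun w i ↦ a i + M * (w i + 1 + if i = i₀ then B * (s + 1) * n else 0), ?_, fun w ↦
      ⟨⟨fun i ↦ by simp [hM], fun i hi ↦ ?_⟩, fun i ↦ ?_, fun i ↦ ?_⟩⟩⟩
  · intro w w' h
    funext i
    have := congrFun h i
    simpa [hM.ne', Fin.val_inj] using this
  · simp only [if_neg hi, if_true, add_zero]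
    have hwi : w i + 1 ≤ n := (w i).is_lt
    calc B * (a i + M * (w i + 1)) ≤ B * (s * (M * n) + M * n) := by
          gcongr
          exact (ha i).trans (Nat.le_mul_of_pos_right _ (Nat.mul_pos hM (by omega)))
      _ = M * (B * (s + 1) * n) := by ring
      _ < a i₀ + M * (w i₀ + 1 + B * (s + 1) * n) := by nlinarith
  · simp [Nat.ModEq]
  · have hwi : w i + 1 ≤ n := (w i).is_lt
    calc a i + M * (w i + 1 + if i = i₀ then B * (s + 1) * n else 0)
        ≤ s * n + M * (n + B * (s + 1) * n) := by
          gcongr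
          · exact (ha i).trans (Nat.le_mul_of_pos_right _ (by omega))
          · split <;> simp
      _ = (s + M * (1 + B * (s + 1))) * n := by ring

lemma lowerDensity_pos_of_dominant {V ι κ : Type*} [Fintype ι] [Fintype κ]
    (e : V ≃ (ι → ℕ) × (κ → ℕ)) {A : Set V} {B M : ℕ} (hM : 0 < M) {i₀ : ι} {j₀ : κ}
    {a : ι → ℕ} {b : κ → ℕ}
    (h : ∀ v v', Dominant B i₀ v → Dominant B j₀ v' → (∀ i, v i ≡ a i [MOD M]) →
      (∀ j, v' j ≡ b j [MOD M]) → e.symm (v, v') ∈ A) :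
    0 < lowerDensity (fun v ↦ Sum.elim (e v).1 (e v).2) A := by
  obtain ⟨K, hK⟩ := exists_injective_dominant_modEq a B hM i₀
  obtain ⟨K', hK'⟩ := exists_injective_dominant_modEq b B hM j₀
  refine lowerDensity_pos (K := max K K')
    ((Equiv.sumArrowEquivProdArrow ι κ ℕ).symm.injective.comp e.injective) fun n ↦ ?_
  obtain ⟨p, hp, hpA⟩ := hK n
  obtain ⟨q, hq, hqA⟩ := hK' n
  refine ⟨fun w ↦ e.symm (p (w ∘ .inl), q (w ∘ .inr)),
    e.symm.injective.comp ((hp.prodMap hq).comp (Equiv.sumArrowEquivProdArrow ι κ _).injective),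
    fun w ↦ ⟨h _ _ (hpA _).1 (hqA _).1 (hpA _).2.1 (hqA _).2.1, ?_⟩⟩
  rintro (i | j)
  · simpa using ((hpA (w ∘ .inl)).2.2 i).trans (Nat.mul_le_mul_right n (le_max_left K K'))
  · simpa using ((hqA (w ∘ .inr)).2.2 j).trans (Nat.mul_le_mul_right n (le_max_right K K'))

end Density

section Submonoids

variable {ι κ : Type*}

/-- The vectors in which `B` times the entry at `i` is at least the entry at `i₀`. -/
def dominatedExponents (B : ℕ) (i i₀ : ι) : AddSubmonoid (ι → ℕ) where
  carrier := {v | v i₀ ≤ B * v i}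
  zero_mem' := by simp
  add_mem' {v v'} hv hv' := by
    simpa [mul_add] using add_le_add hv hv'

lemma mem_dominatedExponents {B : ℕ} {i i₀ : ι} {v : ι → ℕ} :
    v ∈ dominatedExponents B i i₀ ↔ v i₀ ≤ B * v i :=
  Iff.rfl

lemma exists_finite_forall_notMem_iff_dominant [Finite ι] (B : ℕ) (i₀ : ι) :
    ∃ 𝒟 : Set (AddSubmonoid (ι → ℕ)), 𝒟.Finite ∧ ∀ v, (∀ s ∈ 𝒟, v ∉ s) ↔ Dominant B i₀ v := by
  refine ⟨Set.range (fun i ↦ AddMonoidHom.mker (Pi.evalAddMonoidHom (fun _ ↦ ℕ) i)) ∪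
    (dominatedExponents B · i₀) '' {i | i ≠ i₀},
    (Set.finite_range _).union ((Set.toFinite _).image _), fun v ↦ ?_⟩
  simp only [Set.mem_union, or_imp, forall_and, Set.forall_mem_range, Set.forall_mem_image,
    AddMonoidHom.mem_mker, Pi.evalAddMonoidHom_apply, mem_dominatedExponents, not_le,
    ← Nat.pos_iff_ne_zero]
  exact ⟨fun h ↦ ⟨h.1, fun _ ↦ @h.2 _⟩, fun h ↦ ⟨h.pos, fun i ↦ h.mul_lt i⟩⟩

lemma exists_finite_forall_notMem_iff_dominant_prod [Finite ι] [Finite κ] (B : ℕ) (i₀ : ι)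
    (j₀ : κ) : ∃ 𝒟 : Set (AddSubmonoid ((ι → ℕ) × (κ → ℕ))), 𝒟.Finite ∧
      ∀ v v', (∀ s ∈ 𝒟, (v, v') ∉ s) ↔ Dominant B i₀ v ∧ Dominant B j₀ v' := by
  obtain ⟨𝒟, hfin, h𝒟⟩ := exists_finite_forall_notMem_iff_dominant B i₀
  obtain ⟨𝒟', hfin', h𝒟'⟩ := exists_finite_forall_notMem_iff_dominant B j₀
  refine ⟨AddSubmonoid.comap (AddMonoidHom.fst _ _) '' 𝒟 ∪
    AddSubmonoid.comap (AddMonoidHom.snd _ _) '' 𝒟', (hfin.image _).union (hfin'.image _),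
    fun v v' ↦ ?_⟩
  simp only [Set.mem_union, or_imp, forall_and, Set.forall_mem_image, AddSubmonoid.mem_comap,
    AddMonoidHom.coe_fst, AddMonoidHom.coe_snd, ← h𝒟, ← h𝒟']

end Submonoids

/-- Gluing exponent vectors of the four families into exponents of the two glued ones. -/
def glueExponents (α β γ δ : Type*) :
    (α → ℕ) × (β → ℕ) × (γ → ℕ) × (δ → ℕ) ≃+ (α ⊕ β → ℕ) × (γ ⊕ δ → ℕ) where
  toFun v := (Sum.elim v.1 v.2.1, Sum.elim v.2.2.1 v.2.2.2)
  invFun p := (p.1 ∘ .inl, p.1 ∘ .inr, p.2 ∘ .inl, p.2 ∘ .inr)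
  left_inv _ := rfl
  right_inv p := by simp
  map_add' v v' := by simp [Sum.elim_add_add]

lemma glueExponents_apply {α β γ δ : Type*} (v : (α → ℕ) × (β → ℕ) × (γ → ℕ) × (δ → ℕ)) :
    glueExponents α β γ δ v = (Sum.elim v.1 v.2.1, Sum.elim v.2.2.1 v.2.2.2) :=
  rfl

lemma mulIndependent_sumElim {G : Type*} [DivisionCommMonoid G] {f : α → G} {φ : β → G} {g : γ → G}
    {ψ : δ → G}
    (h : ¬∃ (a : α → ℤ) (b : β → ℤ) (c : γ → ℤ) (d : δ → ℤ), (a ≠ 0 ∨ b ≠ 0 ∨ c ≠ 0 ∨ d ≠ 0) ∧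
      (∏ i, f i ^ a i) * (∏ i, φ i ^ b i) * (∏ i, g i ^ c i) * (∏ i, ψ i ^ d i) = 1) :
    MulIndependent (Sum.elim (Sum.elim f φ) (Sum.elim g ψ)) := by
  intro e he
  by_contra hne
  refine h ⟨fun i ↦ e (.inl (.inl i)), fun i ↦ e (.inl (.inr i)), fun i ↦ e (.inr (.inl i)),
    fun i ↦ e (.inr (.inr i)), ?_, by simpa [mul_assoc] using he⟩
  contrapose! hne
  simpa [funext_iff, Sum.forall, and_assoc] using hne

lemma CoprimeOffSubmonoids.exists_finite {R : Type*} [CommRing R] {u : α ⊕ β → R}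
    {w : γ ⊕ δ → R} {a : α ⊕ β → ℕ} {b : γ ⊕ δ → ℕ} {i₀ : α ⊕ β} {j₀ : γ ⊕ δ}
    (h : CoprimeOffSubmonoids u w a b i₀ j₀) :
    ∃ 𝒯 : Set (AddSubmonoid ((α ⊕ β → ℕ) × (γ ⊕ δ → ℕ))), 𝒯.Finite ∧
      (∀ p, (∀ s ∈ 𝒯, p ∉ s) → IsCoprime (powDiff u p.1) (powDiff w p.2)) ∧
      ∃ B M, 0 < M ∧ ∀ v v', Dominant B i₀ v → Dominant B j₀ v' → (∀ i, v i ≡ a i [MOD M]) →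
        (∀ j, v' j ≡ b j [MOD M]) → ∀ s ∈ 𝒯, (v, v') ∉ s := by
  obtain ⟨B, M, 𝒮, hM, hfin, hcop, hmod⟩ := h
  obtain ⟨𝒟, hfin', h𝒟⟩ := exists_finite_forall_notMem_iff_dominant_prod B i₀ j₀
  refine ⟨𝒮 ∪ 𝒟, hfin.union hfin', fun p hmem ↦ ?_, B, M, hM, fun v v' hv hv' ha hb ↦ ?_⟩
  · obtain ⟨hv, hv'⟩ := (h𝒟 p.1 p.2).1 fun s hs ↦ hmem s (.inr hs)
    exact hcop _ _ hv hv' fun s hs ↦ hmem s (.inl hs)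
  · rintro s (hs | hs)
    · exact hmod v v' hv hv' ha hb s hs
    · exact (h𝒟 v v').2 ⟨hv, hv'⟩ s hs

lemma isCoprime_of_forall_not_eval_eq_zero {F : Type*} [Field F] [IsAlgClosed F] {p q : F[X]}
    (h : ∀ t, ¬(p.eval t = 0 ∧ q.eval t = 0)) : IsCoprime p q := by
  simpa [isCoprime_iff_aeval_ne_zero_of_isAlgClosed F F, ← not_and_or] using h

end PowDiff

open PowDiff in
theorem stmt_2_general {F α β γ δ : Type*} [Field F] [CharZero F] [Fintype α] [Fintype β]
    [Fintype γ] [Fintype δ] [Nonempty (α ⊕ β)] [Nonempty (γ ⊕ δ)]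
    (f : α → F[X]) (φ : β → F[X]) (g : γ → F[X]) (ψ : δ → F[X])
    (hind : ¬∃ (a : α → ℤ) (b : β → ℤ) (c : γ → ℤ) (d : δ → ℤ),
      (a ≠ 0 ∨ b ≠ 0 ∨ c ≠ 0 ∨ d ≠ 0) ∧
      (∏ i, algebraMap F[X] (RatFunc F) (f i) ^ a i) *
        (∏ i, algebraMap F[X] (RatFunc F) (φ i) ^ b i) *
        (∏ i, algebraMap F[X] (RatFunc F) (g i) ^ c i) *
        (∏ i, algebraMap F[X] (RatFunc F) (ψ i) ^ d i) = 1)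
    (h₁ : IsCoprime (∏ i, f i) (∏ i, φ i)) (h₂ : IsCoprime (∏ i, g i) (∏ i, ψ i))
    (n : α → ℕ) (ν : β → ℕ) (m : γ → ℕ) (μ : δ → ℕ)
    (hcop : IsCoprime (∏ i, f i ^ n i - ∏ i, φ i ^ ν i) (∏ i, g i ^ m i - ∏ i, ψ i ^ μ i)) :
    ∃ (n₀ : ℕ) (𝓛 : Fin n₀ → AddSubmonoid ((α → ℕ) × (β → ℕ) × (γ → ℕ) × (δ → ℕ))),
      0 < Filter.atTop.liminf (fun N : ℕ ↦
        ({v : (α → ℕ) × (β → ℕ) × (γ → ℕ) × (δ → ℕ) |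
            (∀ t, v ∉ 𝓛 t) ∧ (∀ i, v.1 i ≤ N) ∧ (∀ i, v.2.1 i ≤ N) ∧
              (∀ i, v.2.2.1 i ≤ N) ∧ (∀ i, v.2.2.2 i ≤ N)}.ncard : ℝ) /
          ((N : ℝ) + 1) ^
            (Fintype.card α + Fintype.card β + Fintype.card γ + Fintype.card δ)) ∧
      ∀ v : (α → ℕ) × (β → ℕ) × (γ → ℕ) × (δ → ℕ), (∀ t, v ∉ 𝓛 t) →
        IsCoprime (∏ i, f i ^ v.1 i - ∏ i, φ i ^ v.2.1 i)
          (∏ i, g i ^ v.2.2.1 i - ∏ i, ψ i ^ v.2.2.2 i) := by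
  have hind' : MulIndependent fun i ↦ algebraMap F[X] (RatFunc F)
      (Sum.elim (Sum.elim f φ) (Sum.elim g ψ) i) := by
    convert mulIndependent_sumElim hind using 1
    ext ((_ | _) | (_ | _)) <;> rfl
  obtain ⟨i₀, j₀, hoff⟩ := exists_coprimeOffSubmonoids (a := Sum.elim n ν) (b := Sum.elim m μ)
    hind' h₁ h₂ hcop
  obtain ⟨𝒯, hfin, hoff, B, M, hM, hmod⟩ := hoff.exists_finite
  obtain ⟨n₀, s, -, hs⟩ := hfin.fin_param
  have hmem v : (∀ t, v ∉ (s t).comap (glueExponents α β γ δ)) ↔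
      ∀ s ∈ 𝒯, glueExponents α β γ δ v ∉ s := by simp [← hs]
  refine ⟨n₀, fun t ↦ (s t).comap (glueExponents α β γ δ), ?_, fun v hv ↦ ?_⟩
  · have := lowerDensity_pos_of_dominant (glueExponents α β γ δ).toEquiv
      (A := {v | ∀ t, v ∉ (s t).comap (glueExponents α β γ δ)}) hM
      fun v v' hv hv' ha hb ↦ (hmem _).2 <| by simpa using hmod v v' hv hv' ha hb
    simpa [lowerDensity, glueExponents_apply, Sum.forall, and_assoc, add_assoc] using this
  · simpa [powDiff, glueExponents_apply] using hoff _ ((hmem v).1 hv)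

/-- Theorem 1.2 part ii: under the hypotheses of part i, together with
`gcd(f₁⋯f_ℓ − 1, g₁⋯g_r − 1) = 1`, there are finitely many submonoids
`𝓛_t ⊆ ℕ^{ℓ+k+r+s}` whose complement `𝓝` has positive lower asymptotic density
and such that the gcd equals `1` for every exponent vector in `𝓝`. -/
theorem stmt_2 (ℓ k r s : ℕ) (hℓ : 1 ≤ ℓ) (hk : 1 ≤ k) (hr : 1 ≤ r) (hs : 1 ≤ s)
    (f : Fin ℓ → Polynomial ℂ) (φ : Fin k → Polynomial ℂ)
    (g : Fin r → Polynomial ℂ) (ψ : Fin s → Polynomial ℂ)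
    (hind : ¬ ∃ (a : Fin ℓ → ℤ) (b : Fin k → ℤ) (c : Fin r → ℤ) (d : Fin s → ℤ),
      (a ≠ 0 ∨ b ≠ 0 ∨ c ≠ 0 ∨ d ≠ 0) ∧
      (∏ i, (algebraMap (Polynomial ℂ) (RatFunc ℂ) (f i)) ^ a i) *
        (∏ i, (algebraMap (Polynomial ℂ) (RatFunc ℂ) (φ i)) ^ b i) *
        (∏ i, (algebraMap (Polynomial ℂ) (RatFunc ℂ) (g i)) ^ c i) *
        (∏ i, (algebraMap (Polynomial ℂ) (RatFunc ℂ) (ψ i)) ^ d i) = 1)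
    (hZ₁ : ∀ t : ℂ, ¬ ((∏ i, f i).eval t = 0 ∧ (∏ i, φ i).eval t = 0))
    (hZ₂ : ∀ t : ℂ, ¬ ((∏ i, g i).eval t = 0 ∧ (∏ i, ψ i).eval t = 0))
    (hcop : IsCoprime (∏ i, f i - 1) (∏ i, g i - 1)) :
    ∃ (n₀ : ℕ)
      (𝓛 : Fin n₀ → AddSubmonoid ((Fin ℓ → ℕ) × (Fin k → ℕ) × (Fin r → ℕ) × (Fin s → ℕ))),
      0 < Filter.atTop.liminf (fun N : ℕ =>
        ({v : (Fin ℓ → ℕ) × (Fin k → ℕ) × (Fin r → ℕ) × (Fin s → ℕ) |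
            (∀ t, v ∉ 𝓛 t) ∧ (∀ i, v.1 i ≤ N) ∧ (∀ i, v.2.1 i ≤ N) ∧
              (∀ i, v.2.2.1 i ≤ N) ∧ (∀ i, v.2.2.2 i ≤ N)}.ncard : ℝ) /
          ((N : ℝ) + 1) ^ (ℓ + k + r + s)) ∧
      ∀ v : (Fin ℓ → ℕ) × (Fin k → ℕ) × (Fin r → ℕ) × (Fin s → ℕ),
        (∀ t, v ∉ 𝓛 t) →
        IsCoprime (∏ i, f i ^ v.1 i - ∏ i, φ i ^ v.2.1 i)
          (∏ i, g i ^ v.2.2.1 i - ∏ i, ψ i ^ v.2.2.2 i) := by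
  have : Nonempty (Fin ℓ ⊕ Fin k) := ⟨.inl ⟨0, hℓ⟩⟩
  have : Nonempty (Fin r ⊕ Fin s) := ⟨.inl ⟨0, hr⟩⟩
  simpa using stmt_2_general f φ g ψ hind (PowDiff.isCoprime_of_forall_not_eval_eq_zero hZ₁)
    (PowDiff.isCoprime_of_forall_not_eval_eq_zero hZ₂) 1 0 1 0 (by simpa using hcop)
end

section
/- Let H ∈ ℂ[X,Y] be a nonzero polynomial in two variables. Then either H has a factor of the form X^i − ρY^j or of the form X^i Y^j − ρ, for some nonnegative integers i, j not both zero and some root of unity ρ ∈ ℂ, or the set of points (x, y) ∈ ℂ² with x and y both roots of unity and H(x,y) = 0 has cardinality at most 11·(deg H)², where deg H is the total degree of H. -/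
open MvPolynomial

/-!
Write `s • H` for `H` with its variables rescaled by a point `s` of the torus, and let `A` be the
group of those `s` for which `s • H` is proportional to `H`. An infinite `A` forces the exponents of
`H` onto a line, and then `H` has a binomial factor at each of its torsion zeros; so take `H`
irreducible with `A` finite. The group `A₂` of all `s` with `s ^ 2 ∈ A` contains `A` with index 4.

If the coefficients of `H`, one of them being 1, do not all lie in the cyclotomic subfield `L`, an
`L`-linear projection onto `L` turns `H` into another polynomial of degree at most `d = deg H`
vanishing at the torsion zeros of `H`, and Bezout's theorem bounds their number by `d ^ 2`.
Otherwise the coefficients lie in the field generated by the `2 ^ (m + 1) * N`-th roots of unity,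
with `N` odd. Given a torsion zero `p`, choose an odd multiple `R` of `N` such that `p ^ R` has
order a power of 2, and apply to `H p = 0` an automorphism `τ` raising roots of unity to the power
`k + 2 ^ j * R`. If some `j > m` satisfies `p ^ (2 ^ j * R) ∉ A`, the largest such `j`, with
`k = 1`, shows that `p` lies on one of the 3 curves `s • H = 0` with `s ∈ A₂ \ A` taken modulo `A`.
Otherwise `j = m` shows that `p` lies on one of the 4 curves `H^τ (s * p ^ k) = 0` with `s ∈ A₂`, of
degree `k * d`. When `H` is not a component of any of them, Bezout gives the bound
`3 * d ^ 2 + 4 * k * d ^ 2 ≤ 11 * d ^ 2`.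

For `m = 0` one takes `k = 2`, and a degree count shows that `H` is not a component. For `m ≥ 1` one
takes `k = 1`; if `H` divides `s • H^τ`, then rescaling `H` by a `2 ^ m`-th root of `s` gives a
polynomial with as many torsion zeros whose coefficients, suitably normalised, lie in the field of
`2 ^ m * N`-th roots of unity, and one concludes by induction on `m`.
-/

namespace BeukersSmyth

section Automorphisms

theorem exists_ringEquiv_extending {F K : Type*} [Field F] [Field K] [Algebra F K]
    [IsAlgClosed K] (σ : F ≃+* F) :
    ∃ τ : K ≃+* K, ∀ x, τ (algebraMap F K x) = algebraMap F K (σ x) := by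
  obtain ⟨s, hs⟩ := exists_isTranscendenceBasis F K
  let A := Algebra.adjoin F (Set.range ((↑) : s → K))
  have : IsAlgClosure A K := IsAlgClosed.isAlgClosure_of_transcendence_basis _ hs
  let polyEquiv := hs.1.aevalEquiv
  let e : A ≃+* A :=
    (polyEquiv.symm : A ≃+* MvPolynomial s F).trans <| (mapEquiv s σ).trans polyEquiv
  have e_algebraMap (x : F) : e (algebraMap F A x) = algebraMap F A (σ x) := by
    change polyEquiv (map (σ : F →+* F) (polyEquiv.symm (algebraMap F A x))) = _
    rw [AlgEquiv.commutes, MvPolynomial.algebraMap_eq, map_C, ← MvPolynomial.algebraMap_eq,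
      AlgEquiv.commutes]
    rfl
  refine ⟨IsAlgClosure.equivOfEquiv K K e, fun x => ?_⟩
  rw [IsScalarTower.algebraMap_apply F A K x, IsAlgClosure.equivOfEquiv_algebraMap, e_algebraMap,
    ← IsScalarTower.algebraMap_apply]

/-- `τ` raises `M`-th roots of unity to the power `e`. -/
def PowOnRoots {K : Type*} [Field K] (τ : K ≃+* K) (M e : ℕ) : Prop :=
  ∀ z : K, z ^ M = 1 → τ z = z ^ e

theorem exists_powOnRoots (K : Type*) [Field K] [IsAlgClosed K] [CharZero K] {M e : ℕ}
    (hM : M ≠ 0) (he : e.Coprime M) : ∃ τ : K ≃+* K, PowOnRoots τ M e := by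
  have : NeZero M := ⟨hM⟩
  let F := CyclotomicField M ℚ
  have : IsCyclotomicExtension {M} ℚ F := CyclotomicField.isCyclotomicExtension M ℚ
  algebraize [(IsAlgClosed.lift : F →ₐ[ℚ] K).toRingHom]
  let ζ := IsCyclotomicExtension.zeta M ℚ F
  have hζ : IsPrimitiveRoot ζ M := IsCyclotomicExtension.zeta_spec M ℚ F
  let σ : Gal(F/ℚ) := IsCyclotomicExtension.fromZetaAut (hζ.pow_of_coprime e he)
    (Polynomial.cyclotomic.irreducible_rat (Nat.pos_of_ne_zero hM))
  have hσ : σ ζ = ζ ^ e := IsCyclotomicExtension.fromZetaAut_spec _ _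
  obtain ⟨τ, hτ⟩ := exists_ringEquiv_extending (K := K) (σ : F ≃+* F)
  refine ⟨τ, fun z hz => ?_⟩
  obtain ⟨i, -, rfl⟩ :=
    (hζ.map_of_injective (algebraMap F K).injective).eq_pow_of_pow_eq_one hz
  have hτζ : τ (algebraMap F K ζ) = algebraMap F K ζ ^ e := by
    rw [hτ, ← map_pow, ← hσ]
    rfl
  rw [map_pow, hτζ, pow_right_comm]

theorem PowOnRoots.of_dvd {K : Type*} [Field K] {τ : K ≃+* K} {M N e : ℕ}
    (hτ : PowOnRoots τ M e) (h : N ∣ M) : PowOnRoots τ N e :=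
  fun z hz => hτ z (orderOf_dvd_iff_pow_eq_one.1 ((orderOf_dvd_of_pow_eq_one hz).trans h))

end Automorphisms

section CyclotomicSubfields

variable {K : Type*} [Field K] [CharZero K]

variable (K) in
/-- The subfield `ℚ(μ_N)` of `K` generated by the `N`-th roots of unity lying in `K`. -/
noncomputable def rootField (N : ℕ) : IntermediateField ℚ K :=
  IntermediateField.adjoin ℚ {z : K | z ^ N = 1}

theorem mem_rootField_of_pow_eq_one {N : ℕ} {z : K} (hz : z ^ N = 1) : z ∈ rootField K N :=
  IntermediateField.subset_adjoin _ _ hz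

theorem rootField_mono {M N : ℕ} (h : M ∣ N) : rootField K M ≤ rootField K N :=
  IntermediateField.adjoin.mono _ _ _ fun _ hz =>
    orderOf_dvd_iff_pow_eq_one.1 ((orderOf_dvd_of_pow_eq_one hz).trans h)

theorem eq_of_mem_rootField {N : ℕ} {σ τ : K ≃+* K} (h : ∀ z : K, z ^ N = 1 → σ z = τ z) {x : K}
    (hx : x ∈ rootField K N) : σ x = τ x := by
  induction hx using IntermediateField.adjoin_induction with
  | mem x hx => exact h x hx
  | algebraMap q => simp only [eq_ratCast, map_ratCast]
  | add x y _ _ hx hy => simp only [map_add, hx, hy]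
  | inv x _ hx => simp only [map_inv₀, hx]
  | mul x y _ _ hx hy => simp only [map_mul, hx, hy]

theorem exists_add_mul_of_mem_rootField_two_mul {M : ℕ} (hM : M ≠ 0) {ζ : K}
    (hζ : IsPrimitiveRoot ζ (2 * M)) {x : K} (hx : x ∈ rootField K (2 * M)) :
    ∃ a ∈ rootField K M, ∃ b ∈ rootField K M, x = a + b * ζ := by
  have : NeZero (2 * M) := ⟨by positivity⟩
  have hζ2 : ζ ^ 2 ∈ rootField K M :=
    mem_rootField_of_pow_eq_one (by rw [← pow_mul, hζ.pow_eq_one])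
  have halg : ∀ z ∈ {z : K | z ^ (2 * M) = 1}, IsAlgebraic ℚ z := fun z hz =>
    (IsIntegral.of_pow (NeZero.pos _) (hz ▸ isIntegral_one)).isAlgebraic
  replace hx : x ∈ Algebra.adjoin ℚ {z : K | z ^ (2 * M) = 1} := by
    rwa [← IntermediateField.adjoin_toSubalgebra_of_isAlgebraic halg]
  induction hx using Algebra.adjoin_induction with
  | mem z hz =>
    obtain ⟨i, -, rfl⟩ := hζ.eq_pow_of_pow_eq_one hz
    obtain ⟨k, rfl | rfl⟩ := Nat.even_or_odd' i
    · exact ⟨_, pow_mem hζ2 k, 0, zero_mem _, by rw [pow_mul, zero_mul, add_zero]⟩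
    · exact ⟨0, zero_mem _, _, pow_mem hζ2 k, by rw [pow_succ, pow_mul, zero_add]⟩
  | algebraMap q =>
    exact ⟨_, (rootField K M).algebraMap_mem q, 0, zero_mem _, by rw [zero_mul, add_zero]⟩
  | add x y _ _ hx hy =>
    obtain ⟨a, ha, b, hb, rfl⟩ := hx
    obtain ⟨c, hc, d, hd, rfl⟩ := hy
    exact ⟨a + c, add_mem ha hc, b + d, add_mem hb hd, by ring⟩
  | mul x y _ _ hx hy =>
    obtain ⟨a, ha, b, hb, rfl⟩ := hx
    obtain ⟨c, hc, d, hd, rfl⟩ := hy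
    exact ⟨a * c + b * d * ζ ^ 2, add_mem (mul_mem ha hc) (mul_mem (mul_mem hb hd) hζ2),
      a * d + b * c, add_mem (mul_mem ha hd) (mul_mem hb hc), by ring⟩

theorem mem_rootField_of_map_eq_self [IsAlgClosed K] {M : ℕ} (hM : M ≠ 0) {σ : K ≃+* K}
    (hσ : PowOnRoots σ (2 * M) (1 + M)) {x : K} (hx : x ∈ rootField K (2 * M)) (hfix : σ x = x) :
    x ∈ rootField K M := by
  have : NeZero (2 * M) := ⟨by positivity⟩
  obtain ⟨ζ, hζ⟩ := HasEnoughRootsOfUnity.exists_primitiveRoot K (2 * M)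
  have σ_eq_self {y : K} (hy : y ∈ rootField K M) : σ y = y := by
    refine eq_of_mem_rootField (τ := RingEquiv.refl K) (fun z hz => ?_) hy
    rw [hσ.of_dvd (dvd_mul_left M 2) z hz, pow_add, hz, pow_one, mul_one, RingEquiv.refl_apply]
  obtain ⟨a, ha, b, hb, rfl⟩ := exists_add_mul_of_mem_rootField_two_mul hM hζ hx
  have hζM : ζ ^ M = -1 :=
    (hζ.pow (NeZero.pos _) (mul_comm 2 M)).eq_neg_one_of_two_right
  rw [map_add, map_mul, σ_eq_self ha, σ_eq_self hb, hσ ζ hζ.pow_eq_one, pow_add, hζM] at hfix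
  have hbζ : b * ζ = 0 := by linear_combination (-1 / 2 : K) * hfix
  rwa [hbζ, add_zero]

variable (K) in
/-- The subfield of `K` generated by all roots of unity lying in `K`. -/
noncomputable def cyclotomicSubfield : IntermediateField ℚ K :=
  ⨆ n : ℕ+, rootField K n

theorem directed_rootField : Directed (· ≤ ·) fun n : ℕ+ => rootField K n := fun m n =>
  ⟨m * n, rootField_mono (PNat.mul_coe m n ▸ dvd_mul_right _ _),
    rootField_mono (PNat.mul_coe m n ▸ dvd_mul_left _ _)⟩

theorem mem_cyclotomicSubfield_of_isOfFinOrder {z : K} (hz : IsOfFinOrder z) :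
    z ∈ cyclotomicSubfield K :=
  le_iSup (fun n : ℕ+ => rootField K n) ⟨orderOf z, hz.orderOf_pos⟩
    (mem_rootField_of_pow_eq_one (pow_orderOf_eq_one z))

theorem exists_rootField_of_finset (s : Finset K) (hs : ∀ x ∈ s, x ∈ cyclotomicSubfield K) :
    ∃ N ≠ 0, ∀ x ∈ s, x ∈ rootField K N := by
  have h : (s : Set K) ⊆ ⋃ n : ℕ+, rootField K n := by
    rw [← IntermediateField.coe_iSup_of_directed directed_rootField]
    exact hs
  obtain ⟨N, hN⟩ := Directed.exists_mem_subset_of_finset_subset_biUnion directed_rootField h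
  exact ⟨N, N.ne_zero, hN⟩

end CyclotomicSubfields

section TorusAction

variable {σ R : Type*} [CommRing R]

/-- The character `s ↦ ∏ i, s i ^ m i` of the torus `σ → Rˣ` defined by an exponent vector `m`. -/
def monomialChar (m : σ →₀ ℕ) : (σ → Rˣ) →* Rˣ :=
  m.prod fun i k => Pi.evalMonoidHom (fun _ => Rˣ) i ^ k

theorem monomialChar_apply (m : σ →₀ ℕ) (s : σ → Rˣ) :
    monomialChar m s = m.prod fun i k => s i ^ k := by
  simp only [monomialChar, Finsupp.prod, MonoidHom.finsetProd_apply, MonoidHom.pow_apply,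
    Pi.evalMonoidHom_apply]

theorem val_monomialChar (m : σ →₀ ℕ) (s : σ → Rˣ) :
    (monomialChar m s : R) = m.prod fun i k => (s i : R) ^ k := by
  simp only [monomialChar_apply, Finsupp.prod, Units.coe_prod, Units.val_pow_eq_pow_val]

theorem monomialChar_add (u v : σ →₀ ℕ) (s : σ → Rˣ) :
    monomialChar (u + v) s = monomialChar u s * monomialChar v s := by
  classical
  simp only [monomialChar_apply]
  exact Finsupp.prod_add_index' (fun _ => pow_zero _) fun _ => pow_add _

theorem monomialChar_nsmul (k : ℕ) (u : σ →₀ ℕ) (s : σ → Rˣ) :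
    monomialChar (k • u) s = monomialChar u s ^ k := by
  induction k with
  | zero => simp [monomialChar_apply]
  | succ k ih => rw [succ_nsmul, monomialChar_add, ih, pow_succ]

/-- Evaluation of polynomials at a point of the torus `σ → Rˣ`. -/
noncomputable abbrev evalTorus (p : σ → Rˣ) : MvPolynomial σ R →+* R :=
  eval fun i => (p i : R)

theorem evalTorus_monomial (p : σ → Rˣ) (m : σ →₀ ℕ) (c : R) :
    evalTorus p (monomial m c) = c * monomialChar m p := by
  rw [eval_monomial, val_monomialChar]

/-- The action of a torus element on polynomials by rescaling the variables, `X i ↦ s i * X i`. -/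
noncomputable def rescale (s : σ → Rˣ) : MvPolynomial σ R ≃ₐ[R] MvPolynomial σ R :=
  AlgEquiv.ofAlgHom (aeval fun i => C (s i : R) * X i) (aeval fun i => C (↑(s i)⁻¹ : R) * X i)
    (by ext1 i; simp [← mul_assoc, ← C_mul, MvPolynomial.algebraMap_eq])
    (by ext1 i; simp [← mul_assoc, ← C_mul, MvPolynomial.algebraMap_eq])

theorem rescale_X (s : σ → Rˣ) (i : σ) : rescale s (X i) = C (s i : R) * X i :=
  aeval_X _ i

theorem rescale_monomial (s : σ → Rˣ) (m : σ →₀ ℕ) (c : R) :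
    rescale s (monomial m c) = monomial m (monomialChar m s * c) := by
  simp only [monomial_eq, map_mul, Finsupp.prod, map_prod, map_pow, rescale_X, mul_pow,
    Finset.prod_mul_distrib, val_monomialChar, ← MvPolynomial.algebraMap_eq, AlgEquiv.commutes]
  ring

theorem coeff_rescale (s : σ → Rˣ) (m : σ →₀ ℕ) (H : MvPolynomial σ R) :
    coeff m (rescale s H) = monomialChar m s * coeff m H := by
  classical
  induction H using MvPolynomial.induction_on' with
  | monomial u a =>
    rw [rescale_monomial, coeff_monomial, coeff_monomial]
    split_ifs with h
    · rw [h]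
    · rw [mul_zero]
  | add F G hF hG => rw [map_add, coeff_add, coeff_add, hF, hG, mul_add]

theorem evalTorus_rescale (s p : σ → Rˣ) (H : MvPolynomial σ R) :
    evalTorus p (rescale s H) = evalTorus (s * p) H := by
  induction H using MvPolynomial.induction_on' with
  | monomial u a =>
    rw [rescale_monomial, evalTorus_monomial, evalTorus_monomial, map_mul, Units.val_mul]
    ring
  | add F G hF hG => rw [map_add, map_add, map_add, hF, hG]

theorem rescale_rescale (s t : σ → Rˣ) (H : MvPolynomial σ R) :
    rescale s (rescale t H) = rescale (s * t) H := by
  ext m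
  rw [coeff_rescale, coeff_rescale, coeff_rescale, map_mul, Units.val_mul, mul_assoc]

theorem support_rescale (s : σ → Rˣ) (H : MvPolynomial σ R) :
    (rescale s H).support = H.support := by
  ext m
  rw [mem_support_iff, mem_support_iff, coeff_rescale, Ne, Units.mul_right_eq_zero]

theorem totalDegree_rescale (s : σ → Rˣ) (H : MvPolynomial σ R) :
    (rescale s H).totalDegree = H.totalDegree := by
  rw [totalDegree, totalDegree, support_rescale]

theorem irreducible_rescale (s : σ → Rˣ) {H : MvPolynomial σ R} :
    Irreducible (rescale s H) ↔ Irreducible H :=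
  MulEquiv.irreducible_iff (rescale s)

theorem rescale_expand (s : σ → Rˣ) (k : ℕ) (H : MvPolynomial σ R) :
    rescale s (expand k H) = expand k (rescale (s ^ k) H) := by
  suffices h : (rescale s).toAlgHom.comp (expand k) = (expand k).comp (rescale (s ^ k)).toAlgHom
    from DFunLike.congr_fun h H
  ext1 i
  simp [rescale_X, mul_pow]

theorem evalTorus_expand (p : σ → Rˣ) (k : ℕ) (H : MvPolynomial σ R) :
    evalTorus p (expand k H) = evalTorus (p ^ k) H := by
  rw [eval_expand]
  rfl

end TorusAction

section Conjugation

variable {σ K : Type*} [Field K]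

theorem map_evalTorus {τ : K ≃+* K} {M e : ℕ} (hτ : PowOnRoots τ M e) {p : σ → Kˣ}
    (hp : p ^ M = 1) (H : MvPolynomial σ K) :
    τ (evalTorus p H) = evalTorus (p ^ e) (map (τ : K →+* K) H) := by
  have hτp : (fun i => ((p ^ e) i : K)) = τ ∘ fun i => (p i : K) := by
    ext i
    have hpi : (p i : K) ^ M = 1 := by
      rw [← Units.val_pow_eq_pow_val, ← Pi.pow_apply, hp, Pi.one_apply, Units.val_one]
    exact (hτ _ hpi).symm
  rw [evalTorus, evalTorus, hτp]
  exact map_eval (τ : K →+* K) _ H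

theorem totalDegree_map_ringEquiv (τ : K ≃+* K) (H : MvPolynomial σ K) :
    (map (τ : K →+* K) H).totalDegree = H.totalDegree := by
  rw [totalDegree, totalDegree, support_map_of_injective _ τ.injective]

/- Only the action of `τ` on the coefficients of `H` matters, so `τ` may be replaced by an
automorphism with exponent `e` on all `M`-th roots of unity. -/
theorem evalTorus_pow_map_eq_zero [IsAlgClosed K] [CharZero K] {H : MvPolynomial σ K}
    {N M e e' : ℕ} (hH : ∀ m, coeff m H ∈ rootField K N) (hM : M ≠ 0) (hN : N ∣ M)
    {τ : K ≃+* K} (hτ : PowOnRoots τ N e') (he : e ≡ e' [MOD N]) (heM : e.Coprime M)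
    {p : σ → Kˣ} (hp : p ^ M = 1) (hpH : evalTorus p H = 0) :
    evalTorus (p ^ e) (map (τ : K →+* K) H) = 0 := by
  obtain ⟨τ', hτ'⟩ := exists_powOnRoots K hM heM
  have map_eq : map (τ : K →+* K) H = map (τ' : K →+* K) H := by
    ext m
    rw [coeff_map, coeff_map]
    refine eq_of_mem_rootField (fun z hz => ?_) (hH m)
    rw [hτ z hz, hτ'.of_dvd hN z hz]
    exact (pow_eq_pow_of_modEq he hz).symm
  rw [map_eq, ← map_evalTorus hτ' hp, hpH, map_zero]

end Conjugation

section PowerPreimage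

theorem relIndex_comap_eq_card_ker {G : Type*} [Group G] {f : G →* G} (hf : Function.Surjective f)
    {A : Subgroup G} [Finite A] (hA : A ≤ A.comap f) :
    A.relIndex (A.comap f) = Nat.card f.ker := by
  have hker : f.ker ≤ A.comap f := MonoidHom.ker_le_comap f A
  have hcard : f.ker.relIndex (A.comap f) = Nat.card A := by
    rw [Subgroup.relIndex_ker, Subgroup.map_comap_eq_self_of_surjective hf]
  have h₁ := Subgroup.relIndex_mul_relIndex ⊥ A _ bot_le hA
  have h₂ := Subgroup.relIndex_mul_relIndex ⊥ f.ker _ bot_le hker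
  rw [Subgroup.relIndex_bot_left] at h₁ h₂
  rw [hcard, ← h₁, mul_comm] at h₂
  exact (Nat.eq_of_mul_eq_mul_left Nat.card_pos h₂).symm

variable (σ K : Type*) [Field K] [IsAlgClosed K]

theorem powMonoidHom_torus_surjective {n : ℕ} (hn : n ≠ 0) :
    Function.Surjective (powMonoidHom n : (σ → Kˣ) →* (σ → Kˣ)) := by
  intro s
  choose t ht using fun i => IsAlgClosed.exists_pow_nat_eq (s i : K) (Nat.pos_of_ne_zero hn)
  have t_ne_zero (i : σ) : t i ≠ 0 := fun h => (s i).ne_zero (by rw [← ht i, h, zero_pow hn])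
  refine ⟨fun i => Units.mk0 (t i) (t_ne_zero i), funext fun i => Units.ext ?_⟩
  simpa using ht i

theorem card_ker_powMonoidHom_torus [Fintype σ] [CharZero K] (n : ℕ) [NeZero n] :
    Nat.card (powMonoidHom n : (σ → Kˣ) →* (σ → Kˣ)).ker = n ^ Fintype.card σ := by
  have e : (powMonoidHom n : (σ → Kˣ) →* (σ → Kˣ)).ker ≃ (σ → rootsOfUnity n K) :=
    (Equiv.subtypeEquivRight fun s => by
      simp [MonoidHom.mem_ker, funext_iff, mem_rootsOfUnity]).trans
      (Equiv.subtypePiEquivPi (p := fun _ z => z ∈ rootsOfUnity n K))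
  rw [Nat.card_congr e, Nat.card_fun, HasEnoughRootsOfUnity.natCard_rootsOfUnity,
    Nat.card_eq_fintype_card]

end PowerPreimage

section Cosets

variable {G : Type*} [CommGroup G] {A : Subgroup G}

theorem exists_finset_quotient_of_relIndex_ne_zero {B : Subgroup G} (hAB : A ≤ B)
    (h : A.relIndex B ≠ 0) :
    ∃ S : Finset (G ⧸ A), S.card = A.relIndex B ∧ ∀ s : G, (s : G ⧸ A) ∈ S ↔ s ∈ B := by
  have card_map : Nat.card (B.map (QuotientGroup.mk' A)) = A.relIndex B := by
    rw [← Subgroup.relIndex_ker, QuotientGroup.ker_mk']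
  have : Finite (B.map (QuotientGroup.mk' A)) := Nat.finite_of_card_ne_zero (card_map ▸ h)
  have hfin : (B.map (QuotientGroup.mk' A) : Set (G ⧸ A)).Finite := Set.toFinite _
  refine ⟨hfin.toFinset, ?_, fun s => ?_⟩
  · rw [← Nat.card_eq_card_finite_toFinset, ← card_map]
    rfl
  · rw [hfin.mem_toFinset, SetLike.mem_coe, ← QuotientGroup.mk'_apply, ← Subgroup.mem_comap,
      Subgroup.comap_map_eq, QuotientGroup.ker_mk', sup_eq_left.2 hAB]

theorem encard_iUnion_coset_le {α : Type*} {f : G → Set α}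
    (hf : ∀ s t : G, (s : G ⧸ A) = t → f s = f t) {S : Finset (G ⧸ A)} {n : ℕ∞}
    (hn : ∀ s : G, (s : G ⧸ A) ∈ S → (f s).encard ≤ n) :
    (⋃ s ∈ {s : G | (s : G ⧸ A) ∈ S}, f s).encard ≤ S.card * n := by
  have hsub : ⋃ s ∈ {s : G | (s : G ⧸ A) ∈ S}, f s ⊆ ⋃ c ∈ S, f c.out :=
    Set.iUnion₂_subset fun s hs => by
      rw [hf s (s : G ⧸ A).out (QuotientGroup.out_eq' _).symm]
      exact Set.subset_biUnion_of_mem (u := fun c : G ⧸ A => f c.out) hs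
  calc (⋃ s ∈ {s : G | (s : G ⧸ A) ∈ S}, f s).encard
      ≤ (⋃ c ∈ S, f c.out).encard := Set.encard_le_encard hsub
    _ ≤ ∑ c ∈ S, (f c.out).encard := S.set_encard_biUnion_le _
    _ ≤ ∑ _c ∈ S, n := Finset.sum_le_sum fun c hc => hn _ (by rwa [QuotientGroup.out_eq'])
    _ = S.card * n := by rw [Finset.sum_const, nsmul_eq_mul]

end Cosets

section Degree

variable {σ R : Type*} [CommRing R] [IsDomain R]

theorem totalDegree_prod_of_isDomain {ι : Type*} (S : Finset ι)
    {f : ι → MvPolynomial σ R} (hf : ∀ i ∈ S, f i ≠ 0) :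
    (∏ i ∈ S, f i).totalDegree = ∑ i ∈ S, (f i).totalDegree := by
  classical
  induction S using Finset.induction_on with
  | empty => rw [Finset.prod_empty, Finset.sum_empty, totalDegree_one]
  | insert i S hi ih =>
    rw [Finset.forall_mem_insert] at hf
    rw [Finset.prod_insert hi, Finset.sum_insert hi,
      totalDegree_mul_of_isDomain hf.1 (Finset.prod_ne_zero_iff.2 hf.2), ih hf.2]

theorem exists_eq_C_mul_of_dvd_of_totalDegree_le {F H : MvPolynomial σ R}
    (hF : F ≠ 0) (h : H ∣ F) (hdeg : F.totalDegree ≤ H.totalDegree) :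
    ∃ c ≠ 0, F = C c * H := by
  obtain ⟨Q, rfl⟩ := h
  have hQ : Q ≠ 0 := right_ne_zero_of_mul hF
  rw [totalDegree_mul_of_isDomain (left_ne_zero_of_mul hF) hQ] at hdeg
  have hQ_deg : Q.totalDegree = 0 := by lia
  rw [totalDegree_eq_zero_iff_eq_C] at hQ_deg
  refine ⟨coeff 0 Q, fun h => hQ (by rw [hQ_deg, h, C_0]), ?_⟩
  rw [mul_comm, ← hQ_deg]

theorem totalDegree_pos_of_irreducible {K : Type*} [Field K] {H : MvPolynomial σ K}
    (hH : Irreducible H) : 0 < H.totalDegree := by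
  refine Nat.pos_of_ne_zero fun h => hH.not_isUnit ?_
  rw [totalDegree_eq_zero_iff_eq_C] at h
  rw [h]
  exact (isUnit_iff_ne_zero.2 fun h0 => hH.ne_zero (by rw [h, h0, C_0])).map C

end Degree

section Stabilizer

variable {σ K : Type*} [Field K]

/-- The stabilizer in the torus of the line spanned by `H`: the elements on which all monomials
of `H` take the same value. -/
noncomputable def torusStab (H : MvPolynomial σ K) : Subgroup (σ → Kˣ) :=
  ⨅ u ∈ H.support, ⨅ v ∈ H.support, (monomialChar u).eqLocus (monomialChar v)

theorem mem_torusStab {H : MvPolynomial σ K} {s : σ → Kˣ} :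
    s ∈ torusStab H ↔ ∀ u ∈ H.support, ∀ v ∈ H.support, monomialChar u s = monomialChar v s := by
  simp only [torusStab, Subgroup.mem_iInf]
  rfl

theorem torusStab_congr {H H' : MvPolynomial σ K} (h : H.support = H'.support) :
    torusStab H = torusStab H' := by
  rw [torusStab, torusStab, h]

theorem rescale_eq_C_mul_of_mem_torusStab {H : MvPolynomial σ K} {s : σ → Kˣ}
    (hs : s ∈ torusStab H) {v : σ →₀ ℕ} (hv : v ∈ H.support) :
    rescale s H = C (monomialChar v s : K) * H := by
  ext u
  rw [coeff_rescale, coeff_C_mul]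
  by_cases hu : u ∈ H.support
  · rw [mem_torusStab.1 hs u hu v hv]
  · rw [notMem_support_iff.1 hu, mul_zero, mul_zero]

theorem mem_torusStab_of_rescale_eq_C_mul {H : MvPolynomial σ K} {s : σ → Kˣ} {c : K}
    (h : rescale s H = C c * H) : s ∈ torusStab H := by
  have val_eq {u} (hu : u ∈ H.support) : (monomialChar u s : K) = c := by
    refine mul_right_cancel₀ (mem_support_iff.1 hu) ?_
    rw [← coeff_rescale, h, coeff_C_mul]
  exact mem_torusStab.2 fun u hu v hv => Units.ext ((val_eq hu).trans (val_eq hv).symm)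

theorem mem_torusStab_of_dvd_rescale {H : MvPolynomial σ K} (hH : H ≠ 0) {s : σ → Kˣ}
    (h : H ∣ rescale s H) : s ∈ torusStab H := by
  obtain ⟨c, -, hc⟩ := exists_eq_C_mul_of_dvd_of_totalDegree_le
    ((map_ne_zero_iff _ (rescale s).injective).2 hH) h (totalDegree_rescale s H).le
  exact mem_torusStab_of_rescale_eq_C_mul hc

theorem evalTorus_mul_eq_zero_of_mem_torusStab {H : MvPolynomial σ K} {s : σ → Kˣ}
    (hs : s ∈ torusStab H) (p : σ → Kˣ) : evalTorus (s * p) H = 0 ↔ evalTorus p H = 0 := by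
  obtain hH | ⟨v, hv⟩ := H.support.eq_empty_or_nonempty
  · rw [support_eq_empty.1 hH, map_zero, map_zero]
  · rw [← evalTorus_rescale, rescale_eq_C_mul_of_mem_torusStab hs hv, map_mul, eval_C,
      Units.mul_right_eq_zero]

/-- The torus elements whose square stabilizes the line spanned by `H`. -/
noncomputable def sqrtStab (H : MvPolynomial σ K) : Subgroup (σ → Kˣ) :=
  (torusStab H).comap (powMonoidHom 2)

theorem mem_sqrtStab {H : MvPolynomial σ K} {s : σ → Kˣ} : s ∈ sqrtStab H ↔ s ^ 2 ∈ torusStab H :=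
  Iff.rfl

theorem torusStab_le_sqrtStab (H : MvPolynomial σ K) : torusStab H ≤ sqrtStab H :=
  fun _ hs => pow_mem hs 2

theorem relIndex_torusStab_sqrtStab [Fintype σ] [IsAlgClosed K] [CharZero K] (H : MvPolynomial σ K)
    [Finite (torusStab H)] : (torusStab H).relIndex (sqrtStab H) = 2 ^ Fintype.card σ := by
  rw [sqrtStab, relIndex_comap_eq_card_ker (powMonoidHom_torus_surjective σ K two_ne_zero)
    (torusStab_le_sqrtStab H), card_ker_powMonoidHom_torus]

theorem card_mul_totalDegree_le_of_rescale_dvd {H F : MvPolynomial σ K} (hH : Irreducible H)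
    (hF : F ≠ 0) (S : Finset ((σ → Kˣ) ⧸ torusStab H))
    (hdvd : ∀ s : σ → Kˣ, (s : (σ → Kˣ) ⧸ torusStab H) ∈ S → rescale s H ∣ F) :
    S.card * H.totalDegree ≤ F.totalDegree := by
  have hprod : ∏ c ∈ S, rescale c.out H ∣ F := by
    refine Finset.prod_dvd_of_isRelPrime (fun c _ c' _ hne => ?_) fun c hc =>
      hdvd _ (by rwa [QuotientGroup.out_eq'])
    refine ((irreducible_rescale _).2 hH).isRelPrime_iff_not_dvd.2 fun h => hne ?_
    rw [← QuotientGroup.out_eq' c, ← QuotientGroup.out_eq' c', QuotientGroup.eq]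
    refine mem_torusStab_of_dvd_rescale hH.ne_zero ?_
    rw [← map_dvd_iff (rescale c.out), rescale_rescale, mul_inv_cancel_left]
    exact h
  have rescale_ne_zero (s : σ → Kˣ) : rescale s H ≠ 0 :=
    ((irreducible_rescale s).2 hH).ne_zero
  calc S.card * H.totalDegree
      = ∑ c ∈ S, (rescale c.out H).totalDegree := by
        simp only [totalDegree_rescale, Finset.sum_const, smul_eq_mul]
    _ = (∏ c ∈ S, rescale c.out H).totalDegree :=
        (totalDegree_prod_of_isDomain S fun c _ => rescale_ne_zero c.out).symm
    _ ≤ F.totalDegree := totalDegree_le_of_dvd_of_isDomain hprod hF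

theorem not_dvd_expand_two_rescale [Finite σ] [Nontrivial σ] [IsAlgClosed K] [CharZero K]
    {H H' : MvPolynomial σ K} (hH : Irreducible H) [Finite (torusStab H)]
    (hsupp : H'.support = H.support) (s : σ → Kˣ) : ¬ H ∣ expand 2 (rescale s H') := by
  intro hdvd
  have := Fintype.ofFinite σ
  have hindex := relIndex_torusStab_sqrtStab H
  obtain ⟨S, hScard, hS⟩ := exists_finset_quotient_of_relIndex_ne_zero (torusStab_le_sqrtStab H)
    (by rw [hindex]; positivity)
  obtain ⟨v, hv⟩ := support_nonempty.2 hH.ne_zero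
  have rescale_dvd (r : σ → Kˣ) (hr : r ∈ sqrtStab H) :
      rescale r H ∣ expand 2 (rescale s H') := by
    have hr' : r ^ 2 ∈ torusStab H' := by rwa [torusStab_congr hsupp]
    have h := map_dvd (rescale r) hdvd
    rw [rescale_expand, rescale_rescale, mul_comm, ← rescale_rescale,
      rescale_eq_C_mul_of_mem_torusStab hr' (hsupp ▸ hv), map_mul, map_mul] at h
    have hunit : IsUnit (expand 2 (rescale s (C (monomialChar v (r ^ 2) : K)))) :=
      (((Units.isUnit _).map C).map (rescale s)).map (expand 2)
    exact hunit.dvd_mul_left.1 h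
  have hH' : H' ≠ 0 := support_nonempty.1 ⟨v, hsupp ▸ hv⟩
  have hdeg : (expand 2 (rescale s H')).totalDegree = H.totalDegree * 2 := by
    rw [totalDegree_expand, totalDegree_rescale, totalDegree, hsupp, totalDegree]
  have hle := card_mul_totalDegree_le_of_rescale_dvd hH
    ((expand_ne_zero two_pos).2 ((map_ne_zero_iff _ (rescale s).injective).2 hH')) S
    fun r hr => rescale_dvd r ((hS r).1 hr)
  have hcard : 2 ^ 2 ≤ 2 ^ Fintype.card σ := Nat.pow_le_pow_right two_pos Fintype.one_lt_card
  rw [hScard, hindex, hdeg] at hle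
  nlinarith [totalDegree_pos_of_irreducible hH]

end Stabilizer

section Bezout

variable {σ K : Type*} [Field K]

theorem two_mul_natCard_degree_le (D : ℕ) :
    2 * Nat.card {m : Fin 2 →₀ ℕ | (m.sum fun _ e => e) ≤ D} = (D + 1) * (D + 2) := by
  have e : {m : Fin 2 →₀ ℕ | (m.sum fun _ e => e) ≤ D} ≃
      (Finset.range (D + 1)).sigma Finset.HasAntidiagonal.antidiagonal :=
    { toFun m := ⟨⟨m.1 0 + m.1 1, m.1 0, m.1 1⟩, by
        have h : (m.1.sum fun _ e => e) ≤ D := m.2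
        rw [Finsupp.sum_fintype _ _ fun _ => rfl, Fin.sum_univ_two] at h
        simpa using Nat.lt_succ_iff.2 h⟩
      invFun q := ⟨Finsupp.equivFunOnFinite.symm ![q.1.2.1, q.1.2.2], by
        have h := Finset.mem_sigma.1 q.2
        rw [Finset.mem_range, Finset.HasAntidiagonal.mem_antidiagonal] at h
        rw [Set.mem_ofPred_eq, Finsupp.sum_fintype _ _ fun _ => rfl, Fin.sum_univ_two]
        simp only [Finsupp.coe_equivFunOnFinite_symm, Matrix.cons_val_zero, Matrix.cons_val_one]
        lia⟩
      left_inv m := by ext i; fin_cases i <;> rfl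
      right_inv := by
        rintro ⟨⟨k, i, j⟩, hq⟩
        obtain rfl : i + j = k :=
          Finset.HasAntidiagonal.mem_antidiagonal.1 (Finset.mem_sigma.1 hq).2
        rfl }
  rw [Nat.card_congr e, Nat.card_eq_fintype_card, Fintype.card_coe, Finset.card_sigma]
  simp only [Finset.Nat.card_antidiagonal]
  have gauss := Finset.sum_range_id_mul_two (D + 2)
  rw [Finset.sum_range_succ', add_zero] at gauss
  rw [mul_comm, gauss, mul_comm]
  rfl

theorem two_mul_finrank_restrictTotalDegree (D : ℕ) :
    2 * Module.finrank K (restrictTotalDegree (Fin 2) K D) = (D + 1) * (D + 2) := by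
  rw [← two_mul_natCard_degree_le D]
  exact congrArg _ (Module.finrank_eq_nat_card_basis (basisRestrictSupport K _))

theorem exists_totalDegree_le_one_eval_eq_one_of_ne {p q : σ → K} (h : q ≠ p) :
    ∃ L : MvPolynomial σ K, L.totalDegree ≤ 1 ∧ eval p L = 1 ∧ eval q L = 0 := by
  obtain ⟨i, hi⟩ := Function.ne_iff.1 h
  refine ⟨C (p i - q i)⁻¹ * (X i - C (q i)), ?_, ?_, ?_⟩
  · refine (totalDegree_mul _ _).trans ?_
    rw [totalDegree_C, zero_add]
    exact (totalDegree_sub_C_le _ _).trans (totalDegree_X i).le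
  · simp [inv_mul_cancel₀ (sub_ne_zero.2 hi.symm)]
  · simp

theorem exists_totalDegree_le_card_eval_eq (P : Finset (σ → K)) (g : (σ → K) → K) :
    ∃ f : MvPolynomial σ K, f.totalDegree ≤ P.card ∧ ∀ p ∈ P, eval p f = g p := by
  classical
  choose! L hL_deg hL_one hL_zero using fun p q : σ → K =>
    exists_totalDegree_le_one_eval_eq_one_of_ne (p := p) (q := q)
  refine ⟨∑ p ∈ P, C (g p) * ∏ q ∈ P.erase p, L p q, ?_, fun p hp => ?_⟩
  · refine totalDegree_finsetSum_le fun p _ => (totalDegree_mul _ _).trans ?_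
    rw [totalDegree_C, zero_add]
    refine (totalDegree_finsetProd _ _).trans ((Finset.sum_le_card_nsmul _ _ 1 ?_).trans ?_)
    · exact fun q hq => hL_deg p q (Finset.ne_of_mem_erase hq)
    · simpa using Finset.card_erase_le
  · rw [map_sum, Finset.sum_eq_single_of_mem p hp]
    · rw [map_mul, eval_C, map_prod, Finset.prod_eq_one, mul_one]
      exact fun q hq => hL_one p q (Finset.ne_of_mem_erase hq)
    · intro q _ hqp
      rw [map_mul, map_prod, Finset.prod_eq_zero (Finset.mem_erase.2 ⟨hqp.symm, hp⟩), mul_zero]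
      exact hL_zero q p hqp.symm

theorem finrank_add_card_le_of_vanishing [Finite σ] (P : Finset (σ → K)) {D : ℕ}
    (hD : P.card ≤ D) {U : Submodule K (MvPolynomial σ K)}
    (hU : U ≤ restrictTotalDegree σ K D) (hUP : ∀ f ∈ U, ∀ p ∈ P, eval p f = 0) :
    Module.finrank K U + P.card ≤ Module.finrank K (restrictTotalDegree σ K D) := by
  let evalP : restrictTotalDegree σ K D →ₗ[K] (P → K) :=
    LinearMap.pi fun p => (aeval (R := K) p.1).toLinearMap ∘ₗ Submodule.subtype _
  have evalP_apply (f p) : evalP f p = eval p.1 f.1 := by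
    simp [evalP, aeval_eq_eval]
  have evalP_surjective : Function.Surjective evalP := fun g => by
    obtain ⟨f, hf_deg, hf⟩ := exists_totalDegree_le_card_eval_eq P
      (Function.extend Subtype.val g 0)
    refine ⟨⟨f, (mem_restrictTotalDegree _ _ _).2 (hf_deg.trans hD)⟩, funext fun p => ?_⟩
    rw [evalP_apply, hf p.1 p.2, Subtype.val_injective.extend_apply]
  have hle : U.comap (restrictTotalDegree σ K D).subtype ≤ LinearMap.ker evalP := fun f hf => by
    refine LinearMap.mem_ker.2 (funext fun p => ?_)
    rw [evalP_apply, hUP f hf p.1 p.2, Pi.zero_apply]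
  have hrank := LinearMap.finrank_range_add_finrank_ker evalP
  rw [LinearMap.range_eq_top.2 evalP_surjective, finrank_top, Module.finrank_fintype_fun_eq_card,
    Fintype.card_coe] at hrank
  have hfinU := (Submodule.comapSubtypeEquivOfLe hU).finrank_eq
  have := Submodule.finrank_mono hle
  lia

/-- The multiples of `F` by polynomials of total degree at most `D`. -/
noncomputable def multiples (F : MvPolynomial σ K) (D : ℕ) : Submodule K (MvPolynomial σ K) :=
  (restrictTotalDegree σ K D).map (LinearMap.mulLeft K F)

instance [Finite σ] (F : MvPolynomial σ K) (D : ℕ) : FiniteDimensional K (multiples F D) := by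
  unfold multiples
  infer_instance

theorem mem_multiples {F f : MvPolynomial σ K} {D : ℕ} :
    f ∈ multiples F D ↔ ∃ A : MvPolynomial σ K, A.totalDegree ≤ D ∧ F * A = f := by
  simp only [multiples, Submodule.mem_map, mem_restrictTotalDegree, LinearMap.mulLeft_apply]

theorem finrank_multiples {F : MvPolynomial σ K} (hF : F ≠ 0) (D : ℕ) :
    Module.finrank K (multiples F D) = Module.finrank K (restrictTotalDegree σ K D) :=
  (Submodule.equivMapOfInjective _ (mul_right_injective₀ hF) _).finrank_eq.symm

theorem multiples_le_restrictTotalDegree (F : MvPolynomial σ K) (D : ℕ) :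
    multiples F D ≤ restrictTotalDegree σ K (F.totalDegree + D) := by
  rintro _ ⟨A, hA, rfl⟩
  rw [SetLike.mem_coe, mem_restrictTotalDegree] at hA
  exact (mem_restrictTotalDegree _ _ _).2 ((totalDegree_mul _ _).trans (by gcongr))

theorem multiples_inf_multiples_le {F G : MvPolynomial σ K} (hFG : IsRelPrime F G) (hF : F ≠ 0)
    (r E : ℕ) : multiples F E ⊓ multiples G (F.totalDegree + r) ≤ multiples (F * G) r := by
  rintro f ⟨hfF, hfG⟩
  obtain ⟨A, -, rfl⟩ := mem_multiples.1 hfF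
  obtain ⟨B, hB_deg, hBA⟩ := mem_multiples.1 hfG
  obtain ⟨Q, rfl⟩ : F ∣ B := hFG.dvd_of_dvd_mul_left ⟨A, hBA⟩
  refine mem_multiples.2 ⟨Q, ?_, by linear_combination hBA⟩
  by_cases hQ : Q = 0
  · simp [hQ]
  · rw [totalDegree_mul_of_isDomain hF hQ] at hB_deg
    lia

theorem card_le_totalDegree_mul_of_isRelPrime {F G : MvPolynomial (Fin 2) K}
    (hFG : IsRelPrime F G) (hF : F ≠ 0) (hG : G ≠ 0) {P : Finset (Fin 2 → K)}
    (hP : ∀ p ∈ P, eval p F = 0 ∧ eval p G = 0) : P.card ≤ F.totalDegree * G.totalDegree := by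
  set m := F.totalDegree with hm
  set n := G.totalDegree with hn
  set r := P.card
  let U := multiples F (n + r) ⊔ multiples G (m + r)
  have hU_deg : U ≤ restrictTotalDegree (Fin 2) K (m + n + r) :=
    sup_le ((multiples_le_restrictTotalDegree F (n + r)).trans_eq (by rw [← hm, add_assoc]))
      ((multiples_le_restrictTotalDegree G (m + r)).trans_eq (by rw [← hn]; congr 1; ring))
  have hU_eval (f) (hf : f ∈ U) (p) (hp : p ∈ P) : eval p f = 0 := by
    obtain ⟨f₁, h₁, f₂, h₂, rfl⟩ := Submodule.mem_sup.1 hf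
    obtain ⟨A, -, rfl⟩ := mem_multiples.1 h₁
    obtain ⟨B, -, rfl⟩ := mem_multiples.1 h₂
    simp [hP p hp]
  have hU := finrank_add_card_le_of_vanishing P (by lia : P.card ≤ m + n + r)
    hU_deg hU_eval
  have hsup := Submodule.finrank_sup_add_finrank_inf_eq (multiples F (n + r)) (multiples G (m + r))
  have hinf := Submodule.finrank_mono (multiples_inf_multiples_le hFG hF r (n + r))
  rw [finrank_multiples (mul_ne_zero hF hG)] at hinf
  rw [finrank_multiples hF, finrank_multiples hG] at hsup
  have d₁ := two_mul_finrank_restrictTotalDegree (K := K) (n + r)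
  have d₂ := two_mul_finrank_restrictTotalDegree (K := K) (m + r)
  have d₃ := two_mul_finrank_restrictTotalDegree (K := K) (m + n + r)
  have d₄ := two_mul_finrank_restrictTotalDegree (K := K) r
  simp only [U] at hU
  nlinarith

theorem encard_commonZeros_le {F G : MvPolynomial (Fin 2) K} (hFG : IsRelPrime F G) :
    {p : Fin 2 → K | eval p F = 0 ∧ eval p G = 0}.encard
      ≤ (F.totalDegree * G.totalDegree : ℕ) := by
  by_contra! h
  obtain ⟨p, hpF, hpG⟩ := Set.encard_pos.1 (zero_le.trans_lt h)
  have hF : F ≠ 0 := by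
    rintro rfl
    exact ((isRelPrime_zero_left.1 hFG).map (eval p)).ne_zero hpG
  have hG : G ≠ 0 := by
    rintro rfl
    exact ((isRelPrime_zero_right.1 hFG).map (eval p)).ne_zero hpF
  obtain ⟨t, ht, ht_card⟩ := Set.exists_subset_encard_eq (Order.add_one_le_of_lt h)
  have ht_fin : t.Finite := Set.finite_of_encard_eq_coe (by rw [ht_card]; norm_cast)
  rw [ht_fin.encard_eq_coe_toFinset_card] at ht_card
  have hle := card_le_totalDegree_mul_of_isRelPrime hFG hF hG
    fun p hp => ht (ht_fin.mem_toFinset.1 hp)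
  norm_cast at ht_card
  lia

end Bezout

section TorusBinomial

variable {σ K : Type*} [Field K]

/-- The binomial with exponents `u` and `v` that vanishes at the torus point `p`. -/
noncomputable def torusBinomial (p : σ → Kˣ) (u v : σ →₀ ℕ) : MvPolynomial σ K :=
  C (monomialChar v p : K) * monomial u 1 - C (monomialChar u p : K) * monomial v 1

theorem neg_torusBinomial (p : σ → Kˣ) (u v : σ →₀ ℕ) :
    -torusBinomial p u v = torusBinomial p v u :=
  neg_sub _ _

theorem torusBinomial_dvd_torusBinomial_add_nsmul (p : σ → Kˣ) (w α β : σ →₀ ℕ) (k : ℕ) :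
    torusBinomial p α β ∣ torusBinomial p (w + k • α) (w + k • β) := by
  have hpow := sub_dvd_pow_sub_pow (C (monomialChar β p : K) * monomial α 1)
    (C (monomialChar α p : K) * monomial β 1) k
  refine (hpow.mul_left (C (monomialChar w p : K) * monomial w 1)).trans (dvd_of_eq ?_)
  simp only [torusBinomial, monomialChar_add, monomialChar_nsmul, Units.val_mul,
    Units.val_pow_eq_pow_val, C_mul, C_pow, mul_pow, monomial_pow, one_pow, mul_sub]
  rw [← one_mul (1 : K), ← monomial_mul, ← monomial_mul, one_mul]
  ring

theorem dvd_of_dvd_torusBinomial {H F : MvPolynomial σ K} {p : σ → Kˣ} (v : σ →₀ ℕ)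
    (hpH : evalTorus p H = 0) (hF : ∀ u ∈ H.support, F ∣ torusBinomial p u v) : F ∣ H := by
  have key : C (monomialChar v p : K) * H =
      ∑ u ∈ H.support, C (coeff u H) * torusBinomial p u v := by
    have h₀ : ∑ u ∈ H.support, C (σ := σ) (coeff u H) * C (monomialChar u p : K) = 0 := by
      rw [H.as_sum, map_sum] at hpH
      simp only [evalTorus_monomial] at hpH
      rw [← C_0, ← hpH, map_sum]
      simp only [C_mul]
    conv_lhs => rw [H.as_sum]
    simp only [torusBinomial, mul_sub, Finset.sum_sub_distrib, ← mul_assoc,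
      ← Finset.sum_mul, h₀, zero_mul, sub_zero, Finset.mul_sum]
    refine Finset.sum_congr rfl fun u _ => ?_
    rw [mul_comm (C (coeff u H)), mul_assoc, C_mul_monomial (a := coeff u H), mul_one]
  rw [← ((monomialChar v p).isUnit.map C).dvd_mul_left, key]
  exact Finset.dvd_sum fun u hu => (hF u hu).mul_left _

end TorusBinomial

section CyclotomicFactor

variable {K : Type*} [Field K]

/-- `H` has a binomial factor `X ^ i - ρ * Y ^ j` or `X ^ i * Y ^ j - ρ` with `(i, j) ≠ (0, 0)` and
`ρ` a root of unity. -/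
def HasCyclotomicFactor (H : MvPolynomial (Fin 2) K) : Prop :=
  ∃ (i j : ℕ) (ρ : K), ¬ (i = 0 ∧ j = 0) ∧ (∃ n : ℕ, 1 ≤ n ∧ ρ ^ n = 1) ∧
    ((X 0 ^ i - C ρ * X 1 ^ j ∣ H) ∨ (X 0 ^ i * X 1 ^ j - C ρ ∣ H))

theorem HasCyclotomicFactor.of_dvd {F H : MvPolynomial (Fin 2) K} (hF : HasCyclotomicFactor F)
    (h : F ∣ H) : HasCyclotomicFactor H := by
  obtain ⟨i, j, ρ, hij, hρ, hdvd⟩ := hF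
  exact ⟨i, j, ρ, hij, hρ, hdvd.imp (·.trans h) (·.trans h)⟩

theorem exists_pow_eq_one_of_isOfFinOrder {x : Kˣ} (h : IsOfFinOrder x) :
    ∃ n : ℕ, 1 ≤ n ∧ (x : K) ^ n = 1 := by
  obtain ⟨n, hn, h⟩ := isOfFinOrder_iff_pow_eq_one.1 h
  exact ⟨n, hn, by rw [← Units.val_pow_eq_pow_val, h, Units.val_one]⟩

theorem hasCyclotomicFactor_torusBinomial {p : Fin 2 → Kˣ} (hp : IsOfFinOrder p)
    {α β : Fin 2 →₀ ℕ} (hαβ : α ≠ β) (hdisj : ∀ i, α i = 0 ∨ β i = 0) :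
    HasCyclotomicFactor (torusBinomial p α β) := by
  have isOfFinOrder_char (u) : IsOfFinOrder (monomialChar u p) := (monomialChar u).isOfFinOrder hp
  wlog hβ : β 0 = 0 generalizing α β
  · rw [← neg_torusBinomial]
    obtain h := this hαβ.symm (fun i => (hdisj i).symm) ((hdisj 0).resolve_right hβ)
    exact h.of_dvd (dvd_neg.2 dvd_rfl)
  have binomial_eq : torusBinomial p α β = C (monomialChar β p : K) * (X 0 ^ α 0 * X 1 ^ α 1
      - C ((monomialChar α p * (monomialChar β p)⁻¹ : Kˣ) : K) * X 1 ^ β 1) := by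
    have monomial_one (u : Fin 2 →₀ ℕ) : monomial u (1 : K) = X 0 ^ u 0 * X 1 ^ u 1 := by
      rw [monomial_eq, C_1, one_mul, Finsupp.prod_fintype _ _ fun _ => pow_zero _,
        Fin.prod_univ_two]
    rw [torusBinomial, monomial_one, monomial_one, hβ, pow_zero, one_mul, mul_sub, ← mul_assoc,
      ← mul_assoc, ← C_mul, ← Units.val_mul, mul_left_comm, mul_inv_cancel, mul_one]
  refine HasCyclotomicFactor.of_dvd ?_ (binomial_eq ▸ dvd_mul_left _ _)
  have hρ := exists_pow_eq_one_of_isOfFinOrder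
    ((isOfFinOrder_char α).mul (isOfFinOrder_char β).inv)
  rcases hdisj 1 with hα | hβ'
  · refine ⟨α 0, β 1, _, fun h => hαβ ?_, hρ, Or.inl (by rw [hα, pow_zero, mul_one])⟩
    exact Finsupp.ext (Fin.forall_fin_two.2 ⟨h.1.trans hβ.symm, hα.trans h.2.symm⟩)
  · refine ⟨α 0, α 1, _, fun h => hαβ ?_, hρ, Or.inr (by rw [hβ', pow_zero, mul_one])⟩
    exact Finsupp.ext (Fin.forall_fin_two.2 ⟨h.1.trans hβ.symm, h.2.trans hβ'.symm⟩)

end CyclotomicFactor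

section Collinear

theorem zpow_mul_sub_mul_eq_one {G : Type*} [CommGroup G] {x y : G} {a b c d : ℤ}
    (h₁ : x ^ a * y ^ b = 1) (h₂ : x ^ c * y ^ d = 1) : x ^ (a * d - b * c) = 1 := by
  have hxa : x ^ (a * d) = y ^ (-(b * d)) := by
    rw [zpow_mul, eq_inv_of_mul_eq_one_left h₁, inv_zpow', ← zpow_mul, mul_neg]
  have hxc : x ^ (b * c) = y ^ (-(b * d)) := by
    rw [mul_comm, zpow_mul, eq_inv_of_mul_eq_one_left h₂, inv_zpow', ← zpow_mul, mul_neg,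
      mul_comm d]
  rw [zpow_sub, hxa, hxc, mul_inv_cancel]

/-- Twice the signed area of the lattice triangle `w`, `u`, `v`; it vanishes precisely when the
three exponent vectors are collinear. -/
def latticeArea (w u v : Fin 2 →₀ ℕ) : ℤ :=
  ((u 0 : ℤ) - w 0) * ((v 1 : ℤ) - w 1) - ((u 1 : ℤ) - w 1) * ((v 0 : ℤ) - w 0)

variable {K : Type*} [Field K]

theorem zpow_sub_mul_zpow_sub_eq_one {w u : Fin 2 →₀ ℕ} {s : Fin 2 → Kˣ}
    (h : monomialChar u s = monomialChar w s) :
    s 0 ^ ((u 0 : ℤ) - w 0) * s 1 ^ ((u 1 : ℤ) - w 1) = 1 := by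
  simp only [monomialChar_apply, Finsupp.prod_fintype _ _ fun _ => pow_zero _,
    Fin.prod_univ_two] at h
  rw [zpow_sub, zpow_sub, mul_mul_mul_comm, ← mul_inv]
  simp only [zpow_natCast, h, mul_inv_cancel]

theorem zpow_latticeArea_eq_one {H : MvPolynomial (Fin 2) K} {w u v : Fin 2 →₀ ℕ}
    (hw : w ∈ H.support) (hu : u ∈ H.support) (hv : v ∈ H.support) {s : Fin 2 → Kˣ}
    (hs : s ∈ torusStab H) : s ^ latticeArea w u v = 1 := by
  have h₁ := zpow_sub_mul_zpow_sub_eq_one (mem_torusStab.1 hs u hu w hw)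
  have h₂ := zpow_sub_mul_zpow_sub_eq_one (mem_torusStab.1 hs v hv w hw)
  refine funext (Fin.forall_fin_two.2 ⟨zpow_mul_sub_mul_eq_one h₁ h₂, ?_⟩)
  rw [mul_comm] at h₁ h₂
  rw [Pi.one_apply, ← zpow_mul_sub_mul_eq_one h₂ h₁, Pi.pow_apply, latticeArea]
  congr 1
  ring

theorem finite_torusStab_of_latticeArea_ne_zero [IsAlgClosed K] [CharZero K]
    {H : MvPolynomial (Fin 2) K} {w u v : Fin 2 →₀ ℕ} (hw : w ∈ H.support) (hu : u ∈ H.support)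
    (hv : v ∈ H.support) (h : latticeArea w u v ≠ 0) : Finite (torusStab H) := by
  have : NeZero (latticeArea w u v).natAbs := ⟨Int.natAbs_ne_zero.2 h⟩
  have hle : torusStab H ≤ (powMonoidHom (latticeArea w u v).natAbs).ker := fun s hs =>
    MonoidHom.mem_ker.2 (pow_natAbs_eq_one.2 (zpow_latticeArea_eq_one hw hu hv hs))
  have : Finite (powMonoidHom (latticeArea w u v).natAbs : (Fin 2 → Kˣ) →* _).ker :=
    Nat.finite_of_card_ne_zero (by rw [card_ker_powMonoidHom_torus]; positivity)
  exact Finite.of_injective _ (Subgroup.inclusion_injective hle)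

theorem exists_eq_add_nsmul_of_sub_eq {α β u v : Fin 2 →₀ ℕ} (hdisj : ∀ i, α i = 0 ∨ β i = 0)
    {k : ℕ} (h : ∀ i, (u i : ℤ) - v i = k * ((α i : ℤ) - β i)) :
    ∃ w, u = w + k • α ∧ v = w + k • β := by
  have h' (i) : u i + k * β i = v i + k * α i := by
    zify
    linear_combination h i
  have hle : k • β ≤ v := fun i => by
    rw [Finsupp.smul_apply, smul_eq_mul]
    rcases hdisj i with h0 | h0
    · have := h' i
      rw [h0] at this
      lia
    · rw [h0]
      lia
  refine ⟨v - k • β, ?_, (tsub_add_cancel_of_le hle).symm⟩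
  ext i
  have := hle i
  have := h' i
  simp only [Finsupp.add_apply, Finsupp.tsub_apply, Finsupp.smul_apply, smul_eq_mul] at *
  lia

theorem exists_disjoint_sub_eq (a : Fin 2 → ℤ) :
    ∃ α β : Fin 2 →₀ ℕ, (∀ i, α i = 0 ∨ β i = 0) ∧ ∀ i, (α i : ℤ) - β i = a i := by
  refine ⟨Finsupp.equivFunOnFinite.symm fun i => (a i).toNat,
    Finsupp.equivFunOnFinite.symm fun i => (-a i).toNat, fun i => ?_, fun i => ?_⟩ <;>
  simp only [Finsupp.coe_equivFunOnFinite_symm] <;>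
  lia

theorem exists_primitive_direction {u v : Fin 2 →₀ ℕ} (huv : u ≠ v) :
    ∃ α β : Fin 2 →₀ ℕ, α ≠ β ∧ (∀ i, α i = 0 ∨ β i = 0) ∧
      ∀ w, latticeArea v u w = 0 → ∃ k : ℤ, ∀ i, (w i : ℤ) - v i = k * ((α i : ℤ) - β i) := by
  have hgcd : 0 < Int.gcd ((u 0 : ℤ) - v 0) ((u 1 : ℤ) - v 1) := by
    rw [Nat.pos_iff_ne_zero, Ne, Int.gcd_eq_zero_iff]
    exact fun h => huv (Finsupp.ext (Fin.forall_fin_two.2 ⟨by lia, by lia⟩))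
  obtain ⟨a, b, hab, ha, hb⟩ := Int.exists_gcd_one hgcd
  obtain ⟨x, y, hxy⟩ := Int.isCoprime_iff_gcd_eq_one.2 hab
  obtain ⟨α, β, hdisj, hsub⟩ := exists_disjoint_sub_eq ![a, b]
  have hsub₀ : (α 0 : ℤ) - β 0 = a := hsub 0
  have hsub₁ : (α 1 : ℤ) - β 1 = b := hsub 1
  refine ⟨α, β, ?_, hdisj, fun w hw => ?_⟩
  · rintro rfl
    rw [← hsub₀, ← hsub₁, sub_self, sub_self] at hxy
    lia
  · have hline : a * ((w 1 : ℤ) - v 1) = b * ((w 0 : ℤ) - v 0) := by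
      refine mul_left_cancel₀ (Int.natCast_ne_zero.2 hgcd.ne') ?_
      rw [latticeArea] at hw
      linear_combination hw - ((w 1 : ℤ) - v 1) * ha + ((w 0 : ℤ) - v 0) * hb
    refine ⟨x * ((w 0 : ℤ) - v 0) + y * ((w 1 : ℤ) - v 1), Fin.forall_fin_two.2 ⟨?_, ?_⟩⟩
    · rw [hsub₀]
      linear_combination (-y) * hline - ((w 0 : ℤ) - v 0) * hxy
    · rw [hsub₁]
      linear_combination x * hline - ((w 1 : ℤ) - v 1) * hxy

theorem finite_torusStab_of_not_hasCyclotomicFactor [IsAlgClosed K] [CharZero K]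
    {H : MvPolynomial (Fin 2) K} (hH : H ≠ 0) (hcyc : ¬ HasCyclotomicFactor H)
    {p : Fin 2 → Kˣ} (hp : IsOfFinOrder p) (hpH : evalTorus p H = 0) : Finite (torusStab H) := by
  by_contra hinf
  have collinear {w u v} (hw : w ∈ H.support) (hu : u ∈ H.support) (hv : v ∈ H.support) :
      latticeArea w u v = 0 := by
    by_contra h
    exact hinf (finite_torusStab_of_latticeArea_ne_zero hw hu hv h)
  obtain ⟨v, hv⟩ := support_nonempty.2 hH
  obtain ⟨u, hu, huv⟩ : ∃ u ∈ H.support, u ≠ v := by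
    by_contra! h
    rw [H.as_sum, Finset.eq_singleton_iff_unique_mem.2 ⟨hv, h⟩, Finset.sum_singleton,
      evalTorus_monomial] at hpH
    exact (mul_ne_zero (mem_support_iff.1 hv) (Units.ne_zero _)) hpH
  obtain ⟨α, β, hαβ, hdisj, hline⟩ := exists_primitive_direction huv
  refine hcyc ((hasCyclotomicFactor_torusBinomial hp hαβ hdisj).of_dvd
    (dvd_of_dvd_torusBinomial v hpH fun w hw => ?_))
  obtain ⟨k, hk⟩ := hline w (collinear hv hu hw)
  obtain ⟨k, rfl | rfl⟩ := k.eq_nat_or_neg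
  · obtain ⟨x, rfl, rfl⟩ := exists_eq_add_nsmul_of_sub_eq hdisj hk
    exact torusBinomial_dvd_torusBinomial_add_nsmul p x α β k
  · obtain ⟨x, rfl, rfl⟩ := exists_eq_add_nsmul_of_sub_eq (u := v) (v := w) hdisj (k := k)
      fun i => by linear_combination -hk i
    rw [← neg_torusBinomial p (x + k • α), dvd_neg]
    exact torusBinomial_dvd_torusBinomial_add_nsmul p x α β k

end Collinear

section CurveBound

variable {K : Type*} [Field K]

/-- The points of finite order of the two-dimensional torus at which `H` vanishes. -/
def torsionZeros (H : MvPolynomial (Fin 2) K) : Set (Fin 2 → Kˣ) :=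
  {p | IsOfFinOrder p ∧ evalTorus p H = 0}

theorem encard_torus_commonZeros_le {F G : MvPolynomial (Fin 2) K} (hF : Irreducible F)
    (hFG : ¬ F ∣ G) : {p : Fin 2 → Kˣ | evalTorus p F = 0 ∧ evalTorus p G = 0}.encard
      ≤ (F.totalDegree * G.totalDegree : ℕ) := by
  refine le_trans ?_ (encard_commonZeros_le (hF.isRelPrime_iff_not_dvd.2 hFG))
  have val_injective : Function.Injective fun (p : Fin 2 → Kˣ) i => (p i : K) :=
    fun p q h => funext fun i => Units.ext (congrFun h i)
  rw [← val_injective.encard_image]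
  exact Set.encard_le_encard (Set.image_subset_iff.2 fun p hp => hp)

theorem encard_coset_rescale_zeros_le {H H' : MvPolynomial (Fin 2) K} (hH : Irreducible H)
    (hsupp : H'.support = H.support) (k : ℕ) {S : Finset ((Fin 2 → Kˣ) ⧸ torusStab H)}
    (hndvd : ∀ s : Fin 2 → Kˣ, (s : (Fin 2 → Kˣ) ⧸ torusStab H) ∈ S →
      ¬ H ∣ expand k (rescale s H')) :
    (⋃ s ∈ {s : Fin 2 → Kˣ | (s : (Fin 2 → Kˣ) ⧸ torusStab H) ∈ S},
      {p | evalTorus p H = 0 ∧ evalTorus (s * p ^ k) H' = 0}).encard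
      ≤ S.card * (H.totalDegree * (H.totalDegree * k) : ℕ) := by
  refine encard_iUnion_coset_le (fun s t hst => ?_) fun s hs => ?_
  · ext p
    have hst' : t⁻¹ * s ∈ torusStab H' := by
      rw [torusStab_congr hsupp]
      exact QuotientGroup.eq.1 hst.symm
    have h := evalTorus_mul_eq_zero_of_mem_torusStab hst' (t * p ^ k)
    rw [mul_assoc, mul_left_comm s, inv_mul_cancel_left] at h
    rw [Set.mem_ofPred_eq, Set.mem_ofPred_eq, h]
  · have hdeg : (expand k (rescale s H')).totalDegree = H.totalDegree * k := by
      rw [totalDegree_expand, totalDegree_rescale, totalDegree, hsupp, totalDegree]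
    have h := encard_torus_commonZeros_le hH (hndvd s hs)
    simpa only [hdeg, evalTorus_expand, evalTorus_rescale] using h

theorem encard_torsionZeros_le_of_cover [IsAlgClosed K] [CharZero K]
    {H H' : MvPolynomial (Fin 2) K} (hH : Irreducible H) [Finite (torusStab H)]
    (hsupp : H'.support = H.support) {k : ℕ} (hk : k ≤ 2)
    (hndvd : ∀ s ∈ sqrtStab H, ¬ H ∣ expand k (rescale s H'))
    (hcover : ∀ p ∈ torsionZeros H,
      (∃ s ∈ sqrtStab H, s ∉ torusStab H ∧ evalTorus (s * p) H = 0) ∨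
        ∃ s ∈ sqrtStab H, evalTorus (s * p ^ k) H' = 0) :
    (torsionZeros H).encard ≤ (11 * H.totalDegree ^ 2 : ℕ) := by
  classical
  have hindex := relIndex_torusStab_sqrtStab H
  obtain ⟨S, hS_card, hS⟩ := exists_finset_quotient_of_relIndex_ne_zero (torusStab_le_sqrtStab H)
    (by rw [hindex]; positivity)
  rw [hindex, Fintype.card_fin] at hS_card
  have hS_erase (s : Fin 2 → Kˣ) : (s : (Fin 2 → Kˣ) ⧸ torusStab H) ∈ S.erase 1 ↔
      s ∉ torusStab H ∧ s ∈ sqrtStab H := by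
    rw [Finset.mem_erase, hS, Ne, QuotientGroup.eq_one_iff]
  have hS_erase_card : (S.erase 1).card = 3 := by
    have one_mem_S : (1 : (Fin 2 → Kˣ) ⧸ torusStab H) ∈ S := (hS 1).2 (one_mem _)
    rw [Finset.card_erase_of_mem one_mem_S, hS_card]
    rfl
  have bound_translates := encard_coset_rescale_zeros_le hH rfl 1 (S := S.erase 1) fun s hs h =>
    ((hS_erase s).1 hs).1 (mem_torusStab_of_dvd_rescale hH.ne_zero (by rwa [expand_one_apply] at h))
  have bound_conjugates := encard_coset_rescale_zeros_le hH hsupp k fun s hs =>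
    hndvd s ((hS s).1 hs)
  refine (Set.encard_le_encard fun p hp => ?_).trans ((Set.encard_union_le _ _).trans
    ((add_le_add bound_translates bound_conjugates).trans ?_))
  · rcases hcover p hp with ⟨s, hs, hsA, hz⟩ | ⟨s, hs, hz⟩
    · exact Or.inl (Set.mem_biUnion ((hS_erase s).2 ⟨hsA, hs⟩) ⟨hp.2, by rwa [pow_one]⟩)
    · exact Or.inr (Set.mem_biUnion ((hS s).2 hs) ⟨hp.2, hz⟩)
  · rw [hS_card, hS_erase_card]
    norm_cast
    nlinarith [Nat.mul_le_mul_left (H.totalDegree * H.totalDegree) hk]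

end CurveBound

section TwoAdic

theorem coprime_add_two_pow_mul {k j R : ℕ} (hk : k ∣ 2) (hodd : Odd (k + 2 ^ j)) (hR : Odd R)
    (b : ℕ) : (k + 2 ^ j * R).Coprime (2 ^ b * R) := by
  refine Nat.Coprime.mul_right (Nat.Coprime.pow_right _ (Nat.coprime_two_right.2 ?_)) ?_
  · rw [Nat.odd_add, Nat.even_mul, or_iff_left (Nat.not_even_iff_odd.2 hR)]
    exact Nat.odd_add.1 hodd
  · rw [Nat.coprime_add_mul_right_left]
    exact Nat.Coprime.coprime_dvd_left hk (Nat.coprime_two_left.2 hR)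

theorem exists_odd_pow_eq_one {G : Type*} [Group G] {p : G} (hp : IsOfFinOrder p) {N : ℕ}
    (hN : Odd N) (m : ℕ) : ∃ R b, Odd R ∧ N ∣ R ∧ m ≤ b ∧ p ^ (2 ^ b * R) = 1 := by
  obtain ⟨a, n, hn, h⟩ := Nat.exists_eq_two_pow_mul_odd hp.orderOf_pos.ne'
  refine ⟨n * N, a + m, hn.mul hN, dvd_mul_left N n, Nat.le_add_left m a,
    orderOf_dvd_iff_pow_eq_one.1 ?_⟩
  rw [h]
  exact mul_dvd_mul (pow_dvd_pow 2 (Nat.le_add_right a m)) (dvd_mul_right n N)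

theorem modEq_of_odd_of_dvd {N R : ℕ} (hR : Odd R) (hN : N ∣ R) (k m : ℕ) :
    k + 2 ^ m * R ≡ k + 2 ^ m * N [MOD 2 ^ (m + 1) * N] := by
  obtain ⟨w, rfl⟩ := hN
  obtain ⟨j, rfl⟩ := (Nat.odd_mul.1 hR).2
  refine Nat.ModEq.add_left k ?_
  rw [show 2 ^ m * (N * (2 * j + 1)) = 2 ^ m * N + 2 ^ (m + 1) * N * j by ring]
  exact Nat.add_modulus_mul_modEq_iff.2 rfl

variable {K : Type*} [Field K] [IsAlgClosed K] [CharZero K] {H : MvPolynomial (Fin 2) K}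
  {m N : ℕ}

theorem exists_sqrtStab_translate_of_pow_notMem
    (hcoeff : ∀ u, coeff u H ∈ rootField K (2 ^ m * N)) (hm : m ≠ 0) {R b : ℕ} (hR : Odd R)
    (hNR : N ∣ R) (hmb : m ≤ b) {p : Fin 2 → Kˣ} (hp : p ^ (2 ^ b * R) = 1)
    (hpH : evalTorus p H = 0) (hpA : p ^ (2 ^ m * R) ∉ torusStab H) :
    ∃ s ∈ sqrtStab H, s ∉ torusStab H ∧ evalTorus (s * p) H = 0 := by
  classical
  obtain ⟨j, hmj, hj, hj'⟩ : ∃ j ≥ m, p ^ (2 ^ j * R) ∉ torusStab H ∧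
      p ^ (2 ^ (j + 1) * R) ∈ torusStab H := by
    by_contra! h
    have hall : ∀ j ≥ m, p ^ (2 ^ j * R) ∉ torusStab H := Nat.le_induction hpA h
    exact hall b hmb (hp ▸ one_mem _)
  refine ⟨p ^ (2 ^ j * R), ?_, hj, ?_⟩
  · rw [mem_sqrtStab, ← pow_mul, mul_right_comm, ← pow_succ]
    exact hj'
  have hdvd : 2 ^ m * N ∣ 2 ^ j * R := mul_dvd_mul (pow_dvd_pow 2 hmj) hNR
  have hcop : (1 + 2 ^ j * R).Coprime (2 ^ b * R) :=
    coprime_add_two_pow_mul (one_dvd 2)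
      (odd_one.add_even (even_two.pow_of_ne_zero (Nat.ne_of_gt (by lia)))) hR b
  have hpow : PowOnRoots (RingEquiv.refl K) (2 ^ m * N) 1 := fun z _ => (pow_one z).symm
  have h := evalTorus_pow_map_eq_zero hcoeff (mul_ne_zero (by positivity) hR.pos.ne')
    (mul_dvd_mul (pow_dvd_pow 2 hmb) hNR) hpow
    (by simpa using (Nat.modEq_zero_iff_dvd.2 hdvd).add_left 1) hcop hp hpH
  have map_refl : map ((RingEquiv.refl K : K ≃+* K) : K →+* K) H = H := map_id H
  rwa [pow_add, pow_one, mul_comm, map_refl] at h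

theorem evalTorus_pow_mul_pow_map_eq_zero
    (hcoeff : ∀ u, coeff u H ∈ rootField K (2 ^ (m + 1) * N)) {k : ℕ} (hk : k ∣ 2)
    (hodd : Odd (k + 2 ^ m)) {τ : K ≃+* K}
    (hτ : PowOnRoots τ (2 ^ (m + 1) * N) (k + 2 ^ m * N)) {R b : ℕ} (hR : Odd R)
    (hNR : N ∣ R) (hmb : m + 1 ≤ b) {p : Fin 2 → Kˣ} (hp : p ^ (2 ^ b * R) = 1)
    (hpH : evalTorus p H = 0) :
    evalTorus (p ^ (2 ^ m * R) * p ^ k) (map (τ : K →+* K) H) = 0 := by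
  rw [← pow_add, add_comm]
  exact evalTorus_pow_map_eq_zero hcoeff (mul_ne_zero (by positivity) hR.pos.ne')
    (mul_dvd_mul (pow_dvd_pow 2 hmb) hNR) hτ (modEq_of_odd_of_dvd hR hNR k m)
    (coprime_add_two_pow_mul hk hodd hR b) hp hpH

theorem encard_torsionZeros_le_of_not_dvd_conjugate (hH : Irreducible H) [Finite (torusStab H)]
    (hN : Odd N) (hcoeff : ∀ u, coeff u H ∈ rootField K (2 ^ (m + 1) * N)) {k : ℕ} (hk : k ∣ 2)
    (hodd : Odd (k + 2 ^ m)) {τ : K ≃+* K}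
    (hτ : PowOnRoots τ (2 ^ (m + 1) * N) (k + 2 ^ m * N))
    (hndvd : ∀ s ∈ sqrtStab H, ¬ H ∣ expand k (rescale s (map (τ : K →+* K) H))) :
    (torsionZeros H).encard ≤ (11 * H.totalDegree ^ 2 : ℕ) := by
  refine encard_torsionZeros_le_of_cover hH (support_map_of_injective _ τ.injective)
    (Nat.le_of_dvd two_pos hk) hndvd fun p hp => ?_
  obtain ⟨R, b, hR, hNR, hmb, hpR⟩ := exists_odd_pow_eq_one hp.1 hN (m + 1)
  by_cases hpA : p ^ (2 ^ (m + 1) * R) ∈ torusStab H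
  · refine Or.inr ⟨p ^ (2 ^ m * R), ?_,
      evalTorus_pow_mul_pow_map_eq_zero hcoeff hk hodd hτ hR hNR hmb hpR hp.2⟩
    rwa [mem_sqrtStab, ← pow_mul, mul_right_comm, ← pow_succ]
  · exact Or.inl (exists_sqrtStab_translate_of_pow_notMem hcoeff m.succ_ne_zero hR hNR hmb hpR
      hp.2 hpA)

theorem encard_torsionZeros_le_of_coeff_mem_rootField_two_mul (hH : Irreducible H)
    [Finite (torusStab H)] (hN : Odd N) (hcoeff : ∀ u, coeff u H ∈ rootField K (2 * N)) :
    (torsionZeros H).encard ≤ (11 * H.totalDegree ^ 2 : ℕ) := by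
  have hodd : Odd (2 + 2 ^ 0) := by decide
  obtain ⟨τ, hτ⟩ := exists_powOnRoots K (M := 2 ^ (0 + 1) * N) (e := 2 + 2 ^ 0 * N)
    (mul_ne_zero (by positivity) hN.pos.ne') (coprime_add_two_pow_mul dvd_rfl hodd hN _)
  exact encard_torsionZeros_le_of_not_dvd_conjugate hH hN (by simpa using hcoeff) dvd_rfl hodd hτ
    fun s _ => not_dvd_expand_two_rescale hH (support_map_of_injective _ τ.injective) s

end TwoAdic

section Rescaling

variable {K : Type*} [Field K]

theorem support_C_mul {σ : Type*} {c : K} (hc : c ≠ 0) (H : MvPolynomial σ K) :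
    (C c * H).support = H.support := by
  rw [C_mul', support_smul_eq hc]

theorem totalDegree_C_mul {σ : Type*} {c : K} (hc : c ≠ 0) (H : MvPolynomial σ K) :
    (C c * H).totalDegree = H.totalDegree := by
  rw [totalDegree, totalDegree, support_C_mul hc]

theorem irreducible_C_mul {σ : Type*} {c : K} (hc : c ≠ 0) {H : MvPolynomial σ K} :
    Irreducible (C c * H) ↔ Irreducible H :=
  irreducible_isUnit_mul ((isUnit_iff_ne_zero.2 hc).map C)

theorem torsionZeros_C_mul {c : K} (hc : c ≠ 0) (H : MvPolynomial (Fin 2) K) :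
    torsionZeros (C c * H) = torsionZeros H := by
  ext p
  simp only [torsionZeros, Set.mem_ofPred_eq, map_mul, eval_C, mul_eq_zero, hc, false_or]

theorem encard_torsionZeros_rescale {t : Fin 2 → Kˣ} (ht : IsOfFinOrder t)
    (H : MvPolynomial (Fin 2) K) :
    (torsionZeros (rescale t H)).encard = (torsionZeros H).encard := by
  rw [← Set.encard_preimage_of_bijective (Group.mulLeft_bijective t) (torsionZeros H)]
  congr 1
  ext p
  have isOfFinOrder_iff : IsOfFinOrder (t * p) ↔ IsOfFinOrder p :=
    ⟨fun h => by simpa using ht.inv.mul h, ht.mul⟩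
  simp only [torsionZeros, Set.mem_preimage, Set.mem_ofPred_eq, evalTorus_rescale, isOfFinOrder_iff]

end Rescaling

section Descent

variable {K : Type*} [Field K] {H : MvPolynomial (Fin 2) K} {u₀ : Fin 2 →₀ ℕ}

theorem monomialChar_mul_map_coeff_of_dvd {τ : K ≃+* K} {s : Fin 2 → Kˣ} (h₀ : coeff u₀ H = 1)
    (hdvd : H ∣ rescale s (map (τ : K →+* K) H)) (u : Fin 2 →₀ ℕ) :
    monomialChar u s * τ (coeff u H) = monomialChar u₀ s * coeff u H := by
  have hH : H ≠ 0 := by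
    rintro rfl
    exact zero_ne_one h₀
  have conjugate_ne_zero : rescale s (map (τ : K →+* K) H) ≠ 0 :=
    (map_ne_zero_iff _ (rescale s).injective).2
      ((map_ne_zero_iff _ (map_injective _ τ.injective)).2 hH)
  obtain ⟨c, -, hc⟩ := exists_eq_C_mul_of_dvd_of_totalDegree_le conjugate_ne_zero hdvd
    (by rw [totalDegree_rescale, totalDegree_map_ringEquiv])
  have coeff_eq (v) : monomialChar v s * τ (coeff v H) = c * coeff v H := by
    rw [← coeff_C_mul, ← hc, coeff_rescale, coeff_map, RingEquiv.coe_toRingHom]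
  have hc₀ : (monomialChar u₀ s : K) = c := by
    simpa only [h₀, map_one, mul_one] using coeff_eq u₀
  rw [coeff_eq, hc₀]

theorem mul_mem_rootField_of_pow_two_pow_eq [IsAlgClosed K] [CharZero K] {m N : ℕ} (hN : Odd N)
    {τ : K ≃+* K} (hτ : PowOnRoots τ (2 ^ (m + 1) * N) (1 + 2 ^ m * N)) {w r x : K}
    (hr : r ^ 2 = 1) (hw : w ^ 2 ^ m = r) (hx : x ∈ rootField K (2 ^ (m + 1) * N))
    (hτx : r * τ x = x) : w * x ∈ rootField K (2 ^ m * N) := by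
  have two_mul_level : 2 ^ (m + 1) * N = 2 * (2 ^ m * N) := by ring
  have w_pow : w ^ (2 ^ (m + 1) * N) = 1 := by
    rw [pow_succ, pow_mul, pow_mul, hw, hr, one_pow]
  have map_w : τ w = w * r := by
    obtain ⟨j, rfl⟩ := hN
    rw [hτ w w_pow, pow_add, pow_one, pow_mul, hw, pow_succ, pow_mul, hr, one_pow, one_mul]
  have level_ne_zero : 2 ^ m * N ≠ 0 := mul_ne_zero (by positivity) hN.pos.ne'
  rw [two_mul_level] at w_pow hx hτ
  refine mem_rootField_of_map_eq_self level_ne_zero hτ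
    (mul_mem (mem_rootField_of_pow_eq_one w_pow) hx) ?_
  rw [map_mul, map_w, mul_assoc, hτx]

theorem coeff_normalized_rescale_mem_rootField [IsAlgClosed K] [CharZero K] {m N : ℕ} (hN : Odd N)
    (h₀ : coeff u₀ H = 1) (hcoeff : ∀ u, coeff u H ∈ rootField K (2 ^ (m + 1) * N))
    {τ : K ≃+* K} (hτ : PowOnRoots τ (2 ^ (m + 1) * N) (1 + 2 ^ m * N)) {t : Fin 2 → Kˣ}
    (ht : t ^ 2 ^ m ∈ sqrtStab H) (hdvd : H ∣ rescale (t ^ 2 ^ m) (map (τ : K →+* K) H))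
    (u : Fin 2 →₀ ℕ) :
    coeff u (C (monomialChar u₀ t : K)⁻¹ * rescale t H) ∈ rootField K (2 ^ m * N) := by
  set w : Kˣ := monomialChar u t / monomialChar u₀ t with hw
  have coeff_eq : coeff u (C (monomialChar u₀ t : K)⁻¹ * rescale t H) = w * coeff u H := by
    rw [coeff_C_mul, coeff_rescale, hw, Units.val_div_eq_div_val, div_eq_inv_mul, mul_assoc]
  by_cases hu : u ∈ H.support
  · have hu₀ : u₀ ∈ H.support := mem_support_iff.2 (h₀ ▸ one_ne_zero)
    have sq_eq_one : ((w : K) ^ 2 ^ m) ^ 2 = 1 := by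
      rw [← Units.val_pow_eq_pow_val, ← Units.val_pow_eq_pow_val, hw, div_pow, div_pow,
        ← map_pow, ← map_pow, ← map_pow, ← map_pow,
        mem_torusStab.1 (mem_sqrtStab.1 ht) u hu u₀ hu₀, div_self', Units.val_one]
    rw [coeff_eq]
    refine mul_mem_rootField_of_pow_two_pow_eq hN hτ sq_eq_one rfl (hcoeff u) ?_
    have h := monomialChar_mul_map_coeff_of_dvd h₀ hdvd u
    rw [← Units.val_pow_eq_pow_val, hw, div_pow, ← map_pow, ← map_pow, Units.val_div_eq_div_val,
      div_mul_eq_mul_div, h, mul_div_cancel_left₀ _ (Units.ne_zero _)]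
  · rw [coeff_eq, notMem_support_iff.1 hu, mul_zero]
    exact zero_mem _

theorem encard_torsionZeros_le_of_coeff_mem_rootField [IsAlgClosed K] [CharZero K] {N : ℕ}
    (hN : Odd N) {m : ℕ} (hm : 1 ≤ m) (hH : Irreducible H) [Finite (torusStab H)]
    (h₀ : coeff u₀ H = 1) (hcoeff : ∀ u, coeff u H ∈ rootField K (2 ^ m * N)) :
    (torsionZeros H).encard ≤ (11 * H.totalDegree ^ 2 : ℕ) := by
  induction m, hm using Nat.le_induction generalizing H with
  | base => exact encard_torsionZeros_le_of_coeff_mem_rootField_two_mul hH hN hcoeff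
  | succ m hm ih =>
    have hodd : Odd (1 + 2 ^ m) := odd_one.add_even (even_two.pow_of_ne_zero (by lia))
    obtain ⟨τ, hτ⟩ := exists_powOnRoots K (M := 2 ^ (m + 1) * N)
      (mul_ne_zero (by positivity) hN.pos.ne') (coprime_add_two_pow_mul (one_dvd 2) hodd hN _)
    by_cases hdvd : ∃ s ∈ sqrtStab H, H ∣ rescale s (map (τ : K →+* K) H)
    · obtain ⟨s, hs, hdvd⟩ := hdvd
      obtain ⟨t, rfl⟩ :=
        powMonoidHom_torus_surjective (Fin 2) K (pow_ne_zero m two_ne_zero) s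
      have t_torsion : IsOfFinOrder t := by
        have h := (torusStab H).subtype.isOfFinOrder (isOfFinOrder_of_finite ⟨_, mem_sqrtStab.1 hs⟩)
        exact (h.of_pow two_ne_zero).of_pow (pow_ne_zero m two_ne_zero)
      have hc : (monomialChar u₀ t : K)⁻¹ ≠ 0 := inv_ne_zero (Units.ne_zero _)
      have support_eq : (C (monomialChar u₀ t : K)⁻¹ * rescale t H).support = H.support := by
        rw [support_C_mul hc, support_rescale]
      have : Finite (torusStab (C (monomialChar u₀ t : K)⁻¹ * rescale t H)) := by
        rwa [torusStab_congr support_eq]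
      have h := ih ((irreducible_C_mul hc).2 ((irreducible_rescale t).2 hH))
        (by rw [coeff_C_mul, coeff_rescale, h₀, mul_one, inv_mul_cancel₀ (Units.ne_zero _)])
        (coeff_normalized_rescale_mem_rootField hN h₀ hcoeff hτ hs hdvd)
      rwa [torsionZeros_C_mul hc, encard_torsionZeros_rescale t_torsion, totalDegree_C_mul hc,
        totalDegree_rescale] at h
    · push Not at hdvd
      exact encard_torsionZeros_le_of_not_dvd_conjugate hH hN hcoeff (one_dvd 2) hodd hτ
        fun s hs => by simpa only [expand_one_apply] using hdvd s hs

end Descent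

section Projection

theorem eval_addMonoidAlgebraMap {L A σ : Type*} [CommRing L] [CommRing A] [Algebra L A]
    (φ : A →ₗ[L] L) (x : σ → L) (H : MvPolynomial σ A) :
    eval x (AddMonoidAlgebra.map φ.toAddMonoidHom H : MvPolynomial σ L) =
      φ (eval (fun i => algebraMap L A (x i)) H) := by
  induction H using MvPolynomial.induction_on' with
  | monomial u a =>
    have map_monomial : (AddMonoidAlgebra.map φ.toAddMonoidHom (monomial u a) : MvPolynomial σ L) =
      monomial u (φ a) := AddMonoidAlgebra.map_single ..
    have prod_eq : (u.prod fun i k => algebraMap L A (x i) ^ k) =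
        algebraMap L A (u.prod fun i k => x i ^ k) := by
      simp only [Finsupp.prod, map_prod, map_pow]
    rw [map_monomial, eval_monomial, eval_monomial, prod_eq, mul_comm a, ← Algebra.smul_def,
      map_smul, smul_eq_mul, mul_comm]
  | add F G hF hG =>
    rw [map_add, map_add, ← hF, ← hG, ← map_add]
    exact congrArg _ (AddMonoidAlgebra.map_add ..)

variable {K : Type*} [Field K] {L : Subfield K}

theorem not_dvd_map_subtype_of_coeff_notMem {σ : Type*} {H : MvPolynomial σ K} {u₀ u : σ →₀ ℕ}
    (h₀ : coeff u₀ H = 1) (hu : coeff u H ∉ L) {F : MvPolynomial σ L} (hF : F ≠ 0)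
    (hdeg : F.totalDegree ≤ H.totalDegree) : ¬ H ∣ map L.subtype F := by
  intro hdvd
  obtain ⟨c, hc, h⟩ := exists_eq_C_mul_of_dvd_of_totalDegree_le
    ((map_ne_zero_iff _ (map_injective _ L.subtype_injective)).2 hF) hdvd
    ((Finset.sup_mono (support_map_subset _ _)).trans hdeg)
  have mul_mem_L (v) : c * coeff v H ∈ L := by
    rw [← coeff_C_mul, ← h, coeff_map]
    exact (coeff v F).2
  have hcL : c ∈ L := by simpa only [h₀, mul_one] using mul_mem_L u₀
  exact hu (by simpa only [inv_mul_cancel_left₀ hc] using mul_mem (inv_mem hcL) (mul_mem_L u))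

theorem encard_torsionZeros_le_of_coeff_notMem (hL : ∀ z : K, IsOfFinOrder z → z ∈ L)
    {H : MvPolynomial (Fin 2) K} (hH : Irreducible H) {u₀ u : Fin 2 →₀ ℕ}
    (h₀ : coeff u₀ H = 1) (hu : coeff u H ∉ L) :
    (torsionZeros H).encard ≤ (H.totalDegree ^ 2 : ℕ) := by
  obtain ⟨φ, hφ⟩ := LinearMap.exists_leftInverse_of_injective (Algebra.linearMap L K)
    (LinearMap.ker_eq_bot.2 (algebraMap L K).injective)
  have φ_one : φ 1 = 1 := by simpa using LinearMap.congr_fun hφ 1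
  let F : MvPolynomial (Fin 2) L := AddMonoidAlgebra.map φ.toAddMonoidHom H
  have coeff_F (v) : coeff v F = φ (coeff v H) := coeff_addMonoidAlgebraMap ..
  have F_ne_zero : F ≠ 0 := fun h => by simpa [h, h₀, φ_one] using coeff_F u₀
  have totalDegree_le : F.totalDegree ≤ H.totalDegree := by
    refine Finset.sup_mono fun v hv => mem_support_iff.2 fun h => mem_support_iff.1 hv ?_
    rw [coeff_F, h, map_zero]
  have zeros_subset : torsionZeros H ⊆
      {p | evalTorus p H = 0 ∧ evalTorus p (map L.subtype F) = 0} := by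
    refine fun p hp => ⟨hp.2, ?_⟩
    have coord_mem (i) : (p i : K) ∈ L :=
      hL _ ((Units.coeHom K).isOfFinOrder ((Pi.evalMonoidHom _ i).isOfFinOrder hp.1))
    have eval_F : eval (fun i => ⟨p i, coord_mem i⟩) F = φ (evalTorus p H) :=
      eval_addMonoidAlgebraMap φ _ H
    rw [hp.2, map_zero] at eval_F
    have h := map_eval L.subtype (fun i => ⟨p i, coord_mem i⟩) F
    rw [eval_F, map_zero] at h
    exact h.symm
  refine (Set.encard_le_encard zeros_subset).trans ((encard_torus_commonZeros_le hH
    (not_dvd_map_subtype_of_coeff_notMem h₀ hu F_ne_zero totalDegree_le)).trans ?_)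
  rw [sq]
  exact_mod_cast Nat.mul_le_mul_left _
    ((Finset.sup_mono (support_map_subset L.subtype F)).trans totalDegree_le)

end Projection

section TorsionBound

variable {K : Type*} [Field K] [CharZero K] {H : MvPolynomial (Fin 2) K}

theorem exists_odd_forall_coeff_mem_rootField (h : ∀ u, coeff u H ∈ cyclotomicSubfield K) :
    ∃ m ≥ 1, ∃ N, Odd N ∧ ∀ u, coeff u H ∈ rootField K (2 ^ m * N) := by
  classical
  obtain ⟨M, hM, hcoeff⟩ := exists_rootField_of_finset (H.support.image fun u => coeff u H)
    (Finset.forall_mem_image.2 fun u _ => h u)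
  obtain ⟨a, N, hN, rfl⟩ := Nat.exists_eq_two_pow_mul_odd hM
  refine ⟨a + 1, Nat.le_add_left 1 a, N, hN, fun u => ?_⟩
  by_cases hu : u ∈ H.support
  · exact rootField_mono (mul_dvd_mul_right (pow_dvd_pow 2 a.le_succ) N)
      (hcoeff _ (Finset.mem_image_of_mem _ hu))
  · rw [notMem_support_iff.1 hu]
    exact zero_mem _

variable [IsAlgClosed K]

theorem encard_torsionZeros_le_of_coeff_eq_one (hH : Irreducible H) [Finite (torusStab H)]
    {u₀ : Fin 2 →₀ ℕ} (h₀ : coeff u₀ H = 1) :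
    (torsionZeros H).encard ≤ (11 * H.totalDegree ^ 2 : ℕ) := by
  by_cases hcoeff : ∀ u, coeff u H ∈ cyclotomicSubfield K
  · obtain ⟨m, hm, N, hN, hcoeff⟩ := exists_odd_forall_coeff_mem_rootField hcoeff
    exact encard_torsionZeros_le_of_coeff_mem_rootField hN hm hH h₀ hcoeff
  · push Not at hcoeff
    obtain ⟨u, hu⟩ := hcoeff
    refine (encard_torsionZeros_le_of_coeff_notMem (L := (cyclotomicSubfield K).toSubfield)
      (fun _ => mem_cyclotomicSubfield_of_isOfFinOrder) hH h₀ hu).trans ?_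
    exact_mod_cast Nat.le_mul_of_pos_left _ (by lia)

theorem encard_torsionZeros_le_of_irreducible (hH : Irreducible H)
    (hcyc : ¬ HasCyclotomicFactor H) :
    (torsionZeros H).encard ≤ (11 * H.totalDegree ^ 2 : ℕ) := by
  obtain h | ⟨p, hp⟩ := (torsionZeros H).eq_empty_or_nonempty
  · rw [h, Set.encard_empty]
    exact zero_le
  have := finite_torusStab_of_not_hasCyclotomicFactor hH.ne_zero hcyc hp.1 hp.2
  obtain ⟨u₀, hu₀⟩ := exists_coeff_ne_zero hH.ne_zero
  have hc : (coeff u₀ H)⁻¹ ≠ 0 := inv_ne_zero hu₀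
  have : Finite (torusStab (C (coeff u₀ H)⁻¹ * H)) := by rwa [torusStab_congr (support_C_mul hc H)]
  have h := encard_torsionZeros_le_of_coeff_eq_one ((irreducible_C_mul hc).2 hH) (u₀ := u₀)
    (by rw [coeff_C_mul, inv_mul_cancel₀ hu₀])
  rwa [torsionZeros_C_mul hc, totalDegree_C_mul hc] at h

theorem encard_torsionZeros_le (hH : H ≠ 0) (hcyc : ¬ HasCyclotomicFactor H) :
    (torsionZeros H).encard ≤ (11 * H.totalDegree ^ 2 : ℕ) := by
  induction H using WfDvdMonoid.induction_on_irreducible with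
  | zero => exact absurd rfl hH
  | unit F hF =>
    have : torsionZeros F = ∅ :=
      Set.eq_empty_of_forall_notMem fun p hp => (hF.map (evalTorus p)).ne_zero hp.2
    rw [this, Set.encard_empty]
    exact zero_le
  | mul G F hG hF ih =>
    have hFbound := encard_torsionZeros_le_of_irreducible hF
      fun h => hcyc (h.of_dvd (dvd_mul_right F G))
    have hGbound := ih hG fun h => hcyc (h.of_dvd (dvd_mul_left G F))
    have zeros_subset : torsionZeros (F * G) ⊆ torsionZeros F ∪ torsionZeros G := by
      rintro p ⟨hp, hpFG⟩
      rw [map_mul, mul_eq_zero] at hpFG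
      exact hpFG.imp (⟨hp, ·⟩) (⟨hp, ·⟩)
    refine (Set.encard_le_encard zeros_subset).trans ((Set.encard_union_le _ _).trans
      ((add_le_add hFbound hGbound).trans ?_))
    rw [totalDegree_mul_of_isDomain hF.ne_zero hG]
    norm_cast
    nlinarith [Nat.zero_le (F.totalDegree * G.totalDegree)]

end TorsionBound

section RootsOfUnityPairs

variable {K : Type*} [Field K]

/-- The pairs of roots of unity at which `H` vanishes. -/
def rootOfUnityZeros (H : MvPolynomial (Fin 2) K) : Set (K × K) :=
  {p | (∃ n : ℕ, 1 ≤ n ∧ p.1 ^ n = 1) ∧ (∃ n : ℕ, 1 ≤ n ∧ p.2 ^ n = 1) ∧ eval ![p.1, p.2] H = 0}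

theorem encard_rootOfUnityZeros_le (H : MvPolynomial (Fin 2) K) :
    (rootOfUnityZeros H).encard ≤ (torsionZeros H).encard := by
  refine (Set.encard_le_encard ?_).trans (Set.encard_image_le (fun p => (↑(p 0), ↑(p 1))) _)
  rintro ⟨x, y⟩ ⟨⟨n, hn, hx⟩, ⟨k, hk, hy⟩, hxy⟩
  let p : Fin 2 → Kˣ := ![Units.ofPowEqOne x n hx (by lia), Units.ofPowEqOne y k hy (by lia)]
  have isOfFinOrder_p : IsOfFinOrder p := IsOfFinOrder.pi <| Fin.forall_fin_two.2
    ⟨isOfFinOrder_iff_pow_eq_one.2 ⟨n, hn, Units.pow_ofPowEqOne hx (by lia)⟩,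
      isOfFinOrder_iff_pow_eq_one.2 ⟨k, hk, Units.pow_ofPowEqOne hy (by lia)⟩⟩
  have val_p : (fun i => (p i : K)) = ![x, y] := by
    funext i
    fin_cases i <;> rfl
  exact ⟨p, ⟨isOfFinOrder_p, by rwa [evalTorus, val_p]⟩, rfl⟩

end RootsOfUnityPairs

end BeukersSmyth

open BeukersSmyth in
theorem stmt_5_general {K : Type*} [Field K] [IsAlgClosed K] [CharZero K]
    (H : MvPolynomial (Fin 2) K) (hH : H ≠ 0) :
    HasCyclotomicFactor H ∨
      ((rootOfUnityZeros H).Finite ∧ (rootOfUnityZeros H).ncard ≤ 11 * H.totalDegree ^ 2) := by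
  refine or_iff_not_imp_left.2 fun hcyc => ?_
  have h := (encard_rootOfUnityZeros_le H).trans (encard_torsionZeros_le hH hcyc)
  have hfin := Set.finite_of_encard_le_coe h
  rw [← hfin.cast_ncard_eq] at h
  exact ⟨hfin, by exact_mod_cast h⟩

/-- Lemma 2.1 (Beukers–Smyth): a plane curve `H(X,Y) = 0` contains at most
`11 (deg H)²` points whose coordinates are both roots of unity, unless `H` has a
factor of the form `X^i − ρ Y^j` or `X^i Y^j − ρ` with `ρ` a root of unity and
`i, j` nonnegative integers not both zero. -/
theorem stmt_5 (H : MvPolynomial (Fin 2) ℂ) (hH : H ≠ 0) :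
    (∃ (i j : ℕ) (ρ : ℂ), ¬ (i = 0 ∧ j = 0) ∧ (∃ n : ℕ, 1 ≤ n ∧ ρ ^ n = 1) ∧
      ((X 0 ^ i - C ρ * X 1 ^ j ∣ H) ∨ (X 0 ^ i * X 1 ^ j - C ρ ∣ H))) ∨
    ({p : ℂ × ℂ | (∃ n : ℕ, 1 ≤ n ∧ p.1 ^ n = 1) ∧ (∃ n : ℕ, 1 ≤ n ∧ p.2 ^ n = 1) ∧
        eval ![p.1, p.2] H = 0}.Finite ∧
      {p : ℂ × ℂ | (∃ n : ℕ, 1 ≤ n ∧ p.1 ^ n = 1) ∧ (∃ n : ℕ, 1 ≤ n ∧ p.2 ^ n = 1) ∧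
        eval ![p.1, p.2] H = 0}.ncard ≤ 11 * H.totalDegree ^ 2) :=
  stmt_5_general H hH
end
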